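/- Let ω be an irrational number of bounded type and let l ∈ ℕ. For every κ > 0 there exist a 1-periodic C^l function v : ℝ → ℝ and a sequence (v_n) of 1-periodic C^l functions v_n : ℝ → ℝ such that: (i) the Lyapunov exponent of the Schrödinger cocycle satisfies L(S_v) ≥ κ; (ii) for every n, L(S_{v_n}) = 0, i.e. the sequence (1/m)∫₀¹ log‖S_{v_n}^m(x)‖ dx tends to 0 as m → ∞; and (iii) ‖v_n − v‖_{C^l} → 0 as n → ∞. -/

import Mathlib

open Real MeasureTheory Filter

/-- Operator norm of a 2×2 real matrix, acting on Euclidean space. -/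
noncomputable def opNorm (A : Matrix (Fin 2) (Fin 2) ℝ) : ℝ :=
  ‖(Matrix.toEuclideanCLM (𝕜 := ℝ) A : EuclideanSpace ℝ (Fin 2) →L[ℝ] EuclideanSpace ℝ (Fin 2))‖

/-- Iterates of the quasi-periodic cocycle: A^n(x) = A(x+(n-1)ω)⋯A(x+ω)A(x). -/
noncomputable def cocycle (ω : ℝ) (A : ℝ → Matrix (Fin 2) (Fin 2) ℝ) :
    ℕ → ℝ → Matrix (Fin 2) (Fin 2) ℝ
  | 0, _ => 1
  | n + 1, x => A (x + n * ω) * cocycle ω A n x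

/-- Finite Lyapunov exponents L_n(A) = (1/n) ∫₀¹ log ‖A^n(x)‖ dx. -/
noncomputable def LEn (ω : ℝ) (A : ℝ → Matrix (Fin 2) (Fin 2) ℝ) (n : ℕ) : ℝ :=
  (1 / n) * ∫ x in (0:ℝ)..1, Real.log (opNorm (cocycle ω A n x))

/-- The Schrödinger cocycle S_v(x) = [[v(x), -1],[1,0]]. -/
def SchrodingerCocycle (v : ℝ → ℝ) (x : ℝ) : Matrix (Fin 2) (Fin 2) ℝ := !![v x, -1; 1, 0]

/-- The denominators of the continued fraction convergents of ω. -/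
noncomputable def cfDen (ω : ℝ) (k : ℕ) : ℝ := (GenContFract.of ω).dens k

/-!
Start from a constant potential with exponent `κ + 1` and modify it in stages. Every stage has a
potential `W` whose operator `(H f) x = W x * f x - f (x + ω) - f (x - ω)` has a positive, decaying
Green kernel. For a bump `φ` concentrated at the integers let `f = H⁻¹ φ` and `τ = φ / f`. Then
`f > 0` solves the Schrödinger equation of `W - τ`, so by constancy of the Wronskian the cocycle
of `W - τ` grows at most linearly: its exponent vanishes. For small `δ` the potential
`W - (1 - δ) τ` still has a positive Green kernel, given by a sum over the walks between visits to
the bump; the sum converges because bad approximability makes those visits rare. The diagonal of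
the new kernel is of order `1 / δ` near the integers, which makes the function `τ` of the next,
finer stage small in `C^l`, although its bump is steep. Since `τ` is negligible away from the
integers, each stage lowers the mean logarithm of the Dirichlet determinants, which bound the
norms of the cocycle from below, by a small amount only. So the potentials of the stages converge
in `C^l` to some `v` with exponent at least `κ`, and the critical potentials `W - τ` converge to
the same `v`.
-/

/-! ## Functions dominating their derivatives -/

section SmoothSeries

variable {ι : Type*} {l : ℕ} {u : ι → ℝ → ℝ} {b : ℕ → ι → ℝ}

lemma norm_iteratedFDeriv_le_of_abs_iteratedDeriv_le
    (hb : ∀ i ≤ l, ∀ p x, |iteratedDeriv i (u p) x| ≤ b i p) (i : ℕ) (p : ι) (x : ℝ)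
    (hi : (i : ℕ∞) ≤ (l : ℕ∞)) : ‖iteratedFDeriv ℝ i (u p) x‖ ≤ b i p := by
  rw [norm_iteratedFDeriv_eq_norm_iteratedDeriv]
  exact hb i (by exact_mod_cast hi) p x

lemma contDiff_tsum_of_abs_iteratedDeriv_le (hu : ∀ p, ContDiff ℝ l (u p))
    (hs : ∀ i ≤ l, Summable (b i)) (hb : ∀ i ≤ l, ∀ p x, |iteratedDeriv i (u p) x| ≤ b i p) :
    ContDiff ℝ l (fun x => ∑' p, u p x) :=
  contDiff_tsum (N := l) hu (fun i hi => hs i (by exact_mod_cast hi))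
    (norm_iteratedFDeriv_le_of_abs_iteratedDeriv_le hb)

lemma abs_iteratedDeriv_tsum_le (hu : ∀ p, ContDiff ℝ l (u p))
    (hs : ∀ i ≤ l, Summable (b i)) (hb : ∀ i ≤ l, ∀ p x, |iteratedDeriv i (u p) x| ≤ b i p)
    {i : ℕ} (hi : i ≤ l) {x : ℝ} {d : ι → ℝ} (hd : Summable d)
    (hbd : ∀ p, |iteratedDeriv i (u p) x| ≤ d p) :
    |iteratedDeriv i (fun y => ∑' p, u p y) x| ≤ ∑' p, d p := by
  rw [← Real.norm_eq_abs, ← norm_iteratedFDeriv_eq_norm_iteratedDeriv,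
    iteratedFDeriv_tsum_apply (N := l) hu (fun j hj => hs j (by exact_mod_cast hj))
      (norm_iteratedFDeriv_le_of_abs_iteratedDeriv_le hb) (by exact_mod_cast hi) x]
  refine tsum_of_norm_bounded hd.hasSum fun p => ?_
  rw [norm_iteratedFDeriv_eq_norm_iteratedDeriv]
  exact hbd p

end SmoothSeries

/-- The nonnegative `C^l` functions `u` satisfying `|u⁽ⁱ⁾| ≤ Λ ^ i * u` for all `i ≤ l`. Unlike a
bound on `C^l` norms, such a relative bound survives division; nonnegativity of `u` is the case
`i = 0`. -/
structure DerivDominated (l : ℕ) (Λ : ℝ) (u : ℝ → ℝ) : Prop where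
  rate_nonneg : 0 ≤ Λ
  contDiff : ContDiff ℝ l u
  abs_iteratedDeriv_le : ∀ i ≤ l, ∀ x, |iteratedDeriv i u x| ≤ Λ ^ i * u x

lemma sum_choose_mul_pow_le {C : ℝ} {n : ℕ} (hC : 0 ≤ C) (hn : 2 * n ≤ C + 1) :
    ∑ j ∈ Finset.range n, (n.choose j : ℝ) * C ^ j ≤ C ^ n := by
  have binomial : ∑ j ∈ Finset.range n, (n.choose j : ℝ) * C ^ j = (C + 1) ^ n - C ^ n := by
    simp [add_pow, Finset.sum_range_succ, mul_comm]
  have bernoulli : 1 + n * (-(1 / (C + 1))) ≤ (1 + -(1 / (C + 1))) ^ n :=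
    one_add_mul_le_pow (by
      have : 1 / (C + 1) ≤ 1 := by rw [div_le_one] <;> linarith
      linarith) n
  have half_le : (1 / 2 : ℝ) ≤ (C / (C + 1)) ^ n := by
    have hn' : n * (1 / (C + 1)) ≤ 1 / 2 := by
      rw [mul_one_div, div_le_div_iff₀ (by linarith) two_pos]
      linarith
    rw [show C / (C + 1) = 1 + -(1 / (C + 1)) by field_simp; ring]
    linarith
  rw [div_pow, div_le_div_iff₀ two_pos (by positivity)] at half_le
  linarith

namespace DerivDominated

variable {l : ℕ} {Λ Λ' c : ℝ} {u v : ℝ → ℝ}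

lemma contDiffAt (hu : DerivDominated l Λ u) {i : ℕ} (hi : i ≤ l) (x : ℝ) : ContDiffAt ℝ i u x :=
  (hu.contDiff.of_le (by exact_mod_cast hi)).contDiffAt

lemma nonneg (hu : DerivDominated l Λ u) (x : ℝ) : 0 ≤ u x := by
  simpa using (abs_nonneg _).trans (hu.abs_iteratedDeriv_le 0 l.zero_le x)

lemma mono (hu : DerivDominated l Λ u) (hΛ : Λ ≤ Λ') : DerivDominated l Λ' u where
  rate_nonneg := hu.rate_nonneg.trans hΛ
  contDiff := hu.contDiff
  abs_iteratedDeriv_le i hi x := (hu.abs_iteratedDeriv_le i hi x).trans <| by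
    have := hu.nonneg x
    have := hu.rate_nonneg
    gcongr

lemma const (hc : 0 ≤ c) (hΛ : 0 ≤ Λ) : DerivDominated l Λ (fun _ => c) where
  rate_nonneg := hΛ
  contDiff := contDiff_const
  abs_iteratedDeriv_le i _ x := by
    rw [iteratedDeriv_const]
    split_ifs with hi
    · simp [hi, abs_of_nonneg hc]
    · simpa using by positivity

lemma mul (hu : DerivDominated l Λ u) (hv : DerivDominated l Λ' v) :
    DerivDominated l (Λ + Λ') (fun x => u x * v x) where
  rate_nonneg := add_nonneg hu.rate_nonneg hv.rate_nonneg
  contDiff := hu.contDiff.mul hv.contDiff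
  abs_iteratedDeriv_le i hi x := by
    change |iteratedDeriv i (u * v) x| ≤ _
    rw [iteratedDeriv_mul (hu.contDiffAt hi x) (hv.contDiffAt hi x), add_pow, Finset.sum_mul]
    refine (Finset.abs_sum_le_sum_abs _ _).trans (Finset.sum_le_sum fun j hj => ?_)
    have hji : j ≤ i := Finset.mem_range_succ_iff.1 hj
    have := hu.rate_nonneg
    have := hu.nonneg x
    calc |(i.choose j : ℝ) * iteratedDeriv j u x * iteratedDeriv (i - j) v x|
        = i.choose j * |iteratedDeriv j u x| * |iteratedDeriv (i - j) v x| := by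
          rw [abs_mul, abs_mul, Nat.abs_cast]
      _ ≤ i.choose j * (Λ ^ j * u x) * (Λ' ^ (i - j) * v x) := by
          gcongr
          · exact hu.abs_iteratedDeriv_le j (hji.trans hi) x
          · exact hv.abs_iteratedDeriv_le (i - j) ((Nat.sub_le _ _).trans hi) x
      _ = Λ ^ j * Λ' ^ (i - j) * i.choose j * (u x * v x) := by ring

lemma comp_add_const (hu : DerivDominated l Λ u) (s : ℝ) :
    DerivDominated l Λ (fun x => u (x + s)) where
  rate_nonneg := hu.rate_nonneg
  contDiff := hu.contDiff.comp (contDiff_id.add contDiff_const)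
  abs_iteratedDeriv_le i hi x := by
    rw [iteratedDeriv_comp_add_const]
    exact hu.abs_iteratedDeriv_le i hi _

lemma const_mul (hu : DerivDominated l Λ u) (hc : 0 ≤ c) :
    DerivDominated l Λ (fun x => c * u x) := by
  simpa using (const hc le_rfl).mul hu

lemma pow (hu : DerivDominated l Λ u) (K : ℕ) : DerivDominated l (K * Λ) (fun x => u x ^ K) := by
  induction K with
  | zero => simpa using const (l := l) zero_le_one le_rfl
  | succ K ih => simpa only [pow_succ, Nat.cast_succ, add_one_mul] using ih.mul hu

-- The Leibniz rule for `u⁻¹ * u = 1` expresses `(u⁻¹)⁽ⁱ⁾` through the lower derivatives of `u⁻¹`.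
lemma abs_iteratedDeriv_inv_le_of_lt (hu : DerivDominated l Λ u) (hpos : ∀ x, 0 < u x) {C x : ℝ}
    {i : ℕ} (hC : 0 ≤ C) (hiC : 2 * i ≤ C + 1) (hi : i ≤ l) (hi0 : i ≠ 0)
    (ih : ∀ j < i, |iteratedDeriv j u⁻¹ x| ≤ (C * Λ) ^ j * (u x)⁻¹) :
    |iteratedDeriv i u⁻¹ x| ≤ (C * Λ) ^ i * (u x)⁻¹ := by
  have hΛ := hu.rate_nonneg
  have hux : 0 < u x := hpos x
  have hne : ∀ y, u y ≠ 0 := fun y => (hpos y).ne'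
  have leibniz := iteratedDeriv_mul
    (((hu.contDiff.inv hne).of_le (by exact_mod_cast hi)).contDiffAt (x := x)) (hu.contDiffAt hi x)
  change iteratedDeriv i (u⁻¹ * u) x =
    ∑ j ∈ Finset.range (i + 1), i.choose j * iteratedDeriv j u⁻¹ x * iteratedDeriv (i - j) u x
    at leibniz
  rw [show u⁻¹ * u = fun _ => (1 : ℝ) from funext fun y => inv_mul_cancel₀ (hne y),
    iteratedDeriv_const, if_neg hi0, Finset.sum_range_succ, Nat.choose_self, Nat.cast_one,
    one_mul, Nat.sub_self, iteratedDeriv_zero] at leibniz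
  have term_le : ∀ j ∈ Finset.range i,
      |i.choose j * iteratedDeriv j u⁻¹ x * iteratedDeriv (i - j) u x| ≤
        i.choose j * C ^ j * Λ ^ i := fun j hj => by
    have hji : j < i := Finset.mem_range.1 hj
    rw [abs_mul, abs_mul, Nat.abs_cast]
    calc i.choose j * |iteratedDeriv j u⁻¹ x| * |iteratedDeriv (i - j) u x|
        ≤ i.choose j * ((C * Λ) ^ j * (u x)⁻¹) * (Λ ^ (i - j) * u x) := by
          gcongr
          · exact ih j hji
          · exact hu.abs_iteratedDeriv_le (i - j) ((Nat.sub_le _ _).trans hi) x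
      _ = i.choose j * C ^ j * Λ ^ i := by
          rw [mul_pow, ← Nat.add_sub_cancel' hji.le, pow_add, Nat.add_sub_cancel_left]
          field_simp
  calc |iteratedDeriv i u⁻¹ x| = |iteratedDeriv i u⁻¹ x * u x| * (u x)⁻¹ := by
        rw [abs_mul, abs_of_pos hux, mul_inv_cancel_right₀ hux.ne']
    _ ≤ (∑ j ∈ Finset.range i, (i.choose j : ℝ) * C ^ j) * Λ ^ i * (u x)⁻¹ := by
        rw [eq_neg_of_add_eq_zero_right leibniz.symm, abs_neg, Finset.sum_mul]
        gcongr
        exact (Finset.abs_sum_le_sum_abs _ _).trans (Finset.sum_le_sum term_le)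
    _ ≤ C ^ i * Λ ^ i * (u x)⁻¹ := by gcongr; exact sum_choose_mul_pow_le hC hiC
    _ = (C * Λ) ^ i * (u x)⁻¹ := by rw [mul_pow]

lemma inv (hu : DerivDominated l Λ u) (hpos : ∀ x, 0 < u x) :
    DerivDominated l (2 * (l + 1) * Λ) (fun x => (u x)⁻¹) := by
  have hΛ := hu.rate_nonneg
  refine ⟨by positivity, hu.contDiff.inv fun x => (hpos x).ne', fun i => ?_⟩
  induction i using Nat.strong_induction_on with
  | _ i ih =>
    intro hi x
    rcases eq_or_ne i 0 with rfl | hi0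
    · simp [abs_of_pos (hpos x)]
    · have hil : (i : ℝ) ≤ l := by exact_mod_cast hi
      exact hu.abs_iteratedDeriv_inv_le_of_lt hpos (by positivity) (by linarith) hi hi0
        fun j hj => ih j hj (hj.le.trans hi) x

lemma div (hu : DerivDominated l Λ u) (hv : DerivDominated l Λ' v) (hpos : ∀ x, 0 < v x) :
    DerivDominated l (Λ + 2 * (l + 1) * Λ') (fun x => u x / v x) := by
  simpa only [div_eq_mul_inv] using hu.mul (hv.inv hpos)

end DerivDominated

lemma pow_le_one_add_exp {t s : ℝ} {i l : ℕ} (ht : 0 ≤ t) (hi : i ≤ l) (hs : l ≤ s) :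
    t ^ i ≤ 1 + exp (s * (t - 1)) := by
  rcases le_total t 1 with h | h
  · linarith [pow_le_one₀ ht h (n := i), exp_pos (s * (t - 1))]
  · have hexp : t ≤ exp (t - 1) := by linarith [add_one_le_exp (t - 1)]
    calc t ^ i ≤ t ^ l := pow_le_pow_right₀ h hi
      _ ≤ exp (t - 1) ^ l := by gcongr
      _ = exp (l * (t - 1)) := (exp_nat_mul _ _).symm
      _ ≤ exp (s * (t - 1)) := by gcongr
      _ ≤ 1 + exp (s * (t - 1)) := by linarith

namespace DerivDominated

variable {ι : Type*} {l : ℕ} {Λ θ K : ℝ} {u : ι → ℝ → ℝ} {ℓ b : ι → ℝ}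

lemma abs_iteratedDeriv_le_add_exp_mul {p : ι} (hu : DerivDominated l (Λ * ℓ p) (u p))
    (hΛ : 0 ≤ Λ) (hℓ : 0 ≤ ℓ p) (hK : 0 < K) (hKθ : l ≤ θ * K)
    {i : ℕ} (hi : i ≤ l) {x : ℝ} (hb : exp (θ * ℓ p) * u p x ≤ b p) :
    |iteratedDeriv i (u p) x| ≤ (Λ * K) ^ i * (u p x + exp (-(θ * K)) * b p) := by
  have hnn := hu.nonneg x
  calc |iteratedDeriv i (u p) x| ≤ (Λ * ℓ p) ^ i * u p x := hu.abs_iteratedDeriv_le i hi x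
    _ = (Λ * K) ^ i * ((ℓ p / K) ^ i * u p x) := by
        rw [← mul_assoc, ← mul_pow]; congr 2; field_simp
    _ ≤ (Λ * K) ^ i * ((1 + exp (θ * K * (ℓ p / K - 1))) * u p x) := by
        gcongr
        exact pow_le_one_add_exp (by positivity) hi hKθ
    _ = (Λ * K) ^ i * (u p x + exp (-(θ * K)) * (exp (θ * ℓ p) * u p x)) := by
        rw [show θ * K * (ℓ p / K - 1) = -(θ * K) + θ * ℓ p by field_simp; ring, exp_add]
        ring
    _ ≤ (Λ * K) ^ i * (u p x + exp (-(θ * K)) * b p) := by gcongr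

-- The terms with `ℓ p ≤ K` have the rate `Λ * K`; the derivatives of the others are absorbed by
-- their exponentially small size, which the lower bound on the sum dominates.
lemma tsum (hΛ : 0 ≤ Λ) (hℓ : ∀ p, 0 ≤ ℓ p) (hθ : 0 ≤ θ) (hK : 0 < K) (hKθ : l ≤ θ * K)
    (hu : ∀ p, DerivDominated l (Λ * ℓ p) (u p)) (hb : ∀ p x, exp (θ * ℓ p) * u p x ≤ b p)
    (hs : Summable b) (hlow : ∀ x, exp (-(θ * K)) * ∑' p, b p ≤ ∑' p, u p x) :
    DerivDominated l (2 * Λ * K) (fun x => ∑' p, u p x) := by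
  have hub : ∀ p x, u p x ≤ b p := fun p x =>
    (le_mul_of_one_le_left ((hu p).nonneg x) (one_le_exp (mul_nonneg hθ (hℓ p)))).trans (hb p x)
  have hsu : ∀ x, Summable (fun p => u p x) := fun x =>
    hs.of_nonneg_of_le (fun p => (hu p).nonneg x) (fun p => hub p x)
  have hderiv : ∀ i ≤ l, ∀ p x,
      |iteratedDeriv i (u p) x| ≤ (Λ * K) ^ i * (u p x + exp (-(θ * K)) * b p) :=
    fun i hi p x => (hu p).abs_iteratedDeriv_le_add_exp_mul hΛ (hℓ p) hK hKθ hi (hb p x)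
  have hunif : ∀ i ≤ l, ∀ p x,
      |iteratedDeriv i (u p) x| ≤ (Λ * K) ^ i * (b p + exp (-(θ * K)) * b p) :=
    fun i hi p x => (hderiv i hi p x).trans (by gcongr; exact hub p x)
  have hsummable : ∀ i ≤ l, Summable (fun p => (Λ * K) ^ i * (b p + exp (-(θ * K)) * b p)) :=
    fun i _ => (hs.add (hs.mul_left _)).mul_left _
  have hsmooth := fun p => (hu p).contDiff
  refine ⟨by positivity, contDiff_tsum_of_abs_iteratedDeriv_le hsmooth hsummable hunif,
    fun i hi x => ?_⟩
  have hnn : 0 ≤ ∑' p, u p x := tsum_nonneg fun p => (hu p).nonneg x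
  rcases Nat.eq_zero_or_pos i with rfl | hipos
  · simp [abs_of_nonneg hnn]
  calc |iteratedDeriv i (fun x => ∑' p, u p x) x|
      ≤ ∑' p, (Λ * K) ^ i * (u p x + exp (-(θ * K)) * b p) :=
        abs_iteratedDeriv_tsum_le hsmooth hsummable hunif hi
          (((hsu x).add (hs.mul_left _)).mul_left _) (fun p => hderiv i hi p x)
    _ = (Λ * K) ^ i * (∑' p, u p x + exp (-(θ * K)) * ∑' p, b p) := by
        rw [tsum_mul_left, (hsu x).tsum_add (hs.mul_left _), tsum_mul_left]
    _ ≤ (Λ * K) ^ i * (2 * ∑' p, u p x) := by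
        gcongr
        linarith [hlow x]
    _ ≤ (Λ * K) ^ i * (2 ^ i * ∑' p, u p x) := by
        gcongr
        exact le_self_pow₀ one_le_two hipos.ne'
    _ = (2 * Λ * K) ^ i * ∑' p, u p x := by rw [mul_assoc 2 Λ K, mul_pow 2]; ring

end DerivDominated

/-! ## Sums over words -/

section Words

variable {ι : Type*} {y : ι → ℝ}

lemma prod_map_nonneg_of_forall (hy : ∀ j, 0 ≤ y j) (p : List ι) : 0 ≤ (p.map y).prod :=
  List.prod_nonneg fun _ ha => by
    obtain ⟨j, -, rfl⟩ := List.mem_map.1 ha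
    exact hy j

-- A word of length `< n + 1` is empty or has a head and a tail of length `< n`, and `(1 - r)⁻¹` is
-- the fixed point of `S ↦ 1 + r * S`.
lemma sum_prod_map_le_of_length_lt (hy : ∀ j, 0 ≤ y j) (hs : Summable y) (h : ∑' j, y j < 1)
    (n : ℕ) (s : Finset (List ι)) (hn : ∀ p ∈ s, p.length < n) :
    ∑ p ∈ s, (p.map y).prod ≤ (1 - ∑' j, y j)⁻¹ := by
  classical
  have hgap : 0 < 1 - ∑' j, y j := sub_pos.2 h
  induction n generalizing s with
  | zero =>
    rw [Finset.sum_eq_zero fun p hp => absurd (hn p hp) (by omega)]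
    positivity
  | succ n ih =>
    set heads : Finset ι := s.biUnion List.toFinset
    set tails : Finset (List ι) := (s.erase []).image List.tail
    have htails : ∑ p ∈ tails, (p.map y).prod ≤ (1 - ∑' j, y j)⁻¹ := ih tails fun p hp => by
      obtain ⟨q, hq, rfl⟩ := Finset.mem_image.1 hp
      have := hn q (Finset.mem_of_mem_erase hq)
      have := List.length_pos_iff.2 (Finset.ne_of_mem_erase hq)
      rw [List.length_tail]
      omega
    have hsub : s ⊆ insert [] ((heads ×ˢ tails).image fun z => z.1 :: z.2) := fun p hp => by
      rcases p with _ | ⟨j, p⟩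
      · exact Finset.mem_insert_self _ _
      · refine Finset.mem_insert_of_mem (Finset.mem_image.2 ⟨(j, p), Finset.mem_product.2
          ⟨Finset.mem_biUnion.2 ⟨j :: p, hp, by simp⟩, Finset.mem_image.2 ⟨j :: p, ?_, rfl⟩⟩, rfl⟩)
        exact Finset.mem_erase.2 ⟨List.cons_ne_nil _ _, hp⟩
    calc ∑ p ∈ s, (p.map y).prod
        ≤ ∑ p ∈ insert [] ((heads ×ˢ tails).image fun z => z.1 :: z.2), (p.map y).prod :=
          Finset.sum_le_sum_of_subset_of_nonneg hsub fun p _ _ => prod_map_nonneg_of_forall hy p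
      _ = 1 + (∑ j ∈ heads, y j) * ∑ p ∈ tails, (p.map y).prod := by
          rw [Finset.sum_insert (by simp), Finset.sum_image (by rintro ⟨⟩ _ ⟨⟩ _ h; simpa using h),
            Finset.sum_mul_sum, Finset.sum_product]
          simp only [List.map_nil, List.prod_nil, List.map_cons, List.prod_cons]
      _ ≤ 1 + (∑' j, y j) * (1 - ∑' j, y j)⁻¹ := by
          gcongr
          · exact Finset.sum_nonneg fun p _ => prod_map_nonneg_of_forall hy p
          · exact tsum_nonneg hy
          · exact hs.sum_le_tsum heads fun j _ => hy j
      _ = (1 - ∑' j, y j)⁻¹ := by field_simp; ring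

lemma summable_prod_map_and_tsum_le (hy : ∀ j, 0 ≤ y j) (hs : Summable y) (h : ∑' j, y j < 1) :
    Summable (fun p : List ι => (p.map y).prod) ∧
      ∑' p : List ι, (p.map y).prod ≤ (1 - ∑' j, y j)⁻¹ := by
  have hle : ∀ s : Finset (List ι), ∑ p ∈ s, (p.map y).prod ≤ (1 - ∑' j, y j)⁻¹ := fun s =>
    sum_prod_map_le_of_length_lt hy hs h (s.sup List.length + 1) s fun _ hp =>
      Nat.lt_succ_of_le (Finset.le_sup (f := List.length) hp)
  have hsum := summable_of_sum_le (prod_map_nonneg_of_forall hy) hle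
  exact ⟨hsum, hsum.tsum_le_of_sum_le hle⟩

lemma tsum_list_eq_nil_add_tsum_cons {f : List ι → ℝ} (hf : Summable f) :
    ∑' p, f p = f [] + ∑' j, ∑' p, f (j :: p) := by
  classical
  have cons_injective : Function.Injective fun z : ι × List ι => z.1 :: z.2 := by
    rintro ⟨⟩ ⟨⟩ h
    simpa using h
  have support_subset : Function.support (fun p => if p = [] then 0 else f p) ⊆
      Set.range fun z : ι × List ι => z.1 :: z.2 := by
    rintro (_ | ⟨j, p⟩) hp
    · simp at hp
    · exact ⟨(j, p), rfl⟩
  rw [hf.tsum_eq_add_tsum_ite [], ← cons_injective.tsum_eq support_subset]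
  simp only [List.cons_ne_nil, if_false]
  exact congrArg (f [] + ·) (hf.comp_injective cons_injective).tsum_prod

end Words

/-! ## Cocycles and Lyapunov exponents -/

section OpNorm

variable {A : Matrix (Fin 2) (Fin 2) ℝ}

lemma opNorm_nonneg (A : Matrix (Fin 2) (Fin 2) ℝ) : 0 ≤ opNorm A := norm_nonneg _

lemma opNorm_one : opNorm 1 = 1 := by rw [opNorm, map_one, norm_one]

lemma opNorm_mul_le (A B : Matrix (Fin 2) (Fin 2) ℝ) : opNorm (A * B) ≤ opNorm A * opNorm B := by
  simpa only [opNorm, map_mul] using norm_mul_le _ _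

lemma continuous_opNorm : Continuous opNorm :=
  (LinearMap.continuous_of_finiteDimensional
    (Matrix.toEuclideanCLM (𝕜 := ℝ) (n := Fin 2)).toAlgEquiv.toLinearMap).norm

lemma sqrt_column_sq_le_opNorm (A : Matrix (Fin 2) (Fin 2) ℝ) (j : Fin 2) :
    √(A 0 j ^ 2 + A 1 j ^ 2) ≤ opNorm A := by
  have h := (Matrix.toEuclideanCLM (𝕜 := ℝ) A).le_opNorm (EuclideanSpace.single j (1 : ℝ))
  rw [PiLp.norm_single, norm_one, mul_one] at h
  refine le_of_eq_of_le ?_ h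
  rw [EuclideanSpace.norm_eq]
  simp [Fin.sum_univ_two, Matrix.ofLp_toEuclideanCLM]

lemma abs_apply_zero_le_opNorm (A : Matrix (Fin 2) (Fin 2) ℝ) (j : Fin 2) : |A 0 j| ≤ opNorm A :=
  (Real.abs_le_sqrt (by linarith [sq_nonneg (A 1 j)])).trans (sqrt_column_sq_le_opNorm A j)

-- Hadamard's inequality: the determinant is at most the product of the column norms.
lemma one_le_opNorm_of_det_eq_one (h : A.det = 1) : 1 ≤ opNorm A := by
  rw [Matrix.det_fin_two] at h
  have hadamard : 1 ≤ √(A 0 0 ^ 2 + A 1 0 ^ 2) * √(A 0 1 ^ 2 + A 1 1 ^ 2) := by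
    rw [← sqrt_mul (by positivity)]
    apply Real.le_sqrt_of_sq_le
    nlinarith [sq_nonneg (A 0 0 * A 0 1 + A 1 0 * A 1 1)]
  have columns := mul_le_mul (sqrt_column_sq_le_opNorm A 0) (sqrt_column_sq_le_opNorm A 1)
    (sqrt_nonneg _) (opNorm_nonneg A)
  nlinarith [opNorm_nonneg A]

lemma opNorm_le_two_mul {C : ℝ} (hC : 0 ≤ C) (h : ∀ i j, |A i j| ≤ C) : opNorm A ≤ 2 * C := by
  refine ContinuousLinearMap.opNorm_le_bound _ (by positivity) fun v => ?_
  have norm_image : ‖Matrix.toEuclideanCLM (𝕜 := ℝ) A v‖ ^ 2 =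
      (A 0 0 * v 0 + A 0 1 * v 1) ^ 2 + (A 1 0 * v 0 + A 1 1 * v 1) ^ 2 := by
    simp [EuclideanSpace.norm_sq_eq, Fin.sum_univ_two, Matrix.ofLp_toEuclideanCLM, Matrix.mulVec,
      dotProduct]
  have norm_vector : ‖v‖ ^ 2 = v 0 ^ 2 + v 1 ^ 2 := by
    simp [EuclideanSpace.norm_sq_eq, Fin.sum_univ_two]
  have row : ∀ i, (A i 0 * v 0 + A i 1 * v 1) ^ 2 ≤ 2 * C ^ 2 * (v 0 ^ 2 + v 1 ^ 2) := fun i => by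
    have h0 : A i 0 ^ 2 ≤ C ^ 2 := sq_le_sq.2 ((h i 0).trans (le_abs_self C))
    have h1 : A i 1 ^ 2 ≤ C ^ 2 := sq_le_sq.2 ((h i 1).trans (le_abs_self C))
    nlinarith [sq_nonneg (A i 0 * v 0 - A i 1 * v 1),
      mul_nonneg (sub_nonneg.2 h0) (sq_nonneg (v 0)),
      mul_nonneg (sub_nonneg.2 h1) (sq_nonneg (v 1))]
  refine le_of_sq_le_sq ?_ (by positivity)
  rw [mul_pow, norm_image, norm_vector]
  linarith [row 0, row 1]

end OpNorm

section Cocycle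

variable {ω : ℝ} {A : ℝ → Matrix (Fin 2) (Fin 2) ℝ}

lemma det_cocycle (hA : ∀ x, (A x).det = 1) (n : ℕ) (x : ℝ) : (cocycle ω A n x).det = 1 := by
  induction n with
  | zero => exact Matrix.det_one
  | succ n ih => rw [cocycle, Matrix.det_mul, ih, hA, mul_one]

lemma one_le_opNorm_cocycle (hA : ∀ x, (A x).det = 1) (n : ℕ) (x : ℝ) :
    1 ≤ opNorm (cocycle ω A n x) :=
  one_le_opNorm_of_det_eq_one (det_cocycle hA n x)

lemma cocycle_add (m n : ℕ) (x : ℝ) :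
    cocycle ω A (m + n) x = cocycle ω A n (x + m * ω) * cocycle ω A m x := by
  induction n with
  | zero => simp [cocycle]
  | succ n ih =>
    rw [← add_assoc, cocycle, ih, cocycle, mul_assoc]
    congr 2
    push_cast
    ring

lemma continuous_cocycle (hA : Continuous A) (n : ℕ) : Continuous (cocycle ω A n) := by
  induction n with
  | zero => exact continuous_const
  | succ n ih => exact (hA.comp (continuous_add_const _)).matrix_mul ih

lemma periodic_cocycle (hA : Function.Periodic A 1) (n : ℕ) :
    Function.Periodic (cocycle ω A n) 1 := fun x => by
  induction n with
  | zero => rfl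
  | succ n ih => rw [cocycle, cocycle, ih, add_right_comm, hA]

lemma opNorm_cocycle_le {B : ℝ} (hB : 0 ≤ B) (hA : ∀ x, opNorm (A x) ≤ B) (n : ℕ) (x : ℝ) :
    opNorm (cocycle ω A n x) ≤ B ^ n := by
  induction n with
  | zero => rw [cocycle, opNorm_one, pow_zero]
  | succ n ih =>
    rw [cocycle, pow_succ']
    exact (opNorm_mul_le _ _).trans (mul_le_mul (hA _) ih (opNorm_nonneg _) hB)

lemma tendsto_cocycle {As : ℕ → ℝ → Matrix (Fin 2) (Fin 2) ℝ}
    (hlim : ∀ x, Tendsto (fun n => As n x) atTop (nhds (A x))) (m : ℕ) (x : ℝ) :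
    Tendsto (fun n => cocycle ω (As n) m x) atTop (nhds (cocycle ω A m x)) := by
  induction m with
  | zero => exact tendsto_const_nhds
  | succ m ih => exact (hlim _).mul ih

lemma continuous_log_opNorm_cocycle (hA : Continuous A) (hdet : ∀ x, (A x).det = 1) (n : ℕ) :
    Continuous fun x => log (opNorm (cocycle ω A n x)) :=
  (continuous_opNorm.comp (continuous_cocycle hA n)).log fun x =>
    (zero_lt_one.trans_le (one_le_opNorm_cocycle hdet n x)).ne'

lemma integral_comp_add_of_periodic {g : ℝ → ℝ} (hg : Function.Periodic g 1) (s : ℝ) :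
    ∫ x in (0 : ℝ)..1, g (x + s) = ∫ x in (0 : ℝ)..1, g x := by
  rw [intervalIntegral.integral_comp_add_right g s]
  simpa [add_comm] using hg.intervalIntegral_add_eq (0 + s) 0

lemma subadditive_integral_log_opNorm_cocycle (hA : Continuous A) (hper : Function.Periodic A 1)
    (hdet : ∀ x, (A x).det = 1) :
    Subadditive fun n => ∫ x in (0 : ℝ)..1, log (opNorm (cocycle ω A n x)) := fun m n => by
  have integrable : ∀ n, IntervalIntegrable (fun x => log (opNorm (cocycle ω A n x))) volume 0 1 :=
    fun n => (continuous_log_opNorm_cocycle hA hdet n).intervalIntegrable _ _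
  have integrable_shift : IntervalIntegrable
      (fun x => log (opNorm (cocycle ω A n (x + m * ω)))) volume 0 1 :=
    ((continuous_log_opNorm_cocycle hA hdet n).comp
      (continuous_add_const _)).intervalIntegrable _ _
  have integral_shift : ∫ x in (0 : ℝ)..1, log (opNorm (cocycle ω A n (x + m * ω))) =
      ∫ x in (0 : ℝ)..1, log (opNorm (cocycle ω A n x)) :=
    integral_comp_add_of_periodic ((periodic_cocycle hper n).comp fun M => log (opNorm M)) _
  beta_reduce
  rw [← integral_shift, ← intervalIntegral.integral_add (integrable m) integrable_shift]
  refine intervalIntegral.integral_mono_on zero_le_one (integrable _)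
    ((integrable m).add integrable_shift) fun x _ => ?_
  have hpos : ∀ n x, 0 < opNorm (cocycle ω A n x) := fun n x =>
    zero_lt_one.trans_le (one_le_opNorm_cocycle hdet n x)
  rw [add_comm (log _), ← log_mul (hpos _ _).ne' (hpos _ _).ne']
  refine log_le_log (hpos _ _) ?_
  rw [cocycle_add]
  exact opNorm_mul_le _ _

lemma exists_tendsto_LEn (hA : Continuous A) (hper : Function.Periodic A 1)
    (hdet : ∀ x, (A x).det = 1) : ∃ L, Tendsto (LEn ω A) atTop (nhds L) := by
  have hsub := subadditive_integral_log_opNorm_cocycle (ω := ω) hA hper hdet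
  have hbdd : BddBelow (Set.range fun n : ℕ =>
      (∫ x in (0 : ℝ)..1, log (opNorm (cocycle ω A n x))) / n) := by
    refine ⟨0, ?_⟩
    rintro _ ⟨n, rfl⟩
    exact div_nonneg (intervalIntegral.integral_nonneg zero_le_one fun x _ =>
      log_nonneg (one_le_opNorm_cocycle hdet n x)) n.cast_nonneg
  refine ⟨hsub.lim, (hsub.tendsto_lim hbdd).congr fun n => ?_⟩
  rw [LEn, one_div, div_eq_inv_mul]

lemma tendsto_LEn_of_tendsto {As : ℕ → ℝ → Matrix (Fin 2) (Fin 2) ℝ} {B : ℝ}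
    (hcont : ∀ n, Continuous (As n)) (hdet : ∀ n x, (As n x).det = 1)
    (hdetA : ∀ x, (A x).det = 1) (hB : ∀ n x, opNorm (As n x) ≤ B)
    (hlim : ∀ x, Tendsto (fun n => As n x) atTop (nhds (A x))) (m : ℕ) :
    Tendsto (fun n => LEn ω (As n) m) atTop (nhds (LEn ω A m)) := by
  refine Tendsto.const_mul _ (intervalIntegral.tendsto_integral_filter_of_dominated_convergence
    (fun _ => log (B ^ m)) (.of_forall fun n =>
      (continuous_log_opNorm_cocycle (hcont n) (hdet n) m).aestronglyMeasurable)
    (.of_forall fun n => ae_of_all _ fun x _ => ?_) intervalIntegrable_const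
    (ae_of_all _ fun x _ => ?_))
  · have hone := one_le_opNorm_cocycle (ω := ω) (hdet n) m x
    rw [norm_eq_abs, abs_of_nonneg (log_nonneg hone)]
    exact log_le_log (by positivity)
      (opNorm_cocycle_le ((opNorm_nonneg _).trans (hB n x)) (hB n) m x)
  · exact ((continuous_opNorm.tendsto _).comp (tendsto_cocycle hlim m x)).log
      (zero_lt_one.trans_le (one_le_opNorm_cocycle hdetA m x)).ne'

end Cocycle

section SchrodingerCocycle

variable {ω : ℝ} {v : ℝ → ℝ}

lemma det_SchrodingerCocycle (x : ℝ) : (SchrodingerCocycle v x).det = 1 := by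
  simp [SchrodingerCocycle]

lemma continuous_schrodingerMatrix : Continuous fun t : ℝ => !![t, -1; 1, 0] :=
  continuous_matrix fun i j => by
    fin_cases i <;> fin_cases j <;> first | exact continuous_id | exact continuous_const

lemma continuous_SchrodingerCocycle (hv : Continuous v) : Continuous (SchrodingerCocycle v) :=
  continuous_schrodingerMatrix.comp hv

lemma periodic_SchrodingerCocycle (hv : Function.Periodic v 1) :
    Function.Periodic (SchrodingerCocycle v) 1 := fun x => by
  rw [SchrodingerCocycle, SchrodingerCocycle, hv]

lemma opNorm_SchrodingerCocycle_le {B : ℝ} {x : ℝ} (hv : |v x| ≤ B) :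
    opNorm (SchrodingerCocycle v x) ≤ 2 * (B + 1) := by
  have hB : 0 ≤ B := (abs_nonneg _).trans hv
  refine opNorm_le_two_mul (by linarith) fun i j => ?_
  have entry : ∀ a ∈ ({v x, -1, 1, 0} : Set ℝ), |a| ≤ B + 1 := by
    rintro a (rfl | rfl | rfl | rfl)
    · linarith
    all_goals norm_num; linarith
  fin_cases i <;> fin_cases j <;> exact entry _ (by simp [SchrodingerCocycle])

lemma tendsto_SchrodingerCocycle {vs : ℕ → ℝ → ℝ} {x : ℝ}
    (hlim : Tendsto (fun n => vs n x) atTop (nhds (v x))) :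
    Tendsto (fun n => SchrodingerCocycle (vs n) x) atTop (nhds (SchrodingerCocycle v x)) :=
  (continuous_schrodingerMatrix.tendsto _).comp hlim

lemma cocycle_succ_apply_zero (n : ℕ) (x : ℝ) (j : Fin 2) :
    cocycle ω (SchrodingerCocycle v) (n + 1) x 0 j =
      v (x + n * ω) * cocycle ω (SchrodingerCocycle v) n x 0 j -
        cocycle ω (SchrodingerCocycle v) n x 1 j := by
  simp [cocycle, Matrix.mul_apply, Fin.sum_univ_two, SchrodingerCocycle, sub_eq_add_neg]

lemma cocycle_succ_apply_one (n : ℕ) (x : ℝ) (j : Fin 2) :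
    cocycle ω (SchrodingerCocycle v) (n + 1) x 1 j = cocycle ω (SchrodingerCocycle v) n x 0 j := by
  simp [cocycle, Matrix.mul_apply, Fin.sum_univ_two, SchrodingerCocycle]

end SchrodingerCocycle

/-! ## Vanishing of the exponent -/

section ZeroExponent

variable {ω : ℝ}

lemma tendsto_LEn_zero_of_opNorm_le_linear {A : ℝ → Matrix (Fin 2) (Fin 2) ℝ} {C : ℝ}
    (hdet : ∀ x, (A x).det = 1) (hC : ∀ n x, opNorm (cocycle ω A n x) ≤ C * (n + 1)) :
    Tendsto (LEn ω A) atTop (nhds 0) := by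
  have hC0 : 0 < C := by
    have := (one_le_opNorm_cocycle hdet 0 0).trans (hC 0 0)
    norm_num at this
    linarith
  have log_div : Tendsto (fun n : ℕ => log C / n + log (n + 1) / n) atTop (nhds 0) := by
    have h := (tendsto_pow_log_div_mul_add_atTop 1 (-1) 1 one_ne_zero).comp
      (tendsto_atTop_add_const_right _ 1 tendsto_natCast_atTop_atTop)
    simpa using (tendsto_const_div_atTop_nhds_zero_nat (log C)).add h
  refine squeeze_zero_norm (fun n => ?_) log_div
  rw [LEn, norm_mul, norm_of_nonneg (one_div_nonneg.2 n.cast_nonneg), ← add_div,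
    div_eq_mul_one_div (_ + _), mul_comm]
  refine mul_le_mul_of_nonneg_right ?_ (by positivity)
  have bound : ∀ x ∈ Set.uIoc (0 : ℝ) 1,
      ‖log (opNorm (cocycle ω A n x))‖ ≤ log C + log (n + 1) := fun x _ => by
    have hone := one_le_opNorm_cocycle (ω := ω) hdet n x
    rw [norm_of_nonneg (log_nonneg hone), ← log_mul hC0.ne' (by positivity)]
    exact log_le_log (by positivity) (hC n x)
  simpa using intervalIntegral.norm_integral_le_of_norm_le_const bound

variable {V f : ℝ → ℝ} {a F : ℝ}

-- The discrete Wronskian of two solutions of the same difference equation is constant.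
lemma cocycle_wronskian (hV : ∀ x, V x * f x = f (x + ω) + f (x - ω)) (n : ℕ) (x : ℝ) (j : Fin 2) :
    cocycle ω (SchrodingerCocycle V) n x 0 j * f (x + n * ω - ω) -
        cocycle ω (SchrodingerCocycle V) n x 1 j * f (x + n * ω) =
      (1 : Matrix (Fin 2) (Fin 2) ℝ) 0 j * f (x - ω) -
        (1 : Matrix (Fin 2) (Fin 2) ℝ) 1 j * f x := by
  induction n with
  | zero => simp [cocycle]
  | succ n ih =>
    rw [cocycle_succ_apply_zero, cocycle_succ_apply_one, ← ih,
      show x + ((n + 1 : ℕ) : ℝ) * ω = x + n * ω + ω by push_cast; ring, add_sub_cancel_right]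
    linear_combination cocycle ω (SchrodingerCocycle V) n x 0 j * hV (x + n * ω)

lemma abs_one_apply_le_one (i j : Fin 2) : |(1 : Matrix (Fin 2) (Fin 2) ℝ) i j| ≤ 1 := by
  rw [Matrix.one_apply]
  split_ifs <;> simp

-- By the Wronskian identity, the quotient of a solution by `f` grows by at most `2 F / a ^ 2` in
-- every step.
lemma abs_cocycle_apply_zero_le (ha : 0 < a) (hfa : ∀ x, a ≤ f x) (hfF : ∀ x, f x ≤ F)
    (hV : ∀ x, V x * f x = f (x + ω) + f (x - ω)) (n : ℕ) (x : ℝ) (j : Fin 2) :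
    |cocycle ω (SchrodingerCocycle V) n x 0 j| ≤ f (x + n * ω) * (1 / a + n * (2 * F / a ^ 2)) := by
  have hf : ∀ x, 0 < f x := fun x => ha.trans_le (hfa x)
  have hF : 0 < F := (hf 0).trans_le (hfF 0)
  induction n with
  | zero =>
    simp only [Nat.cast_zero, zero_mul, add_zero, mul_one_div]
    exact (abs_one_apply_le_one 0 j).trans ((one_le_div ha).2 (hfa x))
  | succ n ih =>
    rw [cocycle_succ_apply_zero, show x + ((n + 1 : ℕ) : ℝ) * ω = x + n * ω + ω by push_cast; ring]
    have wronskian := cocycle_wronskian hV n x j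
    set y := cocycle ω (SchrodingerCocycle V) n x 0 j
    set z := cocycle ω (SchrodingerCocycle V) n x 1 j
    set t := x + n * ω
    set c := (1 : Matrix (Fin 2) (Fin 2) ℝ) 0 j * f (x - ω) -
      (1 : Matrix (Fin 2) (Fin 2) ℝ) 1 j * f x
    have abs_c_le : |c| ≤ 2 * F := by
      refine (abs_sub _ _).trans ?_
      rw [abs_mul, abs_mul, abs_of_pos (hf _), abs_of_pos (hf _)]
      nlinarith [abs_one_apply_le_one 0 j, abs_one_apply_le_one 1 j, hf x, hf (x - ω), hfF x,
        hfF (x - ω)]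
    have next : V t * y - z = y / f t * f (t + ω) + c / f t := by
      have := (hf t).ne'
      field_simp
      linear_combination y * hV t + wronskian
    have quotient_le : |y / f t| ≤ 1 / a + n * (2 * F / a ^ 2) := by
      rwa [abs_div, abs_of_pos (hf t), div_le_iff₀' (hf t)]
    have error_le : |c / f t| ≤ f (t + ω) * (2 * F / a ^ 2) := by
      rw [abs_div, abs_of_pos (hf t)]
      calc |c| / f t ≤ 2 * F / a := div_le_div₀ (by positivity) abs_c_le ha (hfa t)
        _ = a * (2 * F / a ^ 2) := by field_simp
        _ ≤ f (t + ω) * (2 * F / a ^ 2) := by gcongr; exact hfa _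
    calc |V t * y - z| ≤ |y / f t| * f (t + ω) + |c / f t| := by
          rw [next]
          exact (abs_add_le _ _).trans_eq (by rw [abs_mul, abs_of_pos (hf (t + ω))])
      _ ≤ (1 / a + n * (2 * F / a ^ 2)) * f (t + ω) + f (t + ω) * (2 * F / a ^ 2) :=
          add_le_add (mul_le_mul_of_nonneg_right quotient_le (hf _).le) error_le
      _ = f (t + ω) * (1 / a + (n + 1 : ℕ) * (2 * F / a ^ 2)) := by push_cast; ring

lemma tendsto_LEn_zero_of_positive_solution (ha : 0 < a) (hfa : ∀ x, a ≤ f x) (hfF : ∀ x, f x ≤ F)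
    (hV : ∀ x, V x * f x = f (x + ω) + f (x - ω)) :
    Tendsto (LEn ω (SchrodingerCocycle V)) atTop (nhds 0) := by
  have haF : a ≤ F := (hfa 0).trans (hfF 0)
  have hF : 0 < F := ha.trans_le haF
  set E := 1 / a + 2 * F / a ^ 2 with hE
  have slope_le : ∀ n : ℕ, 1 / a + n * (2 * F / a ^ 2) ≤ E * (n + 1) := fun n => by
    have : 0 ≤ 1 / a * n + 2 * F / a ^ 2 := by positivity
    rw [hE]
    linarith
  have row_zero : ∀ (n : ℕ) x j, |cocycle ω (SchrodingerCocycle V) n x 0 j| ≤ F * (E * (n + 1)) :=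
    fun n x j => (abs_cocycle_apply_zero_le ha hfa hfF hV n x j).trans
      (mul_le_mul (hfF _) (slope_le n) (by positivity) hF.le)
  have row_one : ∀ (n : ℕ) x j, |cocycle ω (SchrodingerCocycle V) n x 1 j| ≤ F * (E * (n + 1)) := by
    rintro (_ | n) x j
    · have hEa : a * E = 1 + 2 * F / a := by rw [hE]; field_simp
      have : 0 < 2 * F / a := by positivity
      have : a * E ≤ F * E := by gcongr
      refine (abs_one_apply_le_one 1 j).trans ?_
      simp only [Nat.cast_zero, zero_add, mul_one]
      linarith
    · rw [cocycle_succ_apply_one]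
      refine (row_zero n x j).trans ?_
      gcongr
      linarith
  refine tendsto_LEn_zero_of_opNorm_le_linear (C := 2 * (F * E)) det_SchrodingerCocycle
    fun n x => ?_
  have := opNorm_le_two_mul (A := cocycle ω (SchrodingerCocycle V) n x)
    (C := F * (E * (n + 1))) (by positivity) fun i j => by
      fin_cases i
      exacts [row_zero n x j, row_one n x j]
  linarith

end ZeroExponent

/-! ## Dirichlet determinants -/

section DirichletDet

/-- The top left entry of `S_v^n(x)`, that is, the determinant of the Dirichlet truncation of the
Schrödinger operator to `x, x + ω, …, x + (n - 1) ω`. Its logarithm is the lower bound for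
`log ‖S_v^n‖` which is propagated along the construction. -/
noncomputable def dirichletDet (ω : ℝ) (v : ℝ → ℝ) (n : ℕ) (x : ℝ) : ℝ :=
  cocycle ω (SchrodingerCocycle v) n x 0 0

variable {ω : ℝ} {v W U F : ℝ → ℝ}

lemma continuous_dirichletDet (hv : Continuous v) (n : ℕ) : Continuous (dirichletDet ω v n) :=
  (continuous_cocycle (continuous_SchrodingerCocycle hv) n).matrix_elem 0 0

lemma intervalIntegrable_log_dirichletDet {n : ℕ} (hv : Continuous v)
    (hpos : ∀ x, 0 < dirichletDet ω v n x) :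
    IntervalIntegrable (fun x => log (dirichletDet ω v n x)) volume 0 1 :=
  ((continuous_dirichletDet hv n).log fun x => (hpos x).ne').intervalIntegrable _ _

lemma le_LEn_of_mul_le_integral_log_dirichletDet {κ : ℝ} {n : ℕ} (hv : Continuous v) (hn : 1 ≤ n)
    (hpos : ∀ x, 0 < dirichletDet ω v n x)
    (h : n * κ ≤ ∫ x in (0 : ℝ)..1, log (dirichletDet ω v n x)) :
    κ ≤ LEn ω (SchrodingerCocycle v) n := by
  have hn' : (0 : ℝ) < n := by exact_mod_cast hn
  rw [LEn, one_div, ← div_eq_inv_mul, le_div_iff₀' hn']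
  refine h.trans (intervalIntegral.integral_mono_on zero_le_one
    (intervalIntegrable_log_dirichletDet hv hpos)
    ((continuous_log_opNorm_cocycle (continuous_SchrodingerCocycle hv)
      det_SchrodingerCocycle n).intervalIntegrable _ _) fun x _ => ?_)
  exact log_le_log (hpos x) ((le_abs_self _).trans (abs_apply_zero_le_opNorm _ 0))

lemma exp_mul_le_dirichletDet_const {κ : ℝ} (n : ℕ) (x : ℝ) :
    exp (κ * n) ≤ dirichletDet ω (fun _ => exp κ + exp (-κ)) n x := by
  suffices h : exp (κ * n) ≤
        cocycle ω (SchrodingerCocycle fun _ => exp κ + exp (-κ)) n x 0 0 ∧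
      cocycle ω (SchrodingerCocycle fun _ => exp κ + exp (-κ)) n x 1 0 ≤
        exp (-κ) * cocycle ω (SchrodingerCocycle fun _ => exp κ + exp (-κ)) n x 0 0 from h.1
  induction n with
  | zero => simp [cocycle, exp_nonneg]
  | succ n ih =>
    rw [cocycle_succ_apply_zero, cocycle_succ_apply_one]
    obtain ⟨growth, cone⟩ := ih
    set w := cocycle ω (SchrodingerCocycle fun _ => exp κ + exp (-κ)) n x 0 0
    set z := cocycle ω (SchrodingerCocycle fun _ => exp κ + exp (-κ)) n x 1 0
    have step : exp κ * w ≤ (exp κ + exp (-κ)) * w - z := by linarith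
    refine ⟨le_trans ?_ step, ?_⟩
    · rw [Nat.cast_add_one, mul_add_one, exp_add, mul_comm]
      gcongr
    · calc w = exp (-κ) * (exp κ * w) := by rw [← mul_assoc, ← exp_add, neg_add_cancel, exp_zero,
            one_mul]
        _ ≤ exp (-κ) * ((exp κ + exp (-κ)) * w - z) := by gcongr

-- One step of the decomposition `u = S w + B F` of a `U`-solution `u` along a `W`-solution `w` and
-- the function `F`; the new coefficients are determined by requiring that the decomposition also
-- holds one site back.
lemma exists_decomposition_step {W U w z f₀ f f₁ S B : ℝ} (hUW : U ≤ W) (hf : 0 < f) (hf₁ : 0 < f₁)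
    (hU : U * f - f₁ - f₀ = 1) (hw : 0 < w) (hcas : 0 < w * f₀ - z * f) (hS : 0 < S) (hB : 0 ≤ B) :
    0 < W * w - z ∧ 0 < (W * w - z) * f - w * f₁ ∧
      ∃ S' B', S / (1 + (W - U) * f) ≤ S' ∧ 0 ≤ B' ∧
        U * (S * w + B * f) - (S * z + B * f₀) = S' * (W * w - z) + B' * f₁ ∧
        S * w + B * f = S' * w + B' * f := by
  obtain ⟨δ, rfl⟩ : ∃ δ, W = U + δ := ⟨W - U, by ring⟩
  have hδ : 0 ≤ δ := by linarith
  rw [add_sub_cancel_left]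
  set R := ((U + δ) * w - z) * f - w * f₁ with hR
  have hfac : 0 < 1 + δ * f := by positivity
  have R_ge : w * (1 + δ * f) ≤ R := by
    have : R = w * (1 + δ * f) + (w * f₀ - z * f) := by rw [hR]; linear_combination w * hU
    linarith
  have hRpos : 0 < R := lt_of_lt_of_le (by positivity) R_ge
  have w_le_R : w ≤ R := by nlinarith [mul_nonneg hw.le (mul_nonneg hδ hf.le)]
  have next_pos : 0 < (U + δ) * w - z := by
    refine pos_of_mul_pos_left (b := f) ?_ hf.le
    linarith [mul_pos hw hf₁]
  refine ⟨next_pos, hRpos, S - f * (S * δ * w - B) / R, B + (S * δ * w - B) / R * w, ?_, ?_, ?_, ?_⟩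
  · have gap : S - S / (1 + δ * f) = S * δ * f / (1 + δ * f) := by field_simp; ring
    rw [le_sub_iff_add_le, ← le_sub_iff_add_le', gap, div_le_div_iff₀ hRpos hfac]
    have : S * δ * f * (w * (1 + δ * f)) ≤ S * δ * f * R := by gcongr
    have : 0 ≤ f * B * (1 + δ * f) := by positivity
    linarith
  · have : B + (S * δ * w - B) / R * w = (B * (R - w) + S * δ * w * w) / R := by
      field_simp
      ring
    rw [this]
    have : 0 ≤ R - w := sub_nonneg.2 w_le_R
    positivity
  · field_simp
    rw [hR]
    linear_combination R * B * hU
  · field_simp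
    ring

lemma dirichletDet_pos_and_div_prod_le (hUW : ∀ x, U x ≤ W x) (hF : ∀ x, 0 < F x)
    (hU : ∀ x, U x * F x - F (x + ω) - F (x - ω) = 1) (n : ℕ) (x : ℝ) :
    0 < dirichletDet ω W n x ∧
      dirichletDet ω W n x /
          ∏ k ∈ Finset.range n, (1 + (W (x + k * ω) - U (x + k * ω)) * F (x + k * ω)) ≤
        dirichletDet ω U n x := by
  have hfac : ∀ x, 0 < 1 + (W x - U x) * F x := fun x => by
    linarith [mul_nonneg (sub_nonneg.2 (hUW x)) (hF x).le]
  set P : ℕ → ℝ := fun n =>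
    ∏ k ∈ Finset.range n, (1 + (W (x + k * ω) - U (x + k * ω)) * F (x + k * ω)) with hP
  have hPpos : ∀ n, 0 < P n := fun n => Finset.prod_pos fun k _ => hfac _
  have decomposition : ∀ n : ℕ, 0 < cocycle ω (SchrodingerCocycle W) n x 0 0 ∧
      0 < cocycle ω (SchrodingerCocycle W) n x 0 0 * F (x + n * ω - ω) -
        cocycle ω (SchrodingerCocycle W) n x 1 0 * F (x + n * ω) ∧
      ∃ S B : ℝ, 1 / P n ≤ S ∧ 0 ≤ B ∧
        cocycle ω (SchrodingerCocycle U) n x 0 0 =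
          S * cocycle ω (SchrodingerCocycle W) n x 0 0 + B * F (x + n * ω) ∧
        cocycle ω (SchrodingerCocycle U) n x 1 0 =
          S * cocycle ω (SchrodingerCocycle W) n x 1 0 + B * F (x + n * ω - ω) := fun n => by
    induction n with
    | zero => exact ⟨by simp [cocycle], by simp [cocycle, hF], 1, 0, by simp [hP], le_rfl,
        by simp [cocycle], by simp [cocycle]⟩
    | succ n ih =>
      obtain ⟨w_pos, casoratian_pos, S, B, hS, hB, row_zero, row_one⟩ := ih
      obtain ⟨next_pos, next_casoratian_pos, S', B', hS', hB', next_zero, next_one⟩ :=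
        exists_decomposition_step (hUW _) (hF _) (hF _) (hU (x + n * ω)) w_pos casoratian_pos
          ((one_div_pos.2 (hPpos n)).trans_le hS) hB
      simp only [cocycle_succ_apply_zero, cocycle_succ_apply_one, row_zero, row_one,
        show x + ((n + 1 : ℕ) : ℝ) * ω = x + n * ω + ω by push_cast; ring, add_sub_cancel_right]
      refine ⟨next_pos, next_casoratian_pos, S', B', le_trans ?_ hS', hB', next_zero, next_one⟩
      simp only [hP, Finset.prod_range_succ, ← div_div]
      exact div_le_div_of_nonneg_right hS (hfac _).le
  obtain ⟨w_pos, -, S, B, hS, hB, row_zero, -⟩ := decomposition n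
  refine ⟨w_pos, ?_⟩
  calc dirichletDet ω W n x / P n = 1 / P n * cocycle ω (SchrodingerCocycle W) n x 0 0 := by
        rw [dirichletDet]; ring
    _ ≤ S * cocycle ω (SchrodingerCocycle W) n x 0 0 := by gcongr
    _ ≤ cocycle ω (SchrodingerCocycle U) n x 0 0 := by
        rw [row_zero]
        exact le_add_of_nonneg_right (mul_nonneg hB (hF _).le)

lemma dirichletDet_pos (hF : ∀ x, 0 < F x) (hU : ∀ x, U x * F x - F (x + ω) - F (x - ω) = 1)
    (n : ℕ) (x : ℝ) : 0 < dirichletDet ω U n x :=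
  (dirichletDet_pos_and_div_prod_le (fun _ => le_rfl) hF hU n x).1

lemma integral_log_dirichletDet_sub_le (hWc : Continuous W) (hUc : Continuous U)
    (hFc : Continuous F) (hWp : Function.Periodic W 1) (hUp : Function.Periodic U 1)
    (hFp : Function.Periodic F 1) (hUW : ∀ x, U x ≤ W x) (hF : ∀ x, 0 < F x)
    (hU : ∀ x, U x * F x - F (x + ω) - F (x - ω) = 1) (n : ℕ) :
    (∫ x in (0 : ℝ)..1, log (dirichletDet ω W n x)) -
        n * ∫ x in (0 : ℝ)..1, log (1 + (W x - U x) * F x) ≤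
      ∫ x in (0 : ℝ)..1, log (dirichletDet ω U n x) := by
  have hfac : ∀ x, 0 < 1 + (W x - U x) * F x := fun x => by
    linarith [mul_nonneg (sub_nonneg.2 (hUW x)) (hF x).le]
  have hW := fun x => (dirichletDet_pos_and_div_prod_le hUW hF hU n x).1
  set g : ℝ → ℝ := fun x => log (1 + (W x - U x) * F x) with hg
  have hgc : Continuous g := Continuous.log (by fun_prop) fun x => (hfac x).ne'
  have hgp : Function.Periodic g 1 := fun x => by simp only [hg, hWp x, hUp x, hFp x]
  have integral_sum : ∫ x in (0 : ℝ)..1, ∑ k ∈ Finset.range n, g (x + k * ω) =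
      n * ∫ x in (0 : ℝ)..1, g x := by
    rw [intervalIntegral.integral_finsetSum fun k _ =>
      Continuous.intervalIntegrable (by fun_prop) _ _]
    simp [integral_comp_add_of_periodic hgp]
  have integrableW := intervalIntegrable_log_dirichletDet hWc hW
  have integrable_sum : IntervalIntegrable (fun x => ∑ k ∈ Finset.range n, g (x + k * ω))
      volume 0 1 := Continuous.intervalIntegrable (by fun_prop) _ _
  rw [← integral_sum, ← intervalIntegral.integral_sub integrableW integrable_sum]
  refine intervalIntegral.integral_mono_on zero_le_one (integrableW.sub integrable_sum)
    (intervalIntegrable_log_dirichletDet hUc (dirichletDet_pos hF hU n)) fun x _ => ?_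
  have hprod := Finset.prod_pos fun k (_ : k ∈ Finset.range n) => hfac (x + k * ω)
  rw [← log_prod fun k _ => (hfac _).ne', ← log_div (hW x).ne' hprod.ne']
  exact log_le_log (div_pos (hW x) hprod) (dirichletDet_pos_and_div_prod_le hUW hF hU n x).2

end DirichletDet

/-! ## Badly approximable rotations -/

section Diophantine

/-- The distance from `x` to the nearest integer. -/
noncomputable abbrev distInt (x : ℝ) : ℝ := ‖(x : UnitAddCircle)‖

/-- `ω` is badly approximable with constant `γ`: no multiple `k ω`, `k ≠ 0`, comes closer to an
integer than `γ / |k|`. -/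
structure BadlyApproximable (ω γ : ℝ) : Prop where
  pos : 0 < γ
  le_distInt : ∀ k : ℤ, k ≠ 0 → γ / |(k : ℝ)| ≤ distInt (k * ω)

variable {ω γ : ℝ}

lemma distInt_le_abs_sub (x : ℝ) (z : ℤ) : distInt x ≤ |x - z| := by
  rw [distInt, UnitAddCircle.norm_eq]
  exact round_le x z

lemma distInt_le_half (x : ℝ) : distInt x ≤ 1 / 2 := by
  rw [distInt, UnitAddCircle.norm_eq]
  exact abs_sub_round x

lemma distInt_sub_le (x y : ℝ) : distInt (x - y) ≤ distInt x + distInt y := by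
  rw [distInt, AddCircle.coe_sub]
  exact norm_sub_le _ _

lemma not_terminatedAt_of_irrational (hω : Irrational ω) (n : ℕ) :
    ¬(GenContFract.of ω).TerminatedAt n := fun h => by
  obtain ⟨q, hq⟩ := (GenContFract.terminates_iff_rat ω).1 ⟨n, h⟩
  exact hω ⟨q, hq.symm⟩

lemma exists_int_nums_dens (hω : Irrational ω) (n : ℕ) :
    ∃ a b : ℤ, (GenContFract.of ω).nums n = a ∧ (GenContFract.of ω).dens n = b := by
  suffices h : ∃ a b a' b' : ℤ, (GenContFract.of ω).contsAux n = ⟨(a : ℝ), (b : ℝ)⟩ ∧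
      (GenContFract.of ω).contsAux (n + 1) = ⟨(a' : ℝ), (b' : ℝ)⟩ by
    obtain ⟨-, -, a', b', -, h⟩ := h
    refine ⟨a', b', ?_, ?_⟩
    · rw [GenContFract.num_eq_conts_a, GenContFract.nth_cont_eq_succ_nth_contAux, h]
    · rw [GenContFract.den_eq_conts_b, GenContFract.nth_cont_eq_succ_nth_contAux, h]
  induction n with
  | zero => exact ⟨1, 0, ⌊ω⌋, 1, by simp [GenContFract.zeroth_contAux_eq_one_zero],
      by simp [GenContFract.first_contAux_eq_h_one, GenContFract.of_h_eq_floor]⟩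
  | succ n ih =>
    obtain ⟨a, b, a', b', h, h'⟩ := ih
    obtain ⟨gp, hgp⟩ :=
      Option.ne_none_iff_exists'.1 (not_terminatedAt_of_irrational hω n)
    obtain ⟨num_eq, z, den_eq⟩ := GenContFract.of_partNum_eq_one_and_exists_int_partDen_eq hgp
    refine ⟨a', b', z * a' + a, z * b' + b, h', ?_⟩
    rw [GenContFract.contsAux_recurrence hgp h h', num_eq, den_eq]
    simp

lemma fib_succ_le_dens (hω : Irrational ω) (n : ℕ) :
    (Nat.fib (n + 1) : ℝ) ≤ (GenContFract.of ω).dens n :=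
  GenContFract.succ_nth_fib_le_of_nth_den (Or.inr (not_terminatedAt_of_irrational hω _))

lemma one_le_dens (hω : Irrational ω) (n : ℕ) : 1 ≤ (GenContFract.of ω).dens n :=
  le_trans (by exact_mod_cast Nat.fib_pos.2 n.succ_pos) (fib_succ_le_dens hω n)

lemma abs_dens_mul_sub_nums_le (hω : Irrational ω) (n : ℕ) :
    |(GenContFract.of ω).dens n * ω - (GenContFract.of ω).nums n| ≤
      1 / (GenContFract.of ω).dens (n + 1) := by
  have hn := one_le_dens hω n
  have happrox := GenContFract.abs_sub_convs_le (not_terminatedAt_of_irrational hω n)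
  rw [GenContFract.conv_eq_num_div_den] at happrox
  set b := (GenContFract.of ω).dens n
  set a := (GenContFract.of ω).nums n
  calc |b * ω - a| = b * |ω - a / b| := by
        rw [← abs_of_nonneg (zero_le_one.trans hn), ← abs_mul, abs_of_nonneg (zero_le_one.trans hn)]
        congr 1
        field_simp
    _ ≤ b * (1 / (b * (GenContFract.of ω).dens (n + 1))) := by gcongr
    _ = 1 / (GenContFract.of ω).dens (n + 1) := by field_simp

-- The integer `p b - k a` is nonzero, where `a / b` is the `n`-th convergent, and it differs from
-- `-b (k ω - p)` by `k (b ω - a)`, which is at most `1 / 2`.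
lemma one_le_two_mul_dens_mul_abs (hω : Irrational ω) {k : ℕ} {p : ℤ} {n : ℕ}
    (hk : 2 * (k : ℝ) ≤ (GenContFract.of ω).dens (n + 1))
    (hne : p * (GenContFract.of ω).dens n ≠ k * (GenContFract.of ω).nums n) :
    1 ≤ 2 * ((GenContFract.of ω).dens n * |k * ω - p|) := by
  have hb := one_le_dens hω n
  have happrox := abs_dens_mul_sub_nums_le hω n
  obtain ⟨a, b, ha, hb'⟩ := exists_int_nums_dens hω n
  rw [ha, hb'] at hne happrox
  rw [hb'] at hb ⊢
  have one_le : (1 : ℝ) ≤ |(p : ℝ) * b - k * a| := by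
    exact_mod_cast Int.one_le_abs (sub_ne_zero.2 (by exact_mod_cast hne) : p * b - k * a ≠ 0)
  have half : k * |b * ω - a| ≤ 1 / 2 := by
    have hden := zero_lt_one.trans_le (one_le_dens hω (n + 1))
    calc k * |b * ω - a| ≤ k * (1 / (GenContFract.of ω).dens (n + 1)) := by gcongr
      _ ≤ 1 / 2 := by rw [mul_one_div, div_le_iff₀ hden]; linarith
  have triangle : |(p : ℝ) * b - k * a| ≤ b * |k * ω - p| + k * |b * ω - a| :=
    calc |(p : ℝ) * b - k * a| = |k * (b * ω - a) - b * (k * ω - p)| := by congr 1; ring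
      _ ≤ |k * (b * ω - a)| + |b * (k * ω - p)| := abs_sub _ _
      _ = b * |k * ω - p| + k * |b * ω - a| := by
          rw [abs_mul, abs_mul, Nat.abs_cast, abs_of_pos (zero_lt_one.trans_le hb), add_comm]
  linarith

lemma exists_dens_le_two_mul_le_dens_succ (hω : Irrational ω) {k : ℕ} (hk : 0 < k) :
    ∃ n, (GenContFract.of ω).dens n ≤ 2 * k ∧ 2 * (k : ℝ) ≤ (GenContFract.of ω).dens (n + 1) := by
  classical
  have hex : ∃ n, 2 * (k : ℝ) ≤ (GenContFract.of ω).dens (n + 1) := by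
    refine ⟨2 * k + 5, le_trans ?_ (fib_succ_le_dens hω _)⟩
    have : 2 * k ≤ Nat.fib (2 * k + 5 + 1 + 1) :=
      le_trans (by omega) (Nat.le_fib_self (n := 2 * k + 5 + 1 + 1) (by omega))
    exact_mod_cast this
  refine ⟨Nat.find hex, ?_, Nat.find_spec hex⟩
  rcases Nat.eq_zero_or_pos (Nat.find hex) with h | h
  · rw [h, GenContFract.zeroth_den_eq_one]
    have : (1 : ℝ) ≤ k := by exact_mod_cast hk
    linarith
  · have := Nat.find_min hex (m := Nat.find hex - 1) (by omega)
    rw [Nat.sub_add_cancel h] at this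
    linarith

-- Two consecutive convergents are distinct, so one of them differs from `p / k`.
lemma one_div_four_mul_le_abs_mul_sub {M : ℝ} (hω : Irrational ω) (hM : 1 ≤ M)
    (hbt : ∀ k, cfDen ω (k + 1) ≤ M * cfDen ω k) {k : ℕ} (hk : 0 < k) (p : ℤ) :
    1 / (4 * M) / k ≤ |k * ω - p| := by
  have hk' : (0 : ℝ) < k := by exact_mod_cast hk
  obtain ⟨n, hn, hn'⟩ := exists_dens_le_two_mul_le_dens_succ hω hk
  suffices h : ∃ m, (GenContFract.of ω).dens m ≤ 2 * M * k ∧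
      2 * (k : ℝ) ≤ (GenContFract.of ω).dens (m + 1) ∧
      p * (GenContFract.of ω).dens m ≠ k * (GenContFract.of ω).nums m by
    obtain ⟨m, upper, lower, hne⟩ := h
    have hone := one_le_two_mul_dens_mul_abs hω lower hne
    have : (GenContFract.of ω).dens m * |k * ω - p| ≤ 2 * M * k * |k * ω - p| := by gcongr
    rw [div_div, div_le_iff₀ (by positivity)]
    linarith
  by_cases heq : p * (GenContFract.of ω).dens n = k * (GenContFract.of ω).nums n
  · refine ⟨n + 1, ?_, hn'.trans GenContFract.of_den_mono, fun heq' => ?_⟩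
    · calc (GenContFract.of ω).dens (n + 1) ≤ M * (GenContFract.of ω).dens n := hbt n
        _ ≤ M * (2 * k) := by gcongr
        _ = 2 * M * k := by ring
    · have hdet : (GenContFract.of ω).nums n * (GenContFract.of ω).dens (n + 1) -
          (GenContFract.of ω).dens n * (GenContFract.of ω).nums (n + 1) = (-1) ^ (n + 1) :=
        SimpContFract.determinant (s := SimpContFract.of ω) (not_terminatedAt_of_irrational hω n)
      refine mul_ne_zero hk'.ne' (pow_ne_zero (n + 1) (neg_ne_zero.2 one_ne_zero)) ?_
      rw [← hdet]
      linear_combination -(GenContFract.of ω).dens (n + 1) * heq +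
        (GenContFract.of ω).dens n * heq'
  · exact ⟨n, hn.trans (by nlinarith), hn', heq⟩

lemma exists_badlyApproximable {M : ℝ} (hω : Irrational ω) (hM : 1 ≤ M)
    (hbt : ∀ k, cfDen ω (k + 1) ≤ M * cfDen ω k) : ∃ γ, BadlyApproximable ω γ := by
  refine ⟨1 / (4 * M), by positivity, fun k hk => ?_⟩
  have hnat := one_div_four_mul_le_abs_mul_sub hω hM hbt (Int.natAbs_pos.2 hk)
  have hcast : ((k.natAbs : ℕ) : ℝ) = |(k : ℝ)| := by rw [Nat.cast_natAbs, Int.cast_abs]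
  rw [hcast] at hnat
  rw [distInt, UnitAddCircle.norm_eq]
  rcases abs_cases (k : ℝ) with ⟨habs, -⟩ | ⟨habs, -⟩
  · simpa only [habs] using hnat (round (k * ω))
  · have h := hnat (-round (k * ω))
    rw [habs] at h ⊢
    rw [← abs_neg]
    convert h using 2
    push_cast
    ring

lemma exists_int_abs_add_mul_le {t y : ℝ} (ht : t ≠ 0) (hy : |y| ≤ 1) :
    ∃ j : ℤ, |(j : ℝ)| ≤ 1 / |t| + 1 ∧ |y + j * t| ≤ |t| / 2 := by
  have rounding := abs_sub_round (-y / t)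
  refine ⟨round (-y / t), ?_, ?_⟩
  · have : |-y / t| ≤ 1 / |t| := by
      rw [abs_div, abs_neg]
      gcongr
    linarith [abs_sub_abs_le_abs_sub (round (-y / t) : ℝ) (-y / t),
      abs_sub_comm (round (-y / t) : ℝ) (-y / t)]
  · calc |y + round (-y / t) * t| = |-y / t - round (-y / t)| * |t| := by
          rw [← abs_mul, ← abs_neg]
          congr 1
          field_simp
          ring
      _ ≤ 1 / 2 * |t| := by gcongr
      _ = |t| / 2 := by ring

-- Dirichlet's theorem gives `q ω = t` modulo `1` with `|t| ≤ ρ`; bad approximability bounds `|t|`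
-- from below, hence the number of steps of length `|t|` needed to reach `0` from `x`.
lemma BadlyApproximable.exists_distInt_add_mul_le (h : BadlyApproximable ω γ) {ρ : ℝ} (h0 : 0 < ρ)
    (h1 : ρ ≤ 1) (x : ℝ) :
    ∃ k : ℤ, |(k : ℝ)| ≤ 4 * (1 / γ + 1) / ρ ^ 2 ∧ distInt (x + k * ω) ≤ ρ := by
  have hγ := h.pos
  set Q := ⌈1 / ρ⌉₊
  have hQ : 1 / ρ ≤ Q := Nat.le_ceil _
  have one_le : 1 ≤ 1 / ρ := (one_le_div h0).2 h1
  have hQ' : (Q : ℝ) ≤ 2 / ρ := by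
    rw [show 2 / ρ = 1 / ρ + 1 / ρ by ring]
    linarith [Nat.ceil_lt_add_one (a := 1 / ρ) (by positivity)]
  obtain ⟨q, hq0, hqQ, hq⟩ :=
    Real.exists_nat_abs_mul_sub_round_le ω (Nat.ceil_pos.2 (by positivity) : 0 < Q)
  have hqQ' : (q : ℝ) ≤ Q := by exact_mod_cast hqQ
  set t := (q : ℝ) * ω - round (q * ω) with ht
  have t_lower : γ / q ≤ |t| := by
    simpa [UnitAddCircle.norm_eq] using h.le_distInt q (by exact_mod_cast hq0.ne')
  have t_upper : |t| ≤ ρ := by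
    refine hq.trans ((one_div_le (by positivity) h0).2 (hQ.trans ?_))
    linarith
  have t_inv : 1 / |t| ≤ Q / γ := by
    refine (one_div_le_one_div_of_le (by positivity) t_lower).trans ?_
    rw [one_div_div]
    gcongr
  obtain ⟨j, hj, target⟩ := exists_int_abs_add_mul_le (y := Int.fract x)
    (abs_pos.1 (lt_of_lt_of_le (by positivity) t_lower))
    (Int.abs_fract.trans_le (Int.fract_lt_one x).le)
  refine ⟨j * q, ?_, ?_⟩
  · push_cast
    rw [abs_mul, Nat.abs_cast]
    calc |(j : ℝ)| * q ≤ (Q / γ + Q) * Q := by gcongr; linarith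
      _ = (1 / γ + 1) * (Q * Q) := by ring
      _ ≤ (1 / γ + 1) * ((2 / ρ) * (2 / ρ)) := by gcongr
      _ = 4 * (1 / γ + 1) / ρ ^ 2 := by field_simp; ring
  · refine (distInt_le_abs_sub _ (⌊x⌋ + j * round (q * ω))).trans
      (le_of_eq_of_le ?_ (target.trans ((half_le_self (abs_nonneg t)).trans t_upper)))
    rw [ht, Int.fract]
    push_cast
    congr 1
    ring

end Diophantine

section Geometric

variable {t : ℝ}

lemma half_le_one_sub_exp_neg (h0 : 0 < t) (h1 : t ≤ 1) : t / 2 ≤ 1 - exp (-t) := by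
  have := add_one_le_exp t
  have : exp (-t) ≤ 1 / (1 + t) := by
    rw [exp_neg, ← one_div]
    exact one_div_le_one_div_of_le (by positivity) (by linarith)
  have : t / 2 ≤ 1 - 1 / (1 + t) := by
    rw [one_sub_div (by positivity), add_sub_cancel_left]
    gcongr
    linarith
  linarith

lemma hasSum_exp_neg_mul_abs_int (h0 : 0 < t) :
    HasSum (fun k : ℤ => exp (-(t * |(k : ℝ)|)))
      ((1 - exp (-t))⁻¹ + (1 - exp (-t))⁻¹ * exp (-t)) := by
  have hpow : ∀ n : ℕ, exp (-(t * n)) = exp (-t) ^ n := fun n => by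
    rw [← exp_nat_mul]
    congr 1
    ring
  have hgeom := hasSum_geometric_of_lt_one (exp_pos (-t)).le (exp_lt_one_iff.2 (neg_lt_zero.2 h0))
  refine HasSum.of_nat_of_neg_add_one (hgeom.congr_fun ?_) ((hgeom.mul_right _).congr_fun ?_)
  · intro n
    simp [hpow]
  · intro n
    rw [← pow_succ, ← hpow]
    push_cast
    rw [abs_neg, abs_of_nonneg (by positivity)]

lemma summable_exp_neg_mul_abs_int (h0 : 0 < t) : Summable fun k : ℤ => exp (-(t * |(k : ℝ)|)) :=
  (hasSum_exp_neg_mul_abs_int h0).summable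

lemma tsum_exp_neg_mul_abs_int_le (h0 : 0 < t) (h1 : t ≤ 1) :
    ∑' k : ℤ, exp (-(t * |(k : ℝ)|)) ≤ 4 / t := by
  have hgap := half_le_one_sub_exp_neg h0 h1
  have hinv : (1 - exp (-t))⁻¹ ≤ 2 / t := by
    rw [inv_le_comm₀ (by linarith) (by positivity), inv_div]
    exact hgap
  calc ∑' k : ℤ, exp (-(t * |(k : ℝ)|)) = (1 - exp (-t))⁻¹ + (1 - exp (-t))⁻¹ * exp (-t) :=
        (hasSum_exp_neg_mul_abs_int h0).tsum_eq
    _ ≤ 2 / t + 2 / t * 1 := by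
        gcongr
        linarith
    _ = 4 / t := by ring

end Geometric

/-! ## Positive Green kernels -/

/-- `G k x` is the value at `x` of the Green function of the operator
`(H f) x = W x * f x - f (x + ω) - f (x - ω)` with pole at `x + k * ω`. The kernel decays at rate
`c` in `k`, is bounded below in terms of `κ₀`, and its first `l` derivatives in `x` are controlled
by `Λ`. -/
structure IsGreenKernel (ω κ₀ : ℝ) (l : ℕ) (W : ℝ → ℝ) (G : ℤ → ℝ → ℝ) (B c Λ : ℝ) : Prop where
  contDiff_potential : ContDiff ℝ l W
  periodic_potential : Function.Periodic W 1
  periodic : ∀ k, Function.Periodic (G k) 1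
  equation : ∀ k x, W x * G k x - G (k - 1) (x + ω) - G (k + 1) (x - ω) = if k = 0 then 1 else 0
  decay_pos : 0 < c
  decay_le_one : c ≤ 1
  le_mul_exp : ∀ (k : ℤ) (x : ℝ), G k x ≤ B * exp (-(c * |(k : ℝ)|))
  exp_le : ∀ (k : ℤ) (x : ℝ), exp (-(κ₀ * (|(k : ℝ)| + 1))) ≤ G k x
  derivDominated : ∀ k : ℤ, DerivDominated l (Λ * (|(k : ℝ)| + 1)) (G k)

namespace IsGreenKernel

variable {ω κ₀ : ℝ} {l : ℕ} {W : ℝ → ℝ} {G : ℤ → ℝ → ℝ} {B c Λ : ℝ}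

lemma pos (h : IsGreenKernel ω κ₀ l W G B c Λ) (k : ℤ) (x : ℝ) : 0 < G k x :=
  (exp_pos _).trans_le (h.exp_le k x)

lemma bound_pos (h : IsGreenKernel ω κ₀ l W G B c Λ) : 0 < B := by
  simpa using (h.pos 0 0).trans_le (h.le_mul_exp 0 0)

lemma rate_nonneg (h : IsGreenKernel ω κ₀ l W G B c Λ) : 0 ≤ Λ := by
  simpa using (h.derivDominated 0).rate_nonneg

lemma exp_neg_le (h : IsGreenKernel ω κ₀ l W G B c Λ) (x : ℝ) : exp (-κ₀) ≤ G 0 x := by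
  simpa using h.exp_le 0 x

lemma mono (h : IsGreenKernel ω κ₀ l W G B c Λ) {B' c' Λ' : ℝ} (hB : B ≤ B') (hc0 : 0 < c')
    (hc : c' ≤ c) (hΛ : Λ ≤ Λ') : IsGreenKernel ω κ₀ l W G B' c' Λ' where
  __ := h
  decay_pos := hc0
  decay_le_one := hc.trans h.decay_le_one
  le_mul_exp k x := by
    have hB' : 0 ≤ B' := h.bound_pos.le.trans hB
    exact (h.le_mul_exp k x).trans (by gcongr)
  derivDominated k := (h.derivDominated k).mono (by gcongr)

lemma summable_mul (h : IsGreenKernel ω κ₀ l W G B c Λ) (x : ℝ) {g : ℤ → ℝ} {C : ℝ}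
    (hg : ∀ k, |g k| ≤ C) : Summable (fun k => G k x * g k) := by
  refine Summable.of_norm_bounded
    (((summable_exp_neg_mul_abs_int h.decay_pos).mul_left B).mul_right C) fun k => ?_
  rw [norm_mul, norm_eq_abs, norm_eq_abs, abs_of_pos (h.pos k x)]
  exact mul_le_mul (h.le_mul_exp k x) (hg k) (abs_nonneg _)
    (mul_nonneg h.bound_pos.le (exp_pos _).le)

lemma equation_tsum (h : IsGreenKernel ω κ₀ l W G B c Λ) (x : ℝ) {g : ℤ → ℝ} {C : ℝ}
    (hg : ∀ k, |g k| ≤ C) :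
    W x * (∑' k, G k x * g k) - (∑' k, G k (x + ω) * g (k + 1)) -
      (∑' k, G k (x - ω) * g (k - 1)) = g 0 := by
  have shift_right : HasSum (fun k => G (k - 1) (x + ω) * g k)
      (∑' k, G k (x + ω) * g (k + 1)) := by
    refine (Equiv.addRight (1 : ℤ)).hasSum_iff.1 ?_
    simpa [Function.comp_def] using (h.summable_mul (x + ω) fun k => hg (k + 1)).hasSum
  have shift_left : HasSum (fun k => G (k + 1) (x - ω) * g k)
      (∑' k, G k (x - ω) * g (k - 1)) := by
    refine (Equiv.subRight (1 : ℤ)).hasSum_iff.1 ?_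
    simpa [Function.comp_def] using (h.summable_mul (x - ω) fun k => hg (k - 1)).hasSum
  have total := (((h.summable_mul x hg).hasSum.mul_left (W x)).sub shift_right).sub shift_left
  refine total.unique ((hasSum_ite_eq (0 : ℤ) (g 0)).congr_fun fun k => ?_)
  have := h.equation k x
  split_ifs at this ⊢ with hk
  · subst hk
    linear_combination g 0 * this
  · linear_combination g k * this

lemma tsum_mul_le (h : IsGreenKernel ω κ₀ l W G B c Λ) (x : ℝ) {g : ℤ → ℝ}
    (hg : ∀ k, |g k| ≤ 1) : ∑' k, G k x * g k ≤ B * (4 / c) :=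
  calc ∑' k, G k x * g k ≤ ∑' k : ℤ, B * exp (-(c * |(k : ℝ)|)) :=
        (h.summable_mul x hg).tsum_le_tsum
          (fun k => (mul_le_of_le_one_right (h.pos k x).le (le_of_abs_le (hg k))).trans
            (h.le_mul_exp k x))
          ((summable_exp_neg_mul_abs_int h.decay_pos).mul_left B)
    _ ≤ B * (4 / c) := by
        rw [tsum_mul_left]
        exact mul_le_mul_of_nonneg_left
          (tsum_exp_neg_mul_abs_int_le h.decay_pos h.decay_le_one) h.bound_pos.le

end IsGreenKernel

/-! ## Perturbing a Green kernel -/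

/-- The length of the walk on `ℤ` from `0` with successive steps `p` and a final step leading to
`k`, increased by one. -/
noncomputable def pathLength : List ℤ → ℤ → ℝ
  | [], k => |(k : ℝ)| + 1
  | j :: p, k => |(j : ℝ)| + pathLength p (k - j)

lemma abs_add_one_le_pathLength (p : List ℤ) (k : ℤ) : |(k : ℝ)| + 1 ≤ pathLength p k := by
  induction p generalizing k with
  | nil => exact le_rfl
  | cons j p ih =>
    have triangle : |(k : ℝ)| ≤ |(j : ℝ)| + |((k - j : ℤ) : ℝ)| := by
      simpa using abs_add_le (j : ℝ) ((k - j : ℤ) : ℝ)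
    simp only [pathLength]
    linarith [ih (k - j)]

lemma pathLength_nonneg (p : List ℤ) (k : ℤ) : 0 ≤ pathLength p k := by
  linarith [abs_add_one_le_pathLength p k, abs_nonneg (k : ℝ)]

/-- The factor `1 / (1 - t G₀)`, which sums the geometric series of repeated visits to the same
site. -/
noncomputable def returnFactor (G : ℤ → ℝ → ℝ) (t : ℝ → ℝ) (x : ℝ) : ℝ := (1 - t x * G 0 x)⁻¹

/-- The contribution of a walk with successive nonzero steps `p` and a final step to `k` to the
Neumann series for the Green kernel of the potential `W - t`; zero steps are accounted for by
`returnFactor`. -/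
noncomputable def pathWeight (ω : ℝ) (G : ℤ → ℝ → ℝ) (t : ℝ → ℝ) : List ℤ → ℤ → ℝ → ℝ
  | [], k, x => returnFactor G t x * G k x
  | j :: p, k, x => (if j = 0 then 0 else returnFactor G t x * G j x * t (x + j * ω)) *
      pathWeight ω G t p (k - j) (x + j * ω)

/-- The Green kernel of the potential `W - t`, as a Neumann series in the Green kernel `G` of
`W`. -/
noncomputable def perturbedKernel (ω : ℝ) (G : ℤ → ℝ → ℝ) (t : ℝ → ℝ) (k : ℤ) (x : ℝ) : ℝ :=
  ∑' p, pathWeight ω G t p k x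

/-- The factor by which a step `j` shrinks the weight of a path. -/
noncomputable def stepFactor (B c η s : ℝ) (j : ℤ) : ℝ := B * s / η * exp (-(c / 4 * |(j : ℝ)|))

/-- The bound on the weight of a path before the gain of `stepFactor` for each of its steps. -/
noncomputable def pathBound (B c η b s : ℝ) : ℝ := exp (c / 2) * (B / η) * (b / s)

/-- A Green kernel for `W` and a perturbation `t ≥ 0` of size at most `b`, such that `W - t` stays
subcritical with gap `η`, and such that `t` is small, in the sense of the parameter `s`, at one of
any two distinct points at bounded distance on an orbit. -/
structure IsSmallPerturbation (ω κ₀ : ℝ) (l : ℕ) (W : ℝ → ℝ) (G : ℤ → ℝ → ℝ) (B c Λ : ℝ)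
    (t : ℝ → ℝ) (Λ' η b s : ℝ) : Prop extends toIsGreenKernel : IsGreenKernel ω κ₀ l W G B c Λ where
  perturbation_periodic : Function.Periodic t 1
  perturbation_derivDominated : DerivDominated l Λ' t
  returnFactor_derivDominated : DerivDominated l Λ' (returnFactor G t)
  perturbation_le : ∀ x, t x ≤ b
  gap_pos : 0 < η
  gap_le_bound : η ≤ B
  gap_le : ∀ x, η ≤ 1 - t x * G 0 x
  crossing_pos : 0 < s
  crossing_le_bound : s ≤ b
  sqrt_mul_sqrt_le : ∀ x (j : ℤ), j ≠ 0 → √(t x) * √(t (x + j * ω)) ≤ s * exp (c / 4 * |(j : ℝ)|)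
  crossing_small : B * s / η * (16 / c) ≤ 1 / 2

section Paths

variable {ω : ℝ} {G : ℤ → ℝ → ℝ} {t : ℝ → ℝ}

lemma pathWeight_zero_cons (p : List ℤ) (k : ℤ) (x : ℝ) : pathWeight ω G t (0 :: p) k x = 0 := by
  simp [pathWeight]

lemma pathWeight_cons {j : ℤ} (hj : j ≠ 0) (p : List ℤ) (k : ℤ) (x : ℝ) :
    pathWeight ω G t (j :: p) k x = returnFactor G t x * G j x * t (x + j * ω) *
      pathWeight ω G t p (k - j) (x + j * ω) := by
  simp [pathWeight, hj]

end Paths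

namespace IsSmallPerturbation

variable {ω κ₀ : ℝ} {l : ℕ} {W : ℝ → ℝ} {G : ℤ → ℝ → ℝ} {B c Λ : ℝ} {t : ℝ → ℝ} {Λ' η b s : ℝ}

lemma perturbation_nonneg (h : IsSmallPerturbation ω κ₀ l W G B c Λ t Λ' η b s) (x : ℝ) :
    0 ≤ t x :=
  h.perturbation_derivDominated.nonneg x

lemma bound_perturbation_pos (h : IsSmallPerturbation ω κ₀ l W G B c Λ t Λ' η b s) : 0 < b :=
  h.crossing_pos.trans_le h.crossing_le_bound

lemma one_le_returnFactor (h : IsSmallPerturbation ω κ₀ l W G B c Λ t Λ' η b s) (x : ℝ) :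
    1 ≤ returnFactor G t x :=
  (one_le_inv₀ (h.gap_pos.trans_le (h.gap_le x))).2
    (sub_le_self _ (mul_nonneg (h.perturbation_nonneg x) (h.pos 0 x).le))

lemma returnFactor_pos (h : IsSmallPerturbation ω κ₀ l W G B c Λ t Λ' η b s) (x : ℝ) :
    0 < returnFactor G t x :=
  one_pos.trans_le (h.one_le_returnFactor x)

lemma returnFactor_mul_le (h : IsSmallPerturbation ω κ₀ l W G B c Λ t Λ' η b s) (j : ℤ) (x : ℝ) :
    returnFactor G t x * G j x ≤ B / η * exp (-(c * |(j : ℝ)|)) := by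
  have hE : returnFactor G t x ≤ η⁻¹ := inv_anti₀ h.gap_pos (h.gap_le x)
  refine (mul_le_mul hE (h.le_mul_exp j x) (h.pos j x).le (inv_pos.2 h.gap_pos).le).trans_eq ?_
  ring

lemma pathBound_pos (h : IsSmallPerturbation ω κ₀ l W G B c Λ t Λ' η b s) :
    0 < pathBound B c η b s :=
  mul_pos (mul_pos (exp_pos _) (div_pos h.bound_pos h.gap_pos))
    (div_pos h.bound_perturbation_pos h.crossing_pos)

lemma one_le_pathBound (h : IsSmallPerturbation ω κ₀ l W G B c Λ t Λ' η b s) :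
    1 ≤ pathBound B c η b s :=
  one_le_mul_of_one_le_of_one_le
    (one_le_mul_of_one_le_of_one_le (one_le_exp (by linarith [h.decay_pos]))
      ((one_le_div h.gap_pos).2 h.gap_le_bound))
    ((one_le_div h.crossing_pos).2 h.crossing_le_bound)

lemma stepFactor_nonneg (h : IsSmallPerturbation ω κ₀ l W G B c Λ t Λ' η b s) (j : ℤ) :
    0 ≤ stepFactor B c η s j :=
  mul_nonneg (div_nonneg (mul_nonneg h.bound_pos.le h.crossing_pos.le) h.gap_pos.le) (exp_pos _).le

lemma summable_stepFactor (h : IsSmallPerturbation ω κ₀ l W G B c Λ t Λ' η b s) :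
    Summable (stepFactor B c η s) :=
  (summable_exp_neg_mul_abs_int (by linarith [h.decay_pos])).mul_left _

lemma tsum_stepFactor_le (h : IsSmallPerturbation ω κ₀ l W G B c Λ t Λ' η b s) :
    ∑' j, stepFactor B c η s j ≤ 1 / 2 := by
  have hc := h.decay_pos
  simp only [stepFactor]
  rw [tsum_mul_left]
  refine le_trans (mul_le_mul_of_nonneg_left ?_ ?_) h.crossing_small
  · refine (tsum_exp_neg_mul_abs_int_le (by positivity) (by linarith [h.decay_le_one])).trans_eq ?_
    field_simp
    norm_num
  · exact div_nonneg (mul_nonneg h.bound_pos.le h.crossing_pos.le) h.gap_pos.le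

lemma summable_pathFactor (h : IsSmallPerturbation ω κ₀ l W G B c Λ t Λ' η b s) :
    Summable fun p : List ℤ => (p.map (stepFactor B c η s)).prod :=
  (summable_prod_map_and_tsum_le h.stepFactor_nonneg h.summable_stepFactor
    (h.tsum_stepFactor_le.trans_lt (by norm_num))).1

lemma tsum_pathFactor_le (h : IsSmallPerturbation ω κ₀ l W G B c Λ t Λ' η b s) :
    ∑' p : List ℤ, (p.map (stepFactor B c η s)).prod ≤ 2 := by
  have hsum := h.tsum_stepFactor_le
  refine (summable_prod_map_and_tsum_le h.stepFactor_nonneg h.summable_stepFactor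
    (hsum.trans_lt (by norm_num))).2.trans ?_
  rw [inv_le_comm₀ (by linarith) (by norm_num)]
  linarith

lemma pathFactor_nonneg (h : IsSmallPerturbation ω κ₀ l W G B c Λ t Λ' η b s) (p : List ℤ) :
    0 ≤ (p.map (stepFactor B c η s)).prod :=
  prod_map_nonneg_of_forall h.stepFactor_nonneg p

lemma pathWeight_nonneg (h : IsSmallPerturbation ω κ₀ l W G B c Λ t Λ' η b s) (p : List ℤ)
    (k : ℤ) (x : ℝ) : 0 ≤ pathWeight ω G t p k x := by
  induction p generalizing k x with
  | nil => exact mul_nonneg (h.returnFactor_pos x).le (h.pos k x).le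
  | cons j p ih =>
    refine mul_nonneg ?_ (ih _ _)
    split_ifs
    · exact le_rfl
    · exact mul_nonneg (mul_nonneg (h.returnFactor_pos x).le (h.pos j x).le)
        (h.perturbation_nonneg _)

lemma periodic_pathWeight (h : IsSmallPerturbation ω κ₀ l W G B c Λ t Λ' η b s) (p : List ℤ)
    (k : ℤ) : Function.Periodic (pathWeight ω G t p k) 1 := by
  have hE : Function.Periodic (returnFactor G t) 1 := fun x => by
    simp only [returnFactor, h.perturbation_periodic x, h.periodic 0 x]
  induction p generalizing k with
  | nil => exact fun x => by simp only [pathWeight, hE x, h.periodic k x]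
  | cons j p ih =>
    intro x
    simp only [pathWeight, hE x, h.periodic j x, add_right_comm x 1, h.perturbation_periodic _,
      ih (k - j) _]

lemma derivDominated_pathWeight (h : IsSmallPerturbation ω κ₀ l W G B c Λ t Λ' η b s)
    (p : List ℤ) (k : ℤ) :
    DerivDominated l ((2 * Λ + 2 * Λ') * pathLength p k) (pathWeight ω G t p k) := by
  have hΛ := h.rate_nonneg
  have hE := h.returnFactor_derivDominated
  have hΛ' := hE.rate_nonneg
  induction p generalizing k with
  | nil =>
    have hk := abs_nonneg (k : ℝ)
    refine (hE.mul (h.derivDominated k)).mono ?_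
    simp only [pathLength]
    nlinarith
  | cons j p ih =>
    have hlen := pathLength_nonneg p (k - j)
    rcases eq_or_ne j 0 with rfl | hj
    · rw [show pathWeight ω G t (0 :: p) k = fun _ => 0 from funext (pathWeight_zero_cons p k)]
      exact .const le_rfl (mul_nonneg (by positivity) (pathLength_nonneg _ _))
    · have one_le_abs : (1 : ℝ) ≤ |(j : ℝ)| := by exact_mod_cast Int.one_le_abs hj
      rw [show pathWeight ω G t (j :: p) k = _ from funext (pathWeight_cons hj p k)]
      refine (((hE.mul (h.derivDominated j)).mul
        (h.perturbation_derivDominated.comp_add_const _)).mul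
          ((ih (k - j)).comp_add_const _)).mono ?_
      simp only [pathLength]
      nlinarith

lemma exp_mul_pathWeight_nil_le (h : IsSmallPerturbation ω κ₀ l W G B c Λ t Λ' η b s) (k : ℤ)
    (x : ℝ) :
    exp (c / 2 * pathLength [] k) * pathWeight ω G t [] k x ≤ exp (c / 2) * (B / η) := by
  have hc := h.decay_pos
  have hBη := (div_pos h.bound_pos h.gap_pos).le
  calc exp (c / 2 * pathLength [] k) * pathWeight ω G t [] k x
      ≤ exp (c / 2 * (|(k : ℝ)| + 1)) * (B / η * exp (-(c * |(k : ℝ)|))) :=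
        mul_le_mul_of_nonneg_left (h.returnFactor_mul_le k x) (exp_pos _).le
    _ = exp (c / 2 * (|(k : ℝ)| + 1) + -(c * |(k : ℝ)|)) * (B / η) := by rw [exp_add]; ring
    _ ≤ exp (c / 2) * (B / η) := by
        gcongr
        nlinarith [abs_nonneg (k : ℝ)]

lemma exp_mul_returnFactor_le_stepFactor (h : IsSmallPerturbation ω κ₀ l W G B c Λ t Λ' η b s)
    {j : ℤ} (hj : j ≠ 0) (x : ℝ) :
    exp (c / 2 * |(j : ℝ)|) * (returnFactor G t x * G j x * (√(t x) * √(t (x + j * ω)))) ≤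
      stepFactor B c η s j := by
  have hBη := (div_pos h.bound_pos h.gap_pos).le
  calc exp (c / 2 * |(j : ℝ)|) * (returnFactor G t x * G j x * (√(t x) * √(t (x + j * ω))))
      ≤ exp (c / 2 * |(j : ℝ)|) *
          (B / η * exp (-(c * |(j : ℝ)|)) * (s * exp (c / 4 * |(j : ℝ)|))) := by
        have := h.sqrt_mul_sqrt_le x j hj
        have := h.returnFactor_mul_le j x
        gcongr
    _ = B * s / η *
          (exp (c / 2 * |(j : ℝ)|) * exp (-(c * |(j : ℝ)|)) * exp (c / 4 * |(j : ℝ)|)) := by ring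
    _ = stepFactor B c η s j := by
        rw [stepFactor, ← exp_add, ← exp_add]
        ring_nf

-- Distributing `t = √t √t` over both ends of every step lets `sqrt_mul_sqrt_le` apply to each step.
lemma sqrt_mul_exp_mul_pathWeight_le (h : IsSmallPerturbation ω κ₀ l W G B c Λ t Λ' η b s)
    (p : List ℤ) (k : ℤ) (x : ℝ) :
    √(t x) * (exp (c / 2 * pathLength p k) * pathWeight ω G t p k x) ≤
      √b * (exp (c / 2) * (B / η)) * (p.map (stepFactor B c η s)).prod := by
  have hBη := (div_pos h.bound_pos h.gap_pos).le
  induction p generalizing k x with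
  | nil =>
    rw [List.map_nil, List.prod_nil, mul_one]
    exact mul_le_mul (sqrt_le_sqrt (h.perturbation_le x)) (h.exp_mul_pathWeight_nil_le k x)
      (mul_nonneg (exp_pos _).le (h.pathWeight_nonneg _ _ _)) (sqrt_nonneg _)
  | cons j p ih =>
    rcases eq_or_ne j 0 with rfl | hj
    · rw [pathWeight_zero_cons, mul_zero, mul_zero]
      exact mul_nonneg (by positivity) (h.pathFactor_nonneg _)
    · set z := x + j * ω
      calc √(t x) * (exp (c / 2 * pathLength (j :: p) k) * pathWeight ω G t (j :: p) k x)
          = exp (c / 2 * |(j : ℝ)|) * (returnFactor G t x * G j x * (√(t x) * √(t z))) *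
              (√(t z) * (exp (c / 2 * pathLength p (k - j)) * pathWeight ω G t p (k - j) z)) := by
            rw [pathWeight_cons hj, pathLength, mul_add, exp_add]
            linear_combination (-(√(t x) * exp (c / 2 * |(j : ℝ)|) *
              exp (c / 2 * pathLength p (k - j)) * returnFactor G t x * G j x *
              pathWeight ω G t p (k - j) z)) * mul_self_sqrt (h.perturbation_nonneg z)
        _ ≤ stepFactor B c η s j *
              (√b * (exp (c / 2) * (B / η)) * (p.map (stepFactor B c η s)).prod) :=
            mul_le_mul (h.exp_mul_returnFactor_le_stepFactor hj x) (ih _ _)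
              (mul_nonneg (sqrt_nonneg _)
                (mul_nonneg (exp_pos _).le (h.pathWeight_nonneg _ _ _))) (h.stepFactor_nonneg j)
        _ = _ := by rw [List.map_cons, List.prod_cons]; ring

lemma exp_mul_returnFactor_mul_sqrt_le (h : IsSmallPerturbation ω κ₀ l W G B c Λ t Λ' η b s)
    (j : ℤ) (x : ℝ) :
    exp (c / 2 * |(j : ℝ)|) * (returnFactor G t x * G j x * √(t (x + j * ω))) ≤
      √b / s * stepFactor B c η s j := by
  have hc := h.decay_pos
  have hs := h.crossing_pos
  have hBη := (div_pos h.bound_pos h.gap_pos).le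
  calc exp (c / 2 * |(j : ℝ)|) * (returnFactor G t x * G j x * √(t (x + j * ω)))
      ≤ exp (c / 2 * |(j : ℝ)|) * (B / η * exp (-(c * |(j : ℝ)|)) * √b) := by
        have := sqrt_le_sqrt (h.perturbation_le (x + j * ω))
        have := h.returnFactor_mul_le j x
        gcongr
    _ = √b * (B / η) * exp (c / 2 * |(j : ℝ)| + -(c * |(j : ℝ)|)) := by rw [exp_add]; ring
    _ ≤ √b * (B / η) * exp (-(c / 4 * |(j : ℝ)|)) := by
        gcongr
        nlinarith [abs_nonneg (j : ℝ)]
    _ = √b / s * stepFactor B c η s j := by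
        rw [stepFactor]
        field_simp

lemma exp_mul_pathWeight_le (h : IsSmallPerturbation ω κ₀ l W G B c Λ t Λ' η b s)
    (p : List ℤ) (k : ℤ) (x : ℝ) :
    exp (c / 2 * pathLength p k) * pathWeight ω G t p k x ≤
      pathBound B c η b s * (p.map (stepFactor B c η s)).prod := by
  have hs := h.crossing_pos
  have hb := h.bound_perturbation_pos
  have hBη := (div_pos h.bound_pos h.gap_pos).le
  cases p with
  | nil =>
    rw [List.map_nil, List.prod_nil, mul_one]
    exact (h.exp_mul_pathWeight_nil_le k x).trans (le_mul_of_one_le_right (by positivity)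
      ((one_le_div hs).2 h.crossing_le_bound))
  | cons j p =>
    rcases eq_or_ne j 0 with rfl | hj
    · rw [pathWeight_zero_cons, mul_zero]
      exact mul_nonneg h.pathBound_pos.le (h.pathFactor_nonneg _)
    · set z := x + j * ω
      calc exp (c / 2 * pathLength (j :: p) k) * pathWeight ω G t (j :: p) k x
          = exp (c / 2 * |(j : ℝ)|) * (returnFactor G t x * G j x * √(t z)) *
              (√(t z) * (exp (c / 2 * pathLength p (k - j)) * pathWeight ω G t p (k - j) z)) := by
            rw [pathWeight_cons hj, pathLength, mul_add, exp_add]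
            linear_combination (-(exp (c / 2 * |(j : ℝ)|) *
              exp (c / 2 * pathLength p (k - j)) * returnFactor G t x * G j x *
              pathWeight ω G t p (k - j) z)) * mul_self_sqrt (h.perturbation_nonneg z)
        _ ≤ √b / s * stepFactor B c η s j *
              (√b * (exp (c / 2) * (B / η)) * (p.map (stepFactor B c η s)).prod) :=
            mul_le_mul (h.exp_mul_returnFactor_mul_sqrt_le j x)
              (h.sqrt_mul_exp_mul_pathWeight_le p _ _)
              (mul_nonneg (sqrt_nonneg _)
                (mul_nonneg (exp_pos _).le (h.pathWeight_nonneg _ _ _)))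
              (mul_nonneg (by positivity) (h.stepFactor_nonneg j))
        _ = _ := by
            rw [List.map_cons, List.prod_cons, pathBound]
            linear_combination (stepFactor B c η s j * exp (c / 2) * (B / η) *
              (p.map (stepFactor B c η s)).prod / s) * mul_self_sqrt hb.le

lemma pathWeight_le (h : IsSmallPerturbation ω κ₀ l W G B c Λ t Λ' η b s) (p : List ℤ) (k : ℤ)
    (x : ℝ) : pathWeight ω G t p k x ≤
      pathBound B c η b s * (p.map (stepFactor B c η s)).prod * exp (-(c / 2 * |(k : ℝ)|)) := by
  have hlen : exp (c / 2 * |(k : ℝ)|) ≤ exp (c / 2 * pathLength p k) := by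
    have := h.decay_pos
    gcongr
    linarith [abs_add_one_le_pathLength p k]
  rw [exp_neg, ← div_eq_mul_inv, le_div_iff₀ (exp_pos _), mul_comm]
  exact (mul_le_mul_of_nonneg_right hlen (h.pathWeight_nonneg p k x)).trans
    (h.exp_mul_pathWeight_le p k x)

lemma summable_pathWeight (h : IsSmallPerturbation ω κ₀ l W G B c Λ t Λ' η b s) (k : ℤ) (x : ℝ) :
    Summable fun p => pathWeight ω G t p k x :=
  .of_nonneg_of_le (fun p => h.pathWeight_nonneg p k x) (fun p => h.pathWeight_le p k x)
    ((h.summable_pathFactor.mul_left _).mul_right _)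

lemma perturbedKernel_nonneg (h : IsSmallPerturbation ω κ₀ l W G B c Λ t Λ' η b s) (k : ℤ)
    (x : ℝ) : 0 ≤ perturbedKernel ω G t k x :=
  tsum_nonneg fun p => h.pathWeight_nonneg p k x

lemma perturbedKernel_le (h : IsSmallPerturbation ω κ₀ l W G B c Λ t Λ' η b s) (k : ℤ) (x : ℝ) :
    perturbedKernel ω G t k x ≤ 2 * pathBound B c η b s * exp (-(c / 2 * |(k : ℝ)|)) := by
  have hZ := h.pathBound_pos
  calc perturbedKernel ω G t k x
      ≤ ∑' p : List ℤ, pathBound B c η b s * (p.map (stepFactor B c η s)).prod *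
          exp (-(c / 2 * |(k : ℝ)|)) :=
        (h.summable_pathWeight k x).tsum_le_tsum (fun p => h.pathWeight_le p k x)
          ((h.summable_pathFactor.mul_left _).mul_right _)
    _ = pathBound B c η b s * (∑' p : List ℤ, (p.map (stepFactor B c η s)).prod) *
          exp (-(c / 2 * |(k : ℝ)|)) := by rw [tsum_mul_right, tsum_mul_left]
    _ ≤ pathBound B c η b s * 2 * exp (-(c / 2 * |(k : ℝ)|)) := by
        gcongr
        exact h.tsum_pathFactor_le
    _ = _ := by ring

lemma returnFactor_mul_le_perturbedKernel (h : IsSmallPerturbation ω κ₀ l W G B c Λ t Λ' η b s)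
    (k : ℤ) (x : ℝ) : returnFactor G t x * G k x ≤ perturbedKernel ω G t k x :=
  (h.summable_pathWeight k x).le_tsum [] fun p _ => h.pathWeight_nonneg p k x

lemma exp_le_perturbedKernel (h : IsSmallPerturbation ω κ₀ l W G B c Λ t Λ' η b s) (k : ℤ)
    (x : ℝ) : exp (-(κ₀ * (|(k : ℝ)| + 1))) ≤ perturbedKernel ω G t k x :=
  calc exp (-(κ₀ * (|(k : ℝ)| + 1))) ≤ G k x := h.exp_le k x
    _ ≤ returnFactor G t x * G k x :=
        le_mul_of_one_le_left (h.pos k x).le (h.one_le_returnFactor x)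
    _ ≤ perturbedKernel ω G t k x := h.returnFactor_mul_le_perturbedKernel k x

lemma abs_mul_perturbedKernel_le (h : IsSmallPerturbation ω κ₀ l W G B c Λ t Λ' η b s) (k : ℤ)
    (x z : ℝ) : |t z * perturbedKernel ω G t k x| ≤ b * (2 * pathBound B c η b s) := by
  rw [abs_of_nonneg (mul_nonneg (h.perturbation_nonneg z) (h.perturbedKernel_nonneg k x))]
  refine mul_le_mul (h.perturbation_le z) ((h.perturbedKernel_le k x).trans ?_)
    (h.perturbedKernel_nonneg k x) h.bound_perturbation_pos.le
  refine mul_le_of_le_one_right (by linarith [h.pathBound_pos]) (exp_le_one_iff.2 ?_)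
  have := h.decay_pos
  rw [neg_nonpos]
  positivity

lemma perturbedKernel_eq_returnFactor_mul (h : IsSmallPerturbation ω κ₀ l W G B c Λ t Λ' η b s)
    (k : ℤ) (x : ℝ) :
    perturbedKernel ω G t k x = returnFactor G t x * (G k x + ∑' j : ℤ, if j = 0 then 0 else
      G j x * (t (x + j * ω) * perturbedKernel ω G t (k - j) (x + j * ω))) := by
  rw [perturbedKernel, tsum_list_eq_nil_add_tsum_cons (h.summable_pathWeight k x), mul_add,
    ← tsum_mul_left]
  congr 1
  refine tsum_congr fun j => ?_
  simp only [pathWeight]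
  rw [tsum_mul_left]
  change _ * perturbedKernel ω G t (k - j) (x + j * ω) = _
  split_ifs <;> ring

lemma perturbedKernel_eq_add_tsum (h : IsSmallPerturbation ω κ₀ l W G B c Λ t Λ' η b s) (k : ℤ)
    (x : ℝ) :
    perturbedKernel ω G t k x = G k x +
      ∑' j : ℤ, G j x * (t (x + j * ω) * perturbedKernel ω G t (k - j) (x + j * ω)) := by
  have hsum := h.summable_mul x (g := fun j : ℤ =>
    t (x + j * ω) * perturbedKernel ω G t (k - j) (x + j * ω))
    fun j => h.abs_mul_perturbedKernel_le _ _ _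
  have hE : returnFactor G t x * (1 - t x * G 0 x) = 1 :=
    inv_mul_cancel₀ (h.gap_pos.trans_le (h.gap_le x)).ne'
  have hrec := h.perturbedKernel_eq_returnFactor_mul k x
  rw [hsum.tsum_eq_add_tsum_ite 0]
  simp only [Int.cast_zero, zero_mul, add_zero, sub_zero]
  linear_combination (1 - t x * G 0 x) * hrec + (G k x + ∑' j : ℤ, if j = 0 then 0 else
    G j x * (t (x + j * ω) * perturbedKernel ω G t (k - j) (x + j * ω))) * hE

lemma perturbedKernel_equation (h : IsSmallPerturbation ω κ₀ l W G B c Λ t Λ' η b s) (k : ℤ)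
    (x : ℝ) :
    (W x - t x) * perturbedKernel ω G t k x - perturbedKernel ω G t (k - 1) (x + ω) -
      perturbedKernel ω G t (k + 1) (x - ω) = if k = 0 then 1 else 0 := by
  set g : ℤ → ℝ := fun j => t (x + j * ω) * perturbedKernel ω G t (k - j) (x + j * ω) with hg
  have at_x : perturbedKernel ω G t k x = G k x + ∑' j, G j x * g j :=
    h.perturbedKernel_eq_add_tsum k x
  have at_right : perturbedKernel ω G t (k - 1) (x + ω) =
      G (k - 1) (x + ω) + ∑' j, G j (x + ω) * g (j + 1) := by
    rw [h.perturbedKernel_eq_add_tsum]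
    congr! 3 with j
    have hz : x + ω + j * ω = x + ((j + 1 : ℤ) : ℝ) * ω := by push_cast; ring
    rw [hg, hz, sub_sub, add_comm 1 j]
  have at_left : perturbedKernel ω G t (k + 1) (x - ω) =
      G (k + 1) (x - ω) + ∑' j, G j (x - ω) * g (j - 1) := by
    rw [h.perturbedKernel_eq_add_tsum]
    congr! 3 with j
    have hz : x - ω + j * ω = x + ((j - 1 : ℤ) : ℝ) * ω := by push_cast; ring
    rw [hg, hz, show k + 1 - j = k - (j - 1) by ring]
  have hg0 : g 0 = t x * perturbedKernel ω G t k x := by simp [hg]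
  have hGg := h.equation_tsum x (g := g) fun j => h.abs_mul_perturbedKernel_le _ _ _
  rw [at_right, at_left]
  linear_combination h.equation k x + hGg + W x * at_x + hg0

lemma derivDominated_perturbedKernel (h : IsSmallPerturbation ω κ₀ l W G B c Λ t Λ' η b s)
    {K : ℝ} (hK : 0 < K) (hKl : l ≤ c / 2 * K)
    (hKb : κ₀ + log (2 * pathBound B c η b s) ≤ c / 2 * K) (k : ℤ) :
    DerivDominated l (2 * (2 * Λ + 2 * Λ') * K * (|(k : ℝ)| + 1)) (perturbedKernel ω G t k) := by
  have hc := h.decay_pos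
  have hΛ := h.rate_nonneg
  have hΛ' := h.perturbation_derivDominated.rate_nonneg
  have hk := abs_nonneg (k : ℝ)
  have hZ := h.one_le_pathBound
  rw [mul_assoc]
  refine DerivDominated.tsum (ℓ := fun p => pathLength p k) (θ := c / 2)
    (b := fun p : List ℤ => pathBound B c η b s * (p.map (stepFactor B c η s)).prod)
    (by positivity) (fun p => pathLength_nonneg p k) (by positivity) (by positivity) ?_
    (fun p => h.derivDominated_pathWeight p k) (fun p x => h.exp_mul_pathWeight_le p k x)
    (h.summable_pathFactor.mul_left _) fun x => ?_
  · rw [← mul_assoc]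
    exact hKl.trans (le_mul_of_one_le_right (by positivity) (by linarith))
  · refine le_trans ?_ (h.exp_le_perturbedKernel k x)
    have log_nonneg : 0 ≤ log (2 * pathBound B c η b s) := log_nonneg (by linarith)
    calc exp (-(c / 2 * (K * (|(k : ℝ)| + 1)))) *
          ∑' p : List ℤ, pathBound B c η b s * (p.map (stepFactor B c η s)).prod
        ≤ exp (-(c / 2 * (K * (|(k : ℝ)| + 1)))) * (pathBound B c η b s * 2) := by
          rw [tsum_mul_left]
          gcongr
          exact h.tsum_pathFactor_le
      _ = exp (-(c / 2 * (K * (|(k : ℝ)| + 1))) + log (2 * pathBound B c η b s)) := by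
          rw [exp_add, exp_log (by linarith)]
          ring
      _ ≤ exp (-(κ₀ * (|(k : ℝ)| + 1))) := by
          gcongr
          nlinarith

theorem isGreenKernel_perturbedKernel (h : IsSmallPerturbation ω κ₀ l W G B c Λ t Λ' η b s)
    {K : ℝ} (hK : 0 < K) (hKl : l ≤ c / 2 * K)
    (hKb : κ₀ + log (2 * pathBound B c η b s) ≤ c / 2 * K) :
    IsGreenKernel ω κ₀ l (fun x => W x - t x) (perturbedKernel ω G t)
      (2 * pathBound B c η b s) (c / 2) (2 * (2 * Λ + 2 * Λ') * K) where
  contDiff_potential := h.contDiff_potential.sub h.perturbation_derivDominated.contDiff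
  periodic_potential := h.periodic_potential.sub h.perturbation_periodic
  periodic k x := tsum_congr fun p => h.periodic_pathWeight p k x
  equation := h.perturbedKernel_equation
  decay_pos := half_pos h.decay_pos
  decay_le_one := by linarith [h.decay_pos, h.decay_le_one]
  le_mul_exp := h.perturbedKernel_le
  exp_le := h.exp_le_perturbedKernel
  derivDominated := h.derivDominated_perturbedKernel hK hKl hKb

end IsSmallPerturbation

/-! ## The critical perturbation of a potential -/

/-- A positive periodic function with values in `[m, 1]` and with derivatives controlled by `Λφ`. -/
structure IsBump (l : ℕ) (Λφ m : ℝ) (φ : ℝ → ℝ) : Prop where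
  periodic : Function.Periodic φ 1
  derivDominated : DerivDominated l Λφ φ
  min_pos : 0 < m
  min_le : ∀ x, m ≤ φ x
  le_one : ∀ x, φ x ≤ 1

namespace IsBump

variable {l : ℕ} {Λφ m : ℝ} {φ : ℝ → ℝ}

lemma pos (hφ : IsBump l Λφ m φ) (x : ℝ) : 0 < φ x := hφ.min_pos.trans_le (hφ.min_le x)

lemma abs_le_one (hφ : IsBump l Λφ m φ) (x : ℝ) : |φ x| ≤ 1 := by
  rw [abs_of_pos (hφ.pos x)]
  exact hφ.le_one x

lemma one : IsBump l 0 1 fun _ => 1 where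
  periodic _ := rfl
  derivDominated := .const zero_le_one le_rfl
  min_pos := one_pos
  min_le _ := le_rfl
  le_one _ := le_rfl

end IsBump

/-- The superposition of the kernel `G` along orbits with density `φ`. If `G` is the Green kernel
of `H`, this is the bounded solution `f` of `H f = φ`. -/
noncomputable def greenTransform (ω : ℝ) (G : ℤ → ℝ → ℝ) (φ : ℝ → ℝ) (x : ℝ) : ℝ :=
  ∑' k : ℤ, G k x * φ (x + k * ω)

/-- The function `φ / f` with `H f = φ`: subtracting it from the potential of `H` makes the positive
function `f` a null vector. -/
noncomputable def criticalPerturbation (ω : ℝ) (G : ℤ → ℝ → ℝ) (φ : ℝ → ℝ) (x : ℝ) : ℝ :=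
  φ x / greenTransform ω G φ x

namespace IsGreenKernel

variable {ω κ₀ : ℝ} {l : ℕ} {W : ℝ → ℝ} {G : ℤ → ℝ → ℝ} {B c Λ : ℝ} {φ : ℝ → ℝ} {Λφ m δ K : ℝ}

lemma summable_mul_comp (h : IsGreenKernel ω κ₀ l W G B c Λ) (hφ : IsBump l Λφ m φ) (x : ℝ) :
    Summable fun k : ℤ => G k x * φ (x + k * ω) :=
  h.summable_mul x fun _ => hφ.abs_le_one _

lemma mul_le_greenTransform (h : IsGreenKernel ω κ₀ l W G B c Λ) (hφ : IsBump l Λφ m φ) (k : ℤ)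
    (x : ℝ) : G k x * φ (x + k * ω) ≤ greenTransform ω G φ x :=
  (h.summable_mul_comp hφ x).le_tsum k fun j _ => mul_nonneg (h.pos j x).le (hφ.pos _).le

lemma greenTransform_pos (h : IsGreenKernel ω κ₀ l W G B c Λ) (hφ : IsBump l Λφ m φ) (x : ℝ) :
    0 < greenTransform ω G φ x :=
  (mul_pos (h.pos 0 x) (hφ.pos _)).trans_le (h.mul_le_greenTransform hφ 0 x)

lemma exp_neg_mul_le_greenTransform (h : IsGreenKernel ω κ₀ l W G B c Λ) (hφ : IsBump l Λφ m φ)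
    (x : ℝ) : exp (-κ₀) * m ≤ greenTransform ω G φ x :=
  (mul_le_mul (h.exp_neg_le x) (hφ.min_le _) hφ.min_pos.le (h.pos 0 x).le).trans
    (h.mul_le_greenTransform hφ 0 x)

lemma greenTransform_le (h : IsGreenKernel ω κ₀ l W G B c Λ) (hφ : IsBump l Λφ m φ) (x : ℝ) :
    greenTransform ω G φ x ≤ B * (4 / c) :=
  h.tsum_mul_le x fun _ => hφ.abs_le_one _

lemma periodic_greenTransform (h : IsGreenKernel ω κ₀ l W G B c Λ) (hφ : IsBump l Λφ m φ) :
    Function.Periodic (greenTransform ω G φ) 1 := fun x =>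
  tsum_congr fun k => by rw [h.periodic k x, add_right_comm, hφ.periodic]

lemma continuous_greenTransform (h : IsGreenKernel ω κ₀ l W G B c Λ) (hφ : IsBump l Λφ m φ) :
    Continuous (greenTransform ω G φ) := by
  refine continuous_tsum (fun k => (h.derivDominated k).contDiff.continuous.mul
    (hφ.derivDominated.contDiff.continuous.comp (continuous_add_const _)))
    ((summable_exp_neg_mul_abs_int h.decay_pos).mul_left B) fun k x => ?_
  rw [norm_mul, norm_eq_abs, norm_eq_abs, abs_of_pos (h.pos k x)]
  exact (mul_le_of_le_one_right (h.pos k x).le (hφ.abs_le_one _)).trans (h.le_mul_exp k x)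

lemma equation_greenTransform (h : IsGreenKernel ω κ₀ l W G B c Λ) (hφ : IsBump l Λφ m φ)
    (x : ℝ) :
    W x * greenTransform ω G φ x - greenTransform ω G φ (x + ω) - greenTransform ω G φ (x - ω) =
      φ x := by
  have hsum := h.equation_tsum x (g := fun k : ℤ => φ (x + k * ω)) fun _ => hφ.abs_le_one _
  have at_right : greenTransform ω G φ (x + ω) =
      ∑' k : ℤ, G k (x + ω) * φ (x + ((k + 1 : ℤ) : ℝ) * ω) :=
    tsum_congr fun k => by congr 2; push_cast; ring
  have at_left : greenTransform ω G φ (x - ω) =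
      ∑' k : ℤ, G k (x - ω) * φ (x + ((k - 1 : ℤ) : ℝ) * ω) :=
    tsum_congr fun k => by congr 2; push_cast; ring
  rw [at_right, at_left, greenTransform]
  simpa using hsum

lemma exp_mul_mul_comp_le (h : IsGreenKernel ω κ₀ l W G B c Λ) (hφ : IsBump l Λφ m φ) {a : ℝ}
    (ha1 : a ≤ 1) (k : ℤ) (x : ℝ) :
    exp (c / 2 * (|(k : ℝ)| + 1)) * (a * G k x * φ (x + k * ω)) ≤
      B * exp (c / 2) * exp (-(c / 2 * |(k : ℝ)|)) := by
  have hG := (h.pos k x).le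
  calc exp (c / 2 * (|(k : ℝ)| + 1)) * (a * G k x * φ (x + k * ω))
      ≤ exp (c / 2 * (|(k : ℝ)| + 1)) * (B * exp (-(c * |(k : ℝ)|))) := by
        refine mul_le_mul_of_nonneg_left ?_ (exp_pos _).le
        calc a * G k x * φ (x + k * ω) ≤ 1 * G k x * φ (x + k * ω) := by
              have := (hφ.pos (x + k * ω)).le
              gcongr
          _ ≤ 1 * G k x * 1 := by
              gcongr
              exact hφ.le_one _
          _ = G k x := by ring
          _ ≤ _ := h.le_mul_exp k x
    _ = B * exp (c / 2 * (|(k : ℝ)| + 1) + -(c * |(k : ℝ)|)) := by rw [exp_add]; ring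
    _ = B * exp (c / 2 + -(c / 2 * |(k : ℝ)|)) := by ring_nf
    _ = _ := by rw [exp_add]; ring

lemma derivDominated_greenTransform_const_mul (h : IsGreenKernel ω κ₀ l W G B c Λ)
    (hφ : IsBump l Λφ m φ) (hδ : 0 < δ) (hK : 0 < K) (hKl : l ≤ c / 2 * K)
    (hKb : exp (-(c / 2 * K)) * (B * exp (c / 2) * (8 / c)) ≤ δ * (exp (-κ₀) * m))
    {α : ℤ → ℝ} (hα : ∀ k, δ ≤ α k) (hα1 : ∀ k, α k ≤ 1) :
    DerivDominated l (2 * (Λ + Λφ) * K) (greenTransform ω (fun k x => α k * G k x) φ) := by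
  have hc := h.decay_pos
  have hα0 : ∀ k, 0 ≤ α k := fun k => hδ.le.trans (hα k)
  have hΛ := h.rate_nonneg
  have hΛφ := hφ.derivDominated.rate_nonneg
  have hs := summable_exp_neg_mul_abs_int (half_pos hc)
  refine DerivDominated.tsum (ℓ := fun k : ℤ => |(k : ℝ)| + 1) (θ := c / 2)
    (b := fun k : ℤ => B * exp (c / 2) * exp (-(c / 2 * |(k : ℝ)|)))
    (by positivity) (fun k => by positivity) (by positivity) hK hKl (fun k => ?_)
    (fun k x => h.exp_mul_mul_comp_le hφ (hα1 k) k x) (hs.mul_left _) fun x => ?_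
  · refine (((h.derivDominated k).const_mul (hα0 k)).mul
      (hφ.derivDominated.comp_add_const _)).mono ?_
    nlinarith [abs_nonneg (k : ℝ)]
  · have hterm : ∀ k : ℤ, 0 ≤ α k * G k x * φ (x + k * ω) := fun k =>
      mul_nonneg (mul_nonneg (hα0 k) (h.pos k x).le) (hφ.pos _).le
    have hsum : Summable fun k : ℤ => α k * G k x * φ (x + k * ω) :=
      .of_nonneg_of_le hterm (fun k => mul_le_mul_of_nonneg_right
        (mul_le_of_le_one_left (h.pos k x).le (hα1 k)) (hφ.pos _).le) (h.summable_mul_comp hφ x)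
    refine le_trans ?_ ((hKb.trans ?_).trans (hsum.le_tsum 0 fun k _ => hterm k))
    · have tsum_le := tsum_exp_neg_mul_abs_int_le (half_pos hc) (by linarith [h.decay_le_one])
      have hB := h.bound_pos
      rw [tsum_mul_left]
      gcongr
      exact tsum_le.trans_eq (by field_simp; norm_num)
    · rw [← mul_assoc]
      exact mul_le_mul (mul_le_mul (hα 0) (h.exp_neg_le x) (exp_pos _).le (hα0 0)) (hφ.min_le _)
        hφ.min_pos.le (mul_nonneg (hα0 0) (h.pos 0 x).le)

lemma criticalPerturbation_pos (h : IsGreenKernel ω κ₀ l W G B c Λ) (hφ : IsBump l Λφ m φ)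
    (x : ℝ) : 0 < criticalPerturbation ω G φ x :=
  div_pos (hφ.pos x) (h.greenTransform_pos hφ x)

lemma periodic_criticalPerturbation (h : IsGreenKernel ω κ₀ l W G B c Λ) (hφ : IsBump l Λφ m φ) :
    Function.Periodic (criticalPerturbation ω G φ) 1 :=
  hφ.periodic.div (h.periodic_greenTransform hφ)

lemma criticalPerturbation_mul_le (h : IsGreenKernel ω κ₀ l W G B c Λ) (hφ : IsBump l Λφ m φ)
    (k : ℤ) (x : ℝ) : criticalPerturbation ω G φ x * (G k x * φ (x + k * ω)) ≤ φ x := by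
  rw [criticalPerturbation, div_mul_eq_mul_div, div_le_iff₀ (h.greenTransform_pos hφ x)]
  exact mul_le_mul_of_nonneg_left (h.mul_le_greenTransform hφ k x) (hφ.pos x).le

lemma criticalPerturbation_mul_le_one (h : IsGreenKernel ω κ₀ l W G B c Λ)
    (hφ : IsBump l Λφ m φ) (x : ℝ) : criticalPerturbation ω G φ x * G 0 x ≤ 1 := by
  have := h.criticalPerturbation_mul_le hφ 0 x
  simp only [Int.cast_zero, zero_mul, add_zero] at this
  refine le_of_mul_le_mul_right ?_ (hφ.pos x)
  linarith

lemma criticalPerturbation_le_exp (h : IsGreenKernel ω κ₀ l W G B c Λ) (hφ : IsBump l Λφ m φ)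
    (x : ℝ) : criticalPerturbation ω G φ x ≤ exp κ₀ := by
  have := (mul_le_mul_of_nonneg_left (h.exp_neg_le x) (h.criticalPerturbation_pos hφ x).le).trans
    (h.criticalPerturbation_mul_le_one hφ x)
  rwa [exp_neg, ← div_eq_mul_inv, div_le_one (exp_pos _)] at this

lemma tendsto_LEn_sub_criticalPerturbation (h : IsGreenKernel ω κ₀ l W G B c Λ)
    (hφ : IsBump l Λφ m φ) :
    Tendsto (LEn ω (SchrodingerCocycle fun x => W x - criticalPerturbation ω G φ x)) atTop
      (nhds 0) := by
  refine tendsto_LEn_zero_of_positive_solution (mul_pos (exp_pos _) hφ.min_pos)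
    (h.exp_neg_mul_le_greenTransform hφ) (h.greenTransform_le hφ) fun x => ?_
  have hτ : criticalPerturbation ω G φ x * greenTransform ω G φ x = φ x :=
    div_mul_cancel₀ _ (h.greenTransform_pos hφ x).ne'
  linear_combination h.equation_greenTransform hφ x - hτ

lemma derivDominated_greenTransform (h : IsGreenKernel ω κ₀ l W G B c Λ)
    (hφ : IsBump l Λφ m φ) (hδ : 0 < δ) (hδ1 : δ ≤ 1) (hK : 0 < K) (hKl : l ≤ c / 2 * K)
    (hKb : exp (-(c / 2 * K)) * (B * exp (c / 2) * (8 / c)) ≤ δ * (exp (-κ₀) * m)) :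
    DerivDominated l (2 * (Λ + Λφ) * K) (greenTransform ω G φ) := by
  simpa only [one_mul] using h.derivDominated_greenTransform_const_mul hφ hδ hK hKl hKb
    (α := fun _ => 1) (fun _ => hδ1) fun _ => le_rfl

lemma derivDominated_criticalPerturbation (h : IsGreenKernel ω κ₀ l W G B c Λ)
    (hφ : IsBump l Λφ m φ) (hδ : 0 < δ) (hδ1 : δ ≤ 1) (hK : 1 ≤ K) (hKl : l ≤ c / 2 * K)
    (hKb : exp (-(c / 2 * K)) * (B * exp (c / 2) * (8 / c)) ≤ δ * (exp (-κ₀) * m)) :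
    DerivDominated l ((2 * (l + 1) + 1) * (2 * (Λ + Λφ) * K)) (criticalPerturbation ω G φ) := by
  have hΛ := h.rate_nonneg
  have hΛφ := hφ.derivDominated.rate_nonneg
  have hK0 : 0 < K := one_pos.trans_le hK
  refine (hφ.derivDominated.div (h.derivDominated_greenTransform hφ hδ hδ1 hK0 hKl hKb)
    (h.greenTransform_pos hφ)).mono ?_
  nlinarith

lemma greenTransform_ite_mul (h : IsGreenKernel ω κ₀ l W G B c Λ) (hφ : IsBump l Λφ m φ) (x : ℝ) :
    greenTransform ω (fun k x => (if k = 0 then δ else 1) * G k x) φ x =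
      greenTransform ω G φ x - (1 - δ) * (G 0 x * φ x) := by
  refine (((h.summable_mul_comp hφ x).hasSum.sub (hasSum_ite_eq (0 : ℤ)
    ((1 - δ) * (G 0 x * φ x)))).congr_fun fun k => ?_).tsum_eq
  rcases eq_or_ne k 0 with rfl | hk
  · simp only [if_true, Int.cast_zero, zero_mul, add_zero]
    ring
  · simp only [hk, if_false, one_mul, sub_zero]

lemma one_sub_criticalPerturbation_mul (h : IsGreenKernel ω κ₀ l W G B c Λ)
    (hφ : IsBump l Λφ m φ) (x : ℝ) :
    1 - (1 - δ) * criticalPerturbation ω G φ x * G 0 x =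
      greenTransform ω (fun k x => (if k = 0 then δ else 1) * G k x) φ x /
        greenTransform ω G φ x := by
  have hf := (h.greenTransform_pos hφ x).ne'
  rw [h.greenTransform_ite_mul hφ, criticalPerturbation]
  field_simp

lemma le_one_sub_criticalPerturbation_mul (h : IsGreenKernel ω κ₀ l W G B c Λ)
    (hφ : IsBump l Λφ m φ) (hδ1 : δ ≤ 1) (x : ℝ) :
    δ ≤ 1 - (1 - δ) * criticalPerturbation ω G φ x * G 0 x := by
  nlinarith [h.criticalPerturbation_mul_le_one hφ x]

lemma derivDominated_returnFactor_criticalPerturbation (h : IsGreenKernel ω κ₀ l W G B c Λ)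
    (hφ : IsBump l Λφ m φ) (hδ : 0 < δ) (hδ1 : δ ≤ 1) (hK : 0 < K) (hKl : l ≤ c / 2 * K)
    (hKb : exp (-(c / 2 * K)) * (B * exp (c / 2) * (8 / c)) ≤ δ * (exp (-κ₀) * m)) :
    DerivDominated l ((2 * (l + 1) + 1) * (2 * (Λ + Λφ) * K))
      (returnFactor G fun x => (1 - δ) * criticalPerturbation ω G φ x) := by
  have hα : ∀ k : ℤ, δ ≤ if k = 0 then δ else 1 := fun k => by split_ifs <;> linarith
  have hα1 : ∀ k : ℤ, (if k = 0 then δ else 1) ≤ 1 := fun k => by split_ifs <;> linarith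
  have hquot : (returnFactor G fun x => (1 - δ) * criticalPerturbation ω G φ x) = fun x =>
      greenTransform ω G φ x /
        greenTransform ω (fun k x => (if k = 0 then δ else 1) * G k x) φ x := by
    funext x
    rw [returnFactor, h.one_sub_criticalPerturbation_mul hφ, inv_div]
  rw [hquot]
  refine ((h.derivDominated_greenTransform hφ hδ hδ1 hK hKl hKb).div
    (h.derivDominated_greenTransform_const_mul hφ hδ hK hKl hKb hα hα1) fun x => ?_).mono
      (by linarith)
  have hgap := hδ.trans_le (h.le_one_sub_criticalPerturbation_mul hφ hδ1 x)
  rw [h.one_sub_criticalPerturbation_mul hφ, div_pos_iff_of_pos_right (h.greenTransform_pos hφ x)]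
    at hgap
  exact hgap

lemma le_returnFactor_criticalPerturbation (h : IsGreenKernel ω κ₀ l W G B c Λ)
    (hφ : IsBump l Λφ m φ) (hδ : 0 < δ) (hδ1 : δ ≤ 1) {x : ℝ}
    (hx : greenTransform ω G φ x ≤ (1 + δ) * (G 0 x * φ x)) :
    1 / (2 * δ) ≤ returnFactor G (fun x => (1 - δ) * criticalPerturbation ω G φ x) x := by
  rw [returnFactor, ← one_div]
  refine one_div_le_one_div_of_le
    (hδ.trans_le (h.le_one_sub_criticalPerturbation_mul hφ hδ1 x)) ?_
  rw [h.one_sub_criticalPerturbation_mul hφ, div_le_iff₀ (h.greenTransform_pos hφ x),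
    h.greenTransform_ite_mul hφ]
  have hdiag : G 0 x * φ x ≤ greenTransform ω G φ x := by
    simpa using h.mul_le_greenTransform hφ 0 x
  nlinarith

end IsGreenKernel

/-! ## Bumps concentrated at the integers -/

/-- A trigonometric polynomial with values in `[1/2, 1]` that attains its maximum exactly at the
integers; its high powers are the bumps of the construction. -/
noncomputable def cosBump (x : ℝ) : ℝ := (3 + cos (2 * π * x)) / 4

lemma periodic_cosBump : Function.Periodic cosBump 1 := fun x => by
  rw [cosBump, mul_add, mul_one, cos_add_two_pi, cosBump]

lemma cosBump_eq_one_sub_sin_sq (x : ℝ) : cosBump x = 1 - sin (π * distInt x) ^ 2 / 2 := by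
  have hcos : cos (2 * π * x) = cos (2 * (π * distInt x)) := by
    have habs : 2 * (π * |x - round x|) = |2 * π * x - round x * (2 * π)| := by
      rw [show 2 * π * x - round x * (2 * π) = (2 * π) * (x - round x) by ring, abs_mul,
        abs_of_pos two_pi_pos]
      ring
    rw [distInt, UnitAddCircle.norm_eq, habs, cos_abs, cos_sub_int_mul_two_pi]
  rw [cosBump, hcos, cos_two_mul, cos_sq']
  ring

lemma cosBump_le (x : ℝ) : cosBump x ≤ 1 - 2 * distInt x ^ 2 := by
  have hdist : 0 ≤ distInt x := norm_nonneg _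
  have hsin := mul_le_sin (x := π * distInt x) (by positivity)
    (by nlinarith [pi_pos, distInt_le_half x])
  rw [← mul_assoc, div_mul_cancel₀ _ pi_ne_zero] at hsin
  rw [cosBump_eq_one_sub_sin_sq]
  nlinarith

lemma le_cosBump (x : ℝ) : 1 - 5 * distInt x ^ 2 ≤ cosBump x := by
  have hsin : sin (π * distInt x) ^ 2 ≤ (π * distInt x) ^ 2 := sq_le_sq.2 abs_sin_le_abs
  have hpi : π ^ 2 ≤ 10 := by nlinarith [pi_lt_d2, pi_pos]
  rw [cosBump_eq_one_sub_sin_sq]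
  nlinarith [mul_le_mul_of_nonneg_right hpi (sq_nonneg (distInt x))]

lemma half_le_cosBump (x : ℝ) : 1 / 2 ≤ cosBump x := by
  rw [cosBump]
  linarith [neg_one_le_cos (2 * π * x)]

lemma cosBump_pos (x : ℝ) : 0 < cosBump x := one_half_pos.trans_le (half_le_cosBump x)

lemma cosBump_le_one (x : ℝ) : cosBump x ≤ 1 := by
  rw [cosBump]
  linarith [cos_le_one (2 * π * x)]

lemma derivDominated_cosBump (l : ℕ) : DerivDominated l 7 cosBump where
  rate_nonneg := by norm_num
  contDiff := by unfold cosBump; fun_prop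
  abs_iteratedDeriv_le i _ x := by
    rcases Nat.eq_zero_or_pos i with rfl | hi
    · simp [abs_of_pos (cosBump_pos x)]
    · have hderiv : iteratedDeriv i cosBump x =
          1 / 4 * ((2 * π) ^ i * iteratedDeriv i cos (2 * π * x)) := by
        rw [show cosBump = fun x => 3 / 4 + 1 / 4 * cos (2 * π * x) by
            funext y; rw [cosBump]; ring, iteratedDeriv_const_add hi,
          iteratedDeriv_const_mul_field, iteratedDeriv_comp_const_mul contDiff_cos]
      rw [hderiv, abs_mul, abs_mul, abs_of_pos (by norm_num : (0 : ℝ) < 1 / 4),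
        abs_of_pos (by positivity)]
      calc 1 / 4 * ((2 * π) ^ i * |iteratedDeriv i cos (2 * π * x)|)
          ≤ 1 / 4 * (7 ^ i * 1) := by
            gcongr
            · linarith [pi_lt_d2]
            · exact abs_iteratedDeriv_cos_le_one i _
        _ ≤ 7 ^ i * cosBump x := by
            nlinarith [half_le_cosBump x, pow_pos (by norm_num : (0 : ℝ) < 7) i]

lemma exp_neg_one_le_half : exp (-1) ≤ 1 / 2 := by
  rw [exp_neg, ← one_div]
  exact one_div_le_one_div_of_le two_pos (by linarith [add_one_le_exp (1 : ℝ)])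

lemma isBump_cosBump_pow (l K : ℕ) :
    IsBump l (K * 7) (exp (-(K : ℝ))) fun x => cosBump x ^ K where
  periodic := periodic_cosBump.comp (· ^ K)
  derivDominated := (derivDominated_cosBump l).pow K
  min_pos := exp_pos _
  min_le x := by
    rw [← mul_neg_one (K : ℝ), exp_nat_mul]
    exact pow_le_pow_left₀ (exp_pos _).le (exp_neg_one_le_half.trans (half_le_cosBump x)) K
  le_one x := pow_le_one₀ (cosBump_pos x).le (cosBump_le_one x)

lemma cosBump_pow_le {r x y : ℝ} (hr : 0 ≤ r) (hx : r ≤ distInt x) (hy : distInt y ≤ r / 4)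
    (K : ℕ) : cosBump x ^ K ≤ exp (-(r ^ 2 * K)) * cosBump y ^ K := by
  have hr2 : r ≤ 1 / 2 := hx.trans (distInt_le_half x)
  have hx2 : cosBump x ≤ 1 - 2 * r ^ 2 := by
    linarith [cosBump_le x, pow_le_pow_left₀ hr hx 2]
  have hy2 : 1 - 5 * (r / 4) ^ 2 ≤ cosBump y := by
    linarith [le_cosBump y, pow_le_pow_left₀ (norm_nonneg _) hy 2]
  have base : cosBump x ≤ exp (-r ^ 2) * cosBump y := by
    have : (1 - r ^ 2) * (1 - 5 * (r / 4) ^ 2) ≤ exp (-r ^ 2) * cosBump y :=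
      mul_le_mul (by linarith [add_one_le_exp (-r ^ 2)]) hy2 (by nlinarith) (exp_pos _).le
    nlinarith [sq_nonneg r, sq_nonneg (r ^ 2)]
  calc cosBump x ^ K ≤ (exp (-r ^ 2) * cosBump y) ^ K := pow_le_pow_left₀ (cosBump_pos x).le base K
    _ = exp (-(r ^ 2 * K)) * cosBump y ^ K := by
        rw [mul_pow, ← exp_nat_mul, mul_neg, mul_comm (K : ℝ)]

lemma half_le_cosBump_pow {x : ℝ} {K : ℕ} (hx : 10 * K * distInt x ^ 2 ≤ 1) :
    1 / 2 ≤ cosBump x ^ K := by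
  have bernoulli := one_add_mul_le_pow (a := cosBump x - 1) (by linarith [cosBump_pos x]) K
  rw [add_sub_cancel] at bernoulli
  nlinarith [le_cosBump x, (Nat.cast_nonneg K : (0 : ℝ) ≤ K)]

lemma le_distInt_of_mem_Icc {r x : ℝ} (hx : x ∈ Set.Icc r (1 - r)) : r ≤ distInt x := by
  rw [distInt, UnitAddCircle.norm_eq]
  rcases le_or_gt (round x) 0 with hz | hz
  · have : ((round x : ℤ) : ℝ) ≤ 0 := by exact_mod_cast hz
    exact le_trans (by linarith [hx.1]) (le_abs_self _)
  · have : (1 : ℝ) ≤ ((round x : ℤ) : ℝ) := by exact_mod_cast hz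
    exact le_trans (by linarith [hx.2]) (neg_le_abs _)

lemma integral_log_one_add_le {u : ℝ → ℝ} (hu : Continuous u) (h0 : ∀ x, 0 ≤ u x) {r U ε : ℝ}
    (hr : 0 < r) (hr2 : r ≤ 1 / 2) (hU : ∀ x, u x ≤ U) (hε : ∀ x, r ≤ distInt x → u x ≤ ε) :
    ∫ x in (0 : ℝ)..1, log (1 + u x) ≤ 2 * r * log (1 + U) + ε := by
  have hpos : ∀ x, 0 < 1 + u x := fun x => by linarith [h0 x]
  have hlog : ∀ a b, IntervalIntegrable (fun x => log (1 + u x)) volume a b :=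
    ((continuous_const.add hu).log fun x => (hpos x).ne').intervalIntegrable
  have hle : ∀ x, log (1 + u x) ≤ log (1 + U) := fun x =>
    log_le_log (hpos x) (by linarith [hU x])
  have hleft : ∫ x in (0 : ℝ)..r, log (1 + u x) ≤ ∫ _ in (0 : ℝ)..r, log (1 + U) :=
    intervalIntegral.integral_mono_on hr.le (hlog _ _) intervalIntegrable_const fun x _ => hle x
  have hright : ∫ x in (1 - r)..1, log (1 + u x) ≤ ∫ _ in (1 - r)..1, log (1 + U) :=
    intervalIntegral.integral_mono_on (by linarith) (hlog _ _) intervalIntegrable_const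
      fun x _ => hle x
  have hmiddle : ∫ x in r..(1 - r), log (1 + u x) ≤ ∫ _ in r..(1 - r), ε := by
    refine intervalIntegral.integral_mono_on (by linarith) (hlog _ _) intervalIntegrable_const
      fun x hx => ?_
    linarith [hε x (le_distInt_of_mem_Icc hx), log_le_sub_one_of_pos (hpos x)]
  have hε0 : 0 ≤ ε :=
    (h0 _).trans (hε _ (le_distInt_of_mem_Icc ⟨hr2, by linarith⟩ : r ≤ distInt (1 / 2)))
  rw [← intervalIntegral.integral_add_adjacent_intervals (hlog 0 r) (hlog r 1),
    ← intervalIntegral.integral_add_adjacent_intervals (hlog r (1 - r)) (hlog (1 - r) 1)]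
  simp only [intervalIntegral.integral_const, smul_eq_mul] at hleft hmiddle hright
  nlinarith

/-! ## Numerical requirements on the scale -/

/-- The exponent of the gap `n ^ (-gapExponent l)` left by the perturbation at scale `n`. It is
large enough for the diagonal of the next kernel, which is of the order of the inverse gap, to
exceed `(n ^ 60) ^ (52 * l + 2)`, `n ^ 60` being the next scale. -/
def gapExponent (l : ℕ) : ℕ := 3120 * (l + 1)

/-- The distance from criticality of the potential constructed at scale `n`. -/
noncomputable def gap (l : ℕ) (n : ℝ) : ℝ := 1 / n ^ gapExponent l

/-- The scale `n` is large with respect to the smoothness `l`, the Lyapunov exponent `κ₀` of the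
initial potential and the Diophantine constant `γ`. -/
structure IsLargeScale (l : ℕ) (κ₀ γ n : ℝ) : Prop where
  exponent_nonneg : 0 ≤ κ₀
  thousand_le : 1000 ≤ n
  order_le : 100 * ((l : ℝ) + 1) ≤ n
  exp_exponent_le : exp κ₀ ≤ n
  one_div_le : 1 / γ ≤ n
  pow_le_exp : n ^ gapExponent l ≤ exp n

lemma eventually_isLargeScale (l : ℕ) {κ₀ : ℝ} (hκ : 0 ≤ κ₀) (γ : ℝ) :
    ∀ᶠ n in atTop, IsLargeScale l κ₀ γ n := by
  have hpow : ∀ᶠ n : ℝ in atTop, n ^ gapExponent l ≤ exp n := by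
    filter_upwards [(isLittleO_pow_exp_atTop (n := gapExponent l)).bound one_pos] with n hn
    rw [norm_eq_abs, norm_eq_abs, abs_of_pos (exp_pos n), one_mul] at hn
    exact (le_abs_self _).trans hn
  filter_upwards [eventually_ge_atTop 1000, eventually_ge_atTop (100 * ((l : ℝ) + 1)),
    eventually_ge_atTop (exp κ₀), eventually_ge_atTop (1 / γ), hpow] with n h1 h2 h3 h4 h5
  exact ⟨hκ, h1, h2, h3, h4, h5⟩

namespace IsLargeScale

variable {l : ℕ} {κ₀ γ n : ℝ}

lemma pos (h : IsLargeScale l κ₀ γ n) : 0 < n := by linarith [h.thousand_le]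

lemma one_le (h : IsLargeScale l κ₀ γ n) : 1 ≤ n := by linarith [h.thousand_le]

lemma pow_le_pow (h : IsLargeScale l κ₀ γ n) {i j : ℕ} (hij : i ≤ j) : n ^ i ≤ n ^ j :=
  pow_le_pow_right₀ h.one_le hij

lemma thousand_mul_pow_le (h : IsLargeScale l κ₀ γ n) {i j : ℕ} (hij : i < j) :
    1000 * n ^ i ≤ n ^ j := by
  refine le_trans ?_ (h.pow_le_pow hij)
  rw [pow_succ']
  exact mul_le_mul_of_nonneg_right h.thousand_le (pow_pos h.pos i).le

lemma mul_pow_le (h : IsLargeScale l κ₀ γ n) {a : ℝ} (ha : a ≤ 1000) {i j : ℕ} (hij : i < j) :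
    a * n ^ i ≤ n ^ j :=
  (mul_le_mul_of_nonneg_right ha (pow_pos h.pos i).le).trans (h.thousand_mul_pow_le hij)

lemma thousand_mul_le (h : IsLargeScale l κ₀ γ n) {j : ℕ} (hj : 1 < j) : 1000 * n ≤ n ^ j := by
  simpa using h.thousand_mul_pow_le hj

lemma exponent_le (h : IsLargeScale l κ₀ γ n) : κ₀ ≤ n := by
  linarith [add_one_le_exp κ₀, h.exp_exponent_le]

lemma exp_neg_le_exp_neg (h : IsLargeScale l κ₀ γ n) : exp (-n) ≤ exp (-κ₀) :=
  exp_le_exp.2 (neg_le_neg h.exponent_le)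

lemma mul_le_exp (h : IsLargeScale l κ₀ γ n) {a : ℝ} (ha : a ≤ 1000) : a * n ≤ exp n :=
  (mul_le_mul_of_nonneg_right ha h.pos.le).trans <| (h.thousand_mul_le one_lt_two).trans <|
    (h.pow_le_pow (by unfold gapExponent; omega)).trans h.pow_le_exp

lemma one_div_le_one (h : IsLargeScale l κ₀ γ n) : 1 / n ≤ 1 := by
  rw [div_le_one h.pos]
  exact h.one_le

lemma gap_pos (h : IsLargeScale l κ₀ γ n) : 0 < gap l n := one_div_pos.2 (pow_pos h.pos _)

lemma gap_le_one_div_pow (h : IsLargeScale l κ₀ γ n) {j : ℕ} (hj : j ≤ gapExponent l) :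
    gap l n ≤ 1 / n ^ j :=
  one_div_le_one_div_of_le (pow_pos h.pos j) (h.pow_le_pow hj)

lemma gap_le_one (h : IsLargeScale l κ₀ γ n) : gap l n ≤ 1 := by
  simpa using h.gap_le_one_div_pow (Nat.zero_le _)

lemma exp_neg_le_gap (h : IsLargeScale l κ₀ γ n) : exp (-n) ≤ gap l n := by
  rw [exp_neg, ← one_div]
  exact one_div_le_one_div_of_le (pow_pos h.pos _) h.pow_le_exp

lemma half_decay_mul_bumpCutoff (h : IsLargeScale l κ₀ γ n) :
    1 / n / 2 * (4 * n ^ 25) = 2 * n ^ 24 := by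
  have := h.pos
  field_simp
  norm_num

lemma half_decay_mul_pathCutoff (h : IsLargeScale l κ₀ γ n) :
    1 / n / 2 * (4 * n ^ 3) = 2 * n ^ 2 := by
  have := h.pos
  field_simp
  norm_num

lemma order_le_mul_bumpCutoff (h : IsLargeScale l κ₀ γ n) : l ≤ 1 / n / 2 * (4 * n ^ 25) := by
  rw [h.half_decay_mul_bumpCutoff]
  linarith [h.thousand_mul_le (by norm_num : 1 < 24), h.order_le, h.pos]

lemma exp_neg_bumpCutoff_mul_le (h : IsLargeScale l κ₀ γ n) :
    exp (-(1 / n / 2 * (4 * n ^ 25))) * (exp n * exp (1 / n / 2) * (8 / (1 / n))) ≤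
      gap l n * (exp (-κ₀) * exp (-n ^ 24)) := by
  have hn := h.pos
  rw [h.half_decay_mul_bumpCutoff, div_div_eq_mul_div, div_one]
  calc exp (-(2 * n ^ 24)) * (exp n * exp (1 / n / 2) * (8 * n))
      ≤ exp (-(2 * n ^ 24)) * (exp n * exp 1 * exp n) := by
        gcongr
        · linarith [h.one_div_le_one]
        · exact h.mul_le_exp (by norm_num)
    _ = exp (-(2 * n ^ 24) + (n + 1 + n)) := by rw [exp_add, exp_add, exp_add]
    _ ≤ exp (-n + (-n + -n ^ 24)) := exp_le_exp.2 (by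
        linarith [h.thousand_mul_le (by norm_num : 1 < 24), h.one_le])
    _ = exp (-n) * (exp (-n) * exp (-n ^ 24)) := by rw [exp_add, exp_add]
    _ ≤ gap l n * (exp (-κ₀) * exp (-n ^ 24)) := by
        have := h.exp_neg_le_gap
        have := h.exp_neg_le_exp_neg
        have := h.gap_pos
        gcongr

lemma perturbationRate_le (h : IsLargeScale l κ₀ γ n) :
    (2 * ((l : ℝ) + 1) + 1) * (2 * (n + n ^ 24 * 7) * (4 * n ^ 25)) ≤ n ^ 52 := by
  have hn := h.pos
  have hl : 2 * ((l : ℝ) + 1) + 1 ≤ n := by linarith [h.order_le, h.thousand_le]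
  have hpow : n ≤ n ^ 24 := le_self_pow₀ h.one_le (by norm_num)
  calc (2 * ((l : ℝ) + 1) + 1) * (2 * (n + n ^ 24 * 7) * (4 * n ^ 25))
      ≤ n * (2 * (n ^ 24 + n ^ 24 * 7) * (4 * n ^ 25)) := by gcongr
    _ = 64 * n ^ 50 := by ring
    _ ≤ n ^ 52 := h.mul_pow_le (by norm_num) (by norm_num)

lemma crossing_mul_le_half (h : IsLargeScale l κ₀ γ n) :
    exp n * (exp κ₀ * exp (-(n ^ 2 / 4))) / gap l n * (16 / (1 / n)) ≤ 1 / 2 := by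
  have hn := h.pos
  calc exp n * (exp κ₀ * exp (-(n ^ 2 / 4))) / gap l n * (16 / (1 / n))
      = exp n * (exp κ₀ * exp (-(n ^ 2 / 4))) * n ^ gapExponent l * (16 * n) := by
        rw [gap]
        field_simp
    _ ≤ exp n * (exp n * exp (-(n ^ 2 / 4))) * exp n * exp n := by
        have := h.exponent_le
        have := h.pow_le_exp
        have := h.mul_le_exp (by norm_num : (16 : ℝ) ≤ 1000)
        gcongr
    _ = exp (n + (n + -(n ^ 2 / 4)) + n + n) := by simp only [exp_add]
    _ ≤ exp (-1) := exp_le_exp.2 (by linarith [h.thousand_mul_le one_lt_two, h.one_le])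
    _ ≤ 1 / 2 := exp_neg_one_le_half

lemma two_mul_pathBound_le (h : IsLargeScale l κ₀ γ n) :
    2 * pathBound (exp n) (1 / n) (gap l n) (exp κ₀) (exp κ₀ * exp (-(n ^ 2 / 4))) ≤
      exp (n ^ 2) := by
  have hn := h.pos
  have hcrossing : exp κ₀ / (exp κ₀ * exp (-(n ^ 2 / 4))) = exp (n ^ 2 / 4) := by
    rw [exp_neg]
    field_simp
  have hgap : exp n / gap l n = exp n * n ^ gapExponent l := by
    rw [gap]
    field_simp
  rw [pathBound, hcrossing, hgap]
  calc 2 * (exp (1 / n / 2) * (exp n * n ^ gapExponent l) * exp (n ^ 2 / 4))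
      ≤ exp 1 * (exp 1 * (exp n * exp n) * exp (n ^ 2 / 4)) := by
        have := h.pow_le_exp
        have := h.one_div_le_one
        gcongr
        · linarith [add_one_le_exp (1 : ℝ)]
        · linarith
    _ = exp (1 + (1 + (n + n) + n ^ 2 / 4)) := by simp only [exp_add]
    _ ≤ exp (n ^ 2) := exp_le_exp.2 (by linarith [h.thousand_mul_le one_lt_two, h.one_le])

lemma order_le_mul_pathCutoff (h : IsLargeScale l κ₀ γ n) : l ≤ 1 / n / 2 * (4 * n ^ 3) := by
  rw [h.half_decay_mul_pathCutoff]
  linarith [h.thousand_mul_le one_lt_two, h.order_le, h.pos]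

lemma add_log_pathBound_le (h : IsLargeScale l κ₀ γ n) :
    κ₀ + log (2 * pathBound (exp n) (1 / n) (gap l n) (exp κ₀)
      (exp κ₀ * exp (-(n ^ 2 / 4)))) ≤ 1 / n / 2 * (4 * n ^ 3) := by
  have hgap := h.gap_pos
  have hlog := log_le_log (by unfold pathBound; positivity) h.two_mul_pathBound_le
  rw [log_exp] at hlog
  rw [h.half_decay_mul_pathCutoff]
  linarith [h.thousand_mul_le one_lt_two, h.exponent_le, h.pos]

lemma kernelRate_le (h : IsLargeScale l κ₀ γ n) :
    2 * (2 * n + 2 * n ^ 52) * (4 * n ^ 3) ≤ n ^ 60 := by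
  have hn := h.pos
  calc 2 * (2 * n + 2 * n ^ 52) * (4 * n ^ 3)
      ≤ 2 * (2 * n ^ 52 + 2 * n ^ 52) * (4 * n ^ 3) := by
        gcongr
        exact le_self_pow₀ h.one_le (by norm_num)
    _ = 32 * n ^ 55 := by ring
    _ ≤ n ^ 60 := h.mul_pow_le (by norm_num) (by norm_num)

lemma next_decay_le (h : IsLargeScale l κ₀ γ n) : 1 / n ^ 60 ≤ 1 / n / 2 := by
  have := h.pos
  rw [div_div]
  exact one_div_le_one_div_of_le (by positivity)
    (by linarith [h.thousand_mul_le (by norm_num : 1 < 60)])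

lemma next_le_one_div (h : IsLargeScale l κ₀ γ n) :
    (n ^ 60) ^ (52 * l + 2) ≤ 1 / (2 * gap l n) * exp (-κ₀) := by
  have hn := h.pos
  have hright : 1 / (2 * gap l n) * exp (-κ₀) = n ^ gapExponent l / (2 * exp κ₀) := by
    rw [gap, exp_neg]
    field_simp
  rw [hright, le_div_iff₀ (by positivity)]
  calc (n ^ 60) ^ (52 * l + 2) * (2 * exp κ₀) ≤ (n ^ 60) ^ (52 * l + 2) * n ^ 2 := by
        gcongr
        linarith [h.exp_exponent_le, h.thousand_mul_le one_lt_two]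
    _ = n ^ (60 * (52 * l + 2) + 2) := by rw [← pow_mul, ← pow_add]
    _ ≤ n ^ gapExponent l := h.pow_le_pow (by unfold gapExponent; omega)

lemma one_div_next_lt (h : IsLargeScale l κ₀ γ n) : 1 / n ^ 60 < 1 / (2 * n ^ 4) := by
  have hn := h.pos
  exact one_div_lt_one_div_of_lt (by positivity)
    (by linarith [h.thousand_mul_pow_le (by norm_num : 4 < 60), pow_pos hn 4])

lemma offDiagonal_le (h : IsLargeScale l κ₀ γ n) :
    exp (n - n ^ 2 / 2) * (8 * n) ≤ gap l n * (exp (-κ₀) * (1 / 2)) := by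
  have hn := h.pos
  calc exp (n - n ^ 2 / 2) * (8 * n) ≤ exp (n - n ^ 2 / 2) * exp n := by
        have := h.mul_le_exp (by norm_num : (8 : ℝ) ≤ 1000)
        gcongr
    _ = exp (n - n ^ 2 / 2 + n) := (exp_add _ _).symm
    _ ≤ exp (-n + (-n + -1)) := exp_le_exp.2 (by
        linarith [h.thousand_mul_le one_lt_two, h.one_le])
    _ = exp (-n) * (exp (-n) * exp (-1)) := by rw [exp_add, exp_add]
    _ ≤ gap l n * (exp (-κ₀) * (1 / 2)) := by
        have := h.exp_neg_le_gap
        have := h.gap_pos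
        have := h.exponent_le
        have := exp_neg_one_le_half
        gcongr

lemma returnTime_le (h : IsLargeScale l κ₀ γ n) {k : ℝ}
    (hk : k ≤ 4 * (1 / γ + 1) / (1 / (8 * n ^ 4)) ^ 2) : k ≤ n ^ 11 := by
  have hn := h.pos
  calc k ≤ 4 * (1 / γ + 1) / (1 / (8 * n ^ 4)) ^ 2 := hk
    _ = 256 * (1 / γ + 1) * n ^ 8 := by
        generalize 1 / γ = g
        field_simp
        ring
    _ ≤ 256 * (n + n) * n ^ 8 := by
        have := h.one_div_le
        have := h.one_le
        gcongr
    _ = 512 * n ^ 9 := by ring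
    _ ≤ n ^ 11 := h.mul_pow_le (by norm_num) (by norm_num)

lemma exp_neg_le_mul_exp_neg_of_returnTime (h : IsLargeScale l κ₀ γ n) {k : ℝ}
    (hk : k ≤ 4 * (1 / γ + 1) / (1 / (8 * n ^ 4)) ^ 2) :
    exp (-((1 / (2 * n ^ 4)) ^ 2 * n ^ 24)) ≤ exp (-n ^ 3) * exp (-(κ₀ * (k + 1))) := by
  have hn := h.pos
  have hpow : (1 / (2 * n ^ 4)) ^ 2 * n ^ 24 = n ^ 16 / 4 := by
    field_simp
    norm_num
  have hcost : κ₀ * (k + 1) ≤ 2 * n ^ 12 := by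
    calc κ₀ * (k + 1) ≤ κ₀ * (n ^ 11 + n ^ 11) :=
          mul_le_mul_of_nonneg_left (add_le_add (h.returnTime_le hk) (one_le_pow₀ h.one_le))
            h.exponent_nonneg
      _ ≤ n * (n ^ 11 + n ^ 11) := mul_le_mul_of_nonneg_right h.exponent_le (by positivity)
      _ = 2 * n ^ 12 := by ring
  rw [← exp_add, hpow]
  refine exp_le_exp.2 ?_
  linarith [h.thousand_mul_pow_le (by norm_num : 12 < 16), pow_pos hn 12, pow_pos hn 3,
    h.thousand_mul_pow_le (by norm_num : 3 < 16)]

lemma log_one_add_le (h : IsLargeScale l κ₀ γ n) :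
    log (1 + exp κ₀ * (exp (n ^ 2) * (8 * n))) ≤ 2 * n ^ 2 := by
  have hn := h.pos
  rw [log_le_iff_le_exp (by positivity)]
  calc 1 + exp κ₀ * (exp (n ^ 2) * (8 * n)) ≤ 1 + exp n * (exp (n ^ 2) * exp n) := by
        have := h.exponent_le
        have := h.mul_le_exp (by norm_num : (8 : ℝ) ≤ 1000)
        gcongr
    _ = 1 + exp (n + (n ^ 2 + n)) := by rw [exp_add, exp_add]
    _ ≤ exp (n + (n ^ 2 + n)) * exp 1 := by
        nlinarith [one_le_exp (by positivity : 0 ≤ n + (n ^ 2 + n)), add_one_le_exp (1 : ℝ)]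
    _ = exp (n + (n ^ 2 + n) + 1) := (exp_add _ _).symm
    _ ≤ exp (2 * n ^ 2) :=
        exp_le_exp.2 (by linarith [h.thousand_mul_le one_lt_two, h.one_le])

lemma lyapunovLoss_le (h : IsLargeScale l κ₀ γ n) :
    2 * (1 / (2 * n ^ 4)) * log (1 + exp κ₀ * (exp (n ^ 2) * (8 * n))) +
      exp (-n ^ 3) * (exp (n ^ 2) * (8 * n)) ≤ 1 / n := by
  have hn := h.pos
  have near : 2 * (1 / (2 * n ^ 4)) * log (1 + exp κ₀ * (exp (n ^ 2) * (8 * n))) ≤ 2 / n ^ 2 :=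
    calc 2 * (1 / (2 * n ^ 4)) * log (1 + exp κ₀ * (exp (n ^ 2) * (8 * n)))
        ≤ 2 * (1 / (2 * n ^ 4)) * (2 * n ^ 2) := by
          have := h.log_one_add_le
          gcongr
      _ = 2 / n ^ 2 := by field_simp
  have away : exp (-n ^ 3) * (exp (n ^ 2) * (8 * n)) ≤ 1 / n ^ 2 :=
    calc exp (-n ^ 3) * (exp (n ^ 2) * (8 * n)) ≤ exp (-n ^ 3) * (exp (n ^ 2) * exp n) := by
          have := h.mul_le_exp (by norm_num : (8 : ℝ) ≤ 1000)
          gcongr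
      _ = exp (-n ^ 3 + (n ^ 2 + n)) := by rw [exp_add, exp_add]
      _ ≤ exp (-n) := exp_le_exp.2 (by
          linarith [h.thousand_mul_pow_le (by norm_num : 2 < 3), h.thousand_mul_le one_lt_two])
      _ ≤ gap l n := h.exp_neg_le_gap
      _ ≤ 1 / n ^ 2 := h.gap_le_one_div_pow (by unfold gapExponent; omega)
  have total : 2 / n ^ 2 + 1 / n ^ 2 ≤ 1 / n := by
    rw [← add_div, div_le_div_iff₀ (by positivity) hn]
    nlinarith [h.thousand_le]
  linarith

end IsLargeScale

/-! ## One step of the construction -/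

/-- The bump function used at scale `N`, concentrated within `N ^ (-4)` of the integers. -/
noncomputable def scaleBump (N : ℕ) (x : ℝ) : ℝ := cosBump x ^ N ^ 24

lemma isBump_scaleBump (l N : ℕ) :
    IsBump l ((N : ℝ) ^ 24 * 7) (exp (-(N : ℝ) ^ 24)) (scaleBump N) := by
  have := isBump_cosBump_pow l (N ^ 24)
  rwa [Nat.cast_pow] at this

lemma IsLargeScale.scaleBump_le_exp_neg {l N : ℕ} {κ₀ γ : ℝ} (hN : IsLargeScale l κ₀ γ N) {x : ℝ}
    (hx : 1 / (2 * (N : ℝ) ^ 4) ≤ distInt x) : scaleBump N x ≤ exp (-((N : ℝ) ^ 2 / 2)) := by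
  have hn := hN.pos
  have hbump := cosBump_pow_le (y := 0) (by positivity) hx
    (by rw [distInt, AddCircle.coe_zero, norm_zero]; positivity) (N ^ 24)
  push_cast at hbump
  have hexponent : (1 / (2 * (N : ℝ) ^ 4)) ^ 2 * N ^ 24 = N ^ 16 / 4 := by
    field_simp
    norm_num
  rw [hexponent] at hbump
  calc scaleBump N x ≤ exp (-((N : ℝ) ^ 16 / 4)) * scaleBump N 0 := hbump
    _ ≤ exp (-((N : ℝ) ^ 16 / 4)) :=
        mul_le_of_le_one_right (exp_pos _).le ((isBump_scaleBump l N).le_one 0)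
    _ ≤ exp (-((N : ℝ) ^ 2 / 2)) := exp_le_exp.2 (by
        linarith [hN.thousand_mul_pow_le (by norm_num : 2 < 16), pow_pos hn 2])

/-- The perturbation which makes a potential with Green kernel `G` critical at scale `N`. -/
noncomputable def scalePerturbation (ω : ℝ) (N : ℕ) (G : ℤ → ℝ → ℝ) (x : ℝ) : ℝ :=
  criticalPerturbation ω G (scaleBump N) x

/-- The perturbation `scalePerturbation`, slightly reduced so that a gap remains. -/
noncomputable def subcriticalPerturbation (ω : ℝ) (l N : ℕ) (G : ℤ → ℝ → ℝ) (x : ℝ) : ℝ :=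
  (1 - gap l N) * scalePerturbation ω N G x

/-- The potential with vanishing Lyapunov exponent obtained from `W` at scale `N`. -/
noncomputable def criticalPotential (ω : ℝ) (N : ℕ) (W : ℝ → ℝ) (G : ℤ → ℝ → ℝ) (x : ℝ) : ℝ :=
  W x - scalePerturbation ω N G x

/-- The potential with which the construction continues at scale `N ^ 60`. -/
noncomputable def nextPotential (ω : ℝ) (l N : ℕ) (W : ℝ → ℝ) (G : ℤ → ℝ → ℝ) (x : ℝ) : ℝ :=
  W x - subcriticalPerturbation ω l N G x

/-- The Green kernel of `nextPotential`. -/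
noncomputable def nextKernel (ω : ℝ) (l N : ℕ) (G : ℤ → ℝ → ℝ) : ℤ → ℝ → ℝ :=
  perturbedKernel ω G (subcriticalPerturbation ω l N G)

/-- A Green kernel over a badly approximable rotation all of whose constants are controlled by a
single large scale `N`. -/
structure IsScaleKernel (ω κ₀ γ : ℝ) (l N : ℕ) (W : ℝ → ℝ) (G : ℤ → ℝ → ℝ) : Prop
    extends toIsGreenKernel : IsGreenKernel ω κ₀ l W G (exp N) (1 / N) N where
  isLargeScale : IsLargeScale l κ₀ γ N
  badlyApproximable : BadlyApproximable ω γ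

lemma BadlyApproximable.pow_three_le_abs {ω γ n : ℝ} (h : BadlyApproximable ω γ) (hn : 0 < n)
    (hγ : 1 / γ ≤ n) {x : ℝ} {j : ℤ} (hj : j ≠ 0) (hx : distInt x < 1 / (2 * n ^ 4))
    (hxj : distInt (x + j * ω) < 1 / (2 * n ^ 4)) : n ^ 3 ≤ |(j : ℝ)| := by
  have hj0 : 0 < |(j : ℝ)| := by simpa using hj
  have htriangle := distInt_sub_le (x + j * ω) x
  rw [add_sub_cancel_left] at htriangle
  have hclose : γ / |(j : ℝ)| < 1 / n ^ 4 := by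
    have : 1 / (2 * n ^ 4) + 1 / (2 * n ^ 4) = 1 / n ^ 4 := by
      field_simp
      norm_num
    linarith [h.le_distInt j hj]
  rw [div_lt_div_iff₀ hj0 (by positivity)] at hclose
  rw [div_le_iff₀ h.pos] at hγ
  nlinarith [mul_le_mul_of_nonneg_left hγ (pow_pos hn 3).le]

namespace IsGreenKernel

variable {ω κ₀ : ℝ} {l : ℕ} {W : ℝ → ℝ} {G : ℤ → ℝ → ℝ} {B c Λ : ℝ}

lemma dirichletDet_pos (h : IsGreenKernel ω κ₀ l W G B c Λ) (n : ℕ) (x : ℝ) :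
    0 < dirichletDet ω W n x :=
  _root_.dirichletDet_pos (h.greenTransform_pos .one) (h.equation_greenTransform .one) n x

end IsGreenKernel

namespace IsScaleKernel

variable {ω κ₀ γ : ℝ} {l N : ℕ} {W : ℝ → ℝ} {G : ℤ → ℝ → ℝ}

lemma scalePerturbation_pos (h : IsScaleKernel ω κ₀ γ l N W G) (x : ℝ) :
    0 < scalePerturbation ω N G x :=
  h.criticalPerturbation_pos (isBump_scaleBump l N) x

lemma scalePerturbation_le_exp (h : IsScaleKernel ω κ₀ γ l N W G) (x : ℝ) :
    scalePerturbation ω N G x ≤ exp κ₀ :=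
  h.criticalPerturbation_le_exp (isBump_scaleBump l N) x

lemma periodic_scalePerturbation (h : IsScaleKernel ω κ₀ γ l N W G) :
    Function.Periodic (scalePerturbation ω N G) 1 :=
  h.periodic_criticalPerturbation (isBump_scaleBump l N)

lemma derivDominated_scalePerturbation (h : IsScaleKernel ω κ₀ γ l N W G) :
    DerivDominated l ((N : ℝ) ^ 52) (scalePerturbation ω N G) := by
  have hN := h.isLargeScale
  exact (h.derivDominated_criticalPerturbation (isBump_scaleBump l N) hN.gap_pos hN.gap_le_one
    (by linarith [hN.thousand_mul_le (by norm_num : 1 < 25), hN.one_le])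
    hN.order_le_mul_bumpCutoff hN.exp_neg_bumpCutoff_mul_le).mono hN.perturbationRate_le

-- A far point `x` reaches the centre of the bump in polynomially many steps. This costs the kernel
-- much less than the bump gains.
lemma scalePerturbation_le_exp_neg (h : IsScaleKernel ω κ₀ γ l N W G) {x : ℝ}
    (hx : 1 / (2 * (N : ℝ) ^ 4) ≤ distInt x) :
    scalePerturbation ω N G x ≤ exp (-(N : ℝ) ^ 3) := by
  have hN := h.isLargeScale
  have hn := hN.pos
  have hφ := isBump_scaleBump l N
  obtain ⟨k, hk, hkx⟩ := h.badlyApproximable.exists_distInt_add_mul_le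
    (ρ := 1 / (8 * (N : ℝ) ^ 4)) (by positivity)
    (by rw [div_le_one (by positivity)]; linarith [one_le_pow₀ hN.one_le (n := 4)]) x
  have hbump := cosBump_pow_le (by positivity) hx (hkx.trans_eq (by field_simp; norm_num)) (N ^ 24)
  push_cast at hbump
  refine le_of_mul_le_mul_right ?_ (mul_pos (h.pos k x) (hφ.pos (x + k * ω)))
  calc scalePerturbation ω N G x * (G k x * scaleBump N (x + k * ω)) ≤ scaleBump N x :=
        h.criticalPerturbation_mul_le hφ k x
    _ ≤ exp (-((1 / (2 * (N : ℝ) ^ 4)) ^ 2 * N ^ 24)) * scaleBump N (x + k * ω) := hbump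
    _ ≤ exp (-(N : ℝ) ^ 3) * G k x * scaleBump N (x + k * ω) := by
        refine mul_le_mul_of_nonneg_right ?_ (hφ.pos _).le
        exact (hN.exp_neg_le_mul_exp_neg_of_returnTime hk).trans
          (mul_le_mul_of_nonneg_left (h.exp_le k x) (exp_pos _).le)
    _ = exp (-(N : ℝ) ^ 3) * (G k x * scaleBump N (x + k * ω)) := mul_assoc _ _ _

lemma scalePerturbation_mul_le (h : IsScaleKernel ω κ₀ γ l N W G) {x y : ℝ}
    (hy : 1 / (2 * (N : ℝ) ^ 4) ≤ distInt y) :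
    scalePerturbation ω N G x * scalePerturbation ω N G y ≤
      (exp κ₀ * exp (-((N : ℝ) ^ 2 / 4))) ^ 2 := by
  have hN := h.isLargeScale
  calc scalePerturbation ω N G x * scalePerturbation ω N G y
      ≤ exp κ₀ * exp (-(N : ℝ) ^ 3) :=
        mul_le_mul (h.scalePerturbation_le_exp x) (h.scalePerturbation_le_exp_neg hy)
          (h.scalePerturbation_pos y).le (exp_pos _).le
    _ = exp (κ₀ + -(N : ℝ) ^ 3) := (exp_add _ _).symm
    _ ≤ exp (2 * (κ₀ + -((N : ℝ) ^ 2 / 4))) := exp_le_exp.2 (by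
        linarith [hN.exponent_nonneg, hN.thousand_mul_pow_le (by norm_num : 2 < 3),
          pow_pos hN.pos 2])
    _ = (exp κ₀ * exp (-((N : ℝ) ^ 2 / 4))) ^ 2 := by rw [← exp_add, ← exp_nat_mul]; norm_num

lemma scalePerturbation_mul_comp_le (h : IsScaleKernel ω κ₀ γ l N W G) (x : ℝ) {j : ℤ}
    (hj : j ≠ 0) :
    scalePerturbation ω N G x * scalePerturbation ω N G (x + j * ω) ≤
      (exp κ₀ * exp (-((N : ℝ) ^ 2 / 4)) * exp (1 / (N : ℝ) / 4 * |(j : ℝ)|)) ^ 2 := by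
  have hN := h.isLargeScale
  have hn := hN.pos
  have far_case {a : ℝ} (ha : a ≤ (exp κ₀ * exp (-((N : ℝ) ^ 2 / 4))) ^ 2) :
      a ≤ (exp κ₀ * exp (-((N : ℝ) ^ 2 / 4)) * exp (1 / (N : ℝ) / 4 * |(j : ℝ)|)) ^ 2 :=
    ha.trans (pow_le_pow_left₀ (by positivity)
      (le_mul_of_one_le_right (by positivity) (one_le_exp (by positivity))) 2)
  rcases le_or_gt (1 / (2 * (N : ℝ) ^ 4)) (distInt x) with hx | hx
  · rw [mul_comm]
    exact far_case (h.scalePerturbation_mul_le hx)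
  rcases le_or_gt (1 / (2 * (N : ℝ) ^ 4)) (distInt (x + j * ω)) with hxj | hxj
  · exact far_case (h.scalePerturbation_mul_le hxj)
  have hreturn := h.badlyApproximable.pow_three_le_abs hn hN.one_div_le hj hx hxj
  have hgain : (N : ℝ) ^ 2 / 4 ≤ 1 / N / 4 * |(j : ℝ)| :=
    calc (N : ℝ) ^ 2 / 4 = 1 / N / 4 * N ^ 3 := by field_simp
      _ ≤ 1 / N / 4 * |(j : ℝ)| := by gcongr
  calc scalePerturbation ω N G x * scalePerturbation ω N G (x + j * ω) ≤ exp κ₀ * exp κ₀ :=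
        mul_le_mul (h.scalePerturbation_le_exp _) (h.scalePerturbation_le_exp _)
          (h.scalePerturbation_pos _).le (exp_pos _).le
    _ = exp κ₀ ^ 2 := (sq _).symm
    _ ≤ (exp κ₀ * exp (-((N : ℝ) ^ 2 / 4)) * exp (1 / (N : ℝ) / 4 * |(j : ℝ)|)) ^ 2 := by
        refine pow_le_pow_left₀ (exp_pos _).le ?_ 2
        rw [mul_assoc, ← exp_add]
        exact le_mul_of_one_le_right (exp_pos _).le (one_le_exp (by linarith))

lemma subcriticalPerturbation_nonneg (h : IsScaleKernel ω κ₀ γ l N W G) (x : ℝ) :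
    0 ≤ subcriticalPerturbation ω l N G x :=
  mul_nonneg (sub_nonneg.2 h.isLargeScale.gap_le_one) (h.scalePerturbation_pos x).le

lemma subcriticalPerturbation_le (h : IsScaleKernel ω κ₀ γ l N W G) (x : ℝ) :
    subcriticalPerturbation ω l N G x ≤ scalePerturbation ω N G x :=
  mul_le_of_le_one_left (h.scalePerturbation_pos x).le (by linarith [h.isLargeScale.gap_pos])

lemma sqrt_subcriticalPerturbation_mul_sqrt_le (h : IsScaleKernel ω κ₀ γ l N W G) (x : ℝ) {j : ℤ}
    (hj : j ≠ 0) :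
    √(subcriticalPerturbation ω l N G x) * √(subcriticalPerturbation ω l N G (x + j * ω)) ≤
      exp κ₀ * exp (-((N : ℝ) ^ 2 / 4)) * exp (1 / (N : ℝ) / 4 * |(j : ℝ)|) := by
  rw [← sqrt_mul (h.subcriticalPerturbation_nonneg x)]
  refine sqrt_le_iff.2 ⟨by positivity, le_trans ?_ (h.scalePerturbation_mul_comp_le x hj)⟩
  exact mul_le_mul (h.subcriticalPerturbation_le _) (h.subcriticalPerturbation_le _)
    (h.subcriticalPerturbation_nonneg _) (h.scalePerturbation_pos _).le

lemma isSmallPerturbation (h : IsScaleKernel ω κ₀ γ l N W G) :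
    IsSmallPerturbation ω κ₀ l W G (exp N) (1 / N) N (subcriticalPerturbation ω l N G)
      ((N : ℝ) ^ 52) (gap l N) (exp κ₀) (exp κ₀ * exp (-((N : ℝ) ^ 2 / 4))) where
  toIsGreenKernel := h.toIsGreenKernel
  perturbation_periodic x := by
    rw [subcriticalPerturbation, h.periodic_scalePerturbation, subcriticalPerturbation]
  perturbation_derivDominated := h.derivDominated_scalePerturbation.const_mul
    (sub_nonneg.2 h.isLargeScale.gap_le_one)
  returnFactor_derivDominated :=
    have hN := h.isLargeScale
    (h.derivDominated_returnFactor_criticalPerturbation (isBump_scaleBump l N) hN.gap_pos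
      hN.gap_le_one (mul_pos four_pos (pow_pos hN.pos 25)) hN.order_le_mul_bumpCutoff
      hN.exp_neg_bumpCutoff_mul_le).mono hN.perturbationRate_le
  perturbation_le x := (h.subcriticalPerturbation_le x).trans (h.scalePerturbation_le_exp x)
  gap_pos := h.isLargeScale.gap_pos
  gap_le_bound := h.isLargeScale.gap_le_one.trans (one_le_exp h.isLargeScale.pos.le)
  gap_le := h.le_one_sub_criticalPerturbation_mul (isBump_scaleBump l N) h.isLargeScale.gap_le_one
  crossing_pos := by positivity
  crossing_le_bound := mul_le_of_le_one_right (exp_pos _).le (exp_le_one_iff.2 (by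
    linarith [pow_pos h.isLargeScale.pos 2]))
  sqrt_mul_sqrt_le x _ hj := h.sqrt_subcriticalPerturbation_mul_sqrt_le x hj
  crossing_small := h.isLargeScale.crossing_mul_le_half

lemma isGreenKernel_nextKernel (h : IsScaleKernel ω κ₀ γ l N W G) :
    IsGreenKernel ω κ₀ l (nextPotential ω l N W G) (nextKernel ω l N G) (exp ((N : ℝ) ^ 2))
      (1 / N / 2) ((N : ℝ) ^ 60) :=
  have hN := h.isLargeScale
  (h.isSmallPerturbation.isGreenKernel_perturbedKernel (mul_pos four_pos (pow_pos hN.pos 3))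
    hN.order_le_mul_pathCutoff hN.add_log_pathBound_le).mono hN.two_mul_pathBound_le
    (half_pos h.decay_pos) le_rfl hN.kernelRate_le

lemma isScaleKernel_nextKernel (h : IsScaleKernel ω κ₀ γ l N W G)
    (hN' : IsLargeScale l κ₀ γ (N ^ 60 : ℕ)) :
    IsScaleKernel ω κ₀ γ l (N ^ 60) (nextPotential ω l N W G) (nextKernel ω l N G) where
  toIsGreenKernel := by
    have hN := h.isLargeScale
    have hn := hN.pos
    rw [Nat.cast_pow]
    exact h.isGreenKernel_nextKernel.mono (exp_le_exp.2 (hN.pow_le_pow (by norm_num)))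
      (by positivity) hN.next_decay_le le_rfl
  isLargeScale := hN'
  badlyApproximable := h.badlyApproximable

lemma mul_scaleBump_le (h : IsScaleKernel ω κ₀ γ l N W G) {x : ℝ}
    (hx : distInt x < 1 / (2 * (N : ℝ) ^ 4)) {k : ℤ} (hk : k ≠ 0) :
    G k x * scaleBump N (x + k * ω) ≤
      exp (N - (N : ℝ) ^ 2 / 2) * exp (-(1 / (N : ℝ) / 2 * |(k : ℝ)|)) := by
  have hN := h.isLargeScale
  have hn := hN.pos
  have hφ := isBump_scaleBump l N
  rcases le_or_gt (1 / (2 * (N : ℝ) ^ 4)) (distInt (x + k * ω)) with hxk | hxk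
  · calc G k x * scaleBump N (x + k * ω)
        ≤ exp N * exp (-(1 / (N : ℝ) * |(k : ℝ)|)) * exp (-((N : ℝ) ^ 2 / 2)) :=
          mul_le_mul (h.le_mul_exp k x) (hN.scaleBump_le_exp_neg hxk) (hφ.pos _).le (by positivity)
      _ = exp (N + -(1 / (N : ℝ) * |(k : ℝ)|) + -((N : ℝ) ^ 2 / 2)) := by rw [exp_add, exp_add]
      _ ≤ exp (N - (N : ℝ) ^ 2 / 2) * exp (-(1 / (N : ℝ) / 2 * |(k : ℝ)|)) := by
          have : 0 ≤ 1 / (N : ℝ) / 2 * |(k : ℝ)| := by positivity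
          rw [← exp_add]
          exact exp_le_exp.2 (by linarith)
  · have hreturn := h.badlyApproximable.pow_three_le_abs hn hN.one_div_le hk hx hxk
    have hgain : (N : ℝ) ^ 2 / 2 ≤ 1 / N / 2 * |(k : ℝ)| :=
      calc (N : ℝ) ^ 2 / 2 = 1 / N / 2 * N ^ 3 := by field_simp
        _ ≤ 1 / N / 2 * |(k : ℝ)| := by gcongr
    calc G k x * scaleBump N (x + k * ω) ≤ exp N * exp (-(1 / (N : ℝ) * |(k : ℝ)|)) :=
          (mul_le_of_le_one_right (h.pos k x).le (hφ.le_one _)).trans (h.le_mul_exp k x)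
      _ = exp (N + -(1 / (N : ℝ) * |(k : ℝ)|)) := (exp_add _ _).symm
      _ ≤ exp (N - (N : ℝ) ^ 2 / 2) * exp (-(1 / (N : ℝ) / 2 * |(k : ℝ)|)) := by
          rw [← exp_add]
          exact exp_le_exp.2 (by linarith)

lemma greenTransform_scaleBump_sub_le (h : IsScaleKernel ω κ₀ γ l N W G) {x : ℝ}
    (hx : distInt x < 1 / (2 * (N : ℝ) ^ 4)) :
    greenTransform ω G (scaleBump N) x - G 0 x * scaleBump N x ≤
      exp (N - (N : ℝ) ^ 2 / 2) * (8 * N) := by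
  have hN := h.isLargeScale
  have hn := hN.pos
  have hφ := isBump_scaleBump l N
  have hdecay : 0 < 1 / (N : ℝ) / 2 := by positivity
  have hterm : ∀ k : ℤ, (if k = 0 then 0 else 1) * G k x * scaleBump N (x + k * ω) ≤
      exp (N - (N : ℝ) ^ 2 / 2) * exp (-(1 / (N : ℝ) / 2 * |(k : ℝ)|)) := fun k => by
    split_ifs with hk
    · rw [zero_mul, zero_mul]
      positivity
    · rw [one_mul]
      exact h.mul_scaleBump_le hx hk
  have hsum := (summable_exp_neg_mul_abs_int hdecay).mul_left (exp (N - (N : ℝ) ^ 2 / 2))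
  have hnonneg : ∀ k : ℤ, 0 ≤ (if k = 0 then 0 else 1) * G k x * scaleBump N (x + k * ω) :=
    fun k => mul_nonneg (mul_nonneg (by split_ifs <;> norm_num) (h.pos k x).le) (hφ.pos _).le
  calc greenTransform ω G (scaleBump N) x - G 0 x * scaleBump N x
      = ∑' k : ℤ, (if k = 0 then 0 else 1) * G k x * scaleBump N (x + k * ω) := by
        simpa [greenTransform] using (h.greenTransform_ite_mul hφ (δ := 0) x).symm
    _ ≤ ∑' k : ℤ, exp (N - (N : ℝ) ^ 2 / 2) * exp (-(1 / (N : ℝ) / 2 * |(k : ℝ)|)) :=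
        (Summable.of_nonneg_of_le hnonneg hterm hsum).tsum_le_tsum hterm hsum
    _ ≤ exp (N - (N : ℝ) ^ 2 / 2) * (4 / (1 / (N : ℝ) / 2)) := by
        rw [tsum_mul_left]
        exact mul_le_mul_of_nonneg_left
          (tsum_exp_neg_mul_abs_int_le hdecay (by linarith [hN.one_div_le_one])) (exp_pos _).le
    _ = exp (N - (N : ℝ) ^ 2 / 2) * (8 * N) := by
        field_simp
        norm_num

lemma greenTransform_scaleBump_le (h : IsScaleKernel ω κ₀ γ l N W G) {x : ℝ}
    (hx : distInt x ≤ 1 / (N : ℝ) ^ 60) :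
    greenTransform ω G (scaleBump N) x ≤ (1 + gap l N) * (G 0 x * scaleBump N x) := by
  have hN := h.isLargeScale
  have hn := hN.pos
  have hflat : 10 * ((N ^ 24 : ℕ) : ℝ) * distInt x ^ 2 ≤ 1 :=
    calc 10 * ((N ^ 24 : ℕ) : ℝ) * distInt x ^ 2 ≤ 10 * (N : ℝ) ^ 24 * (1 / (N : ℝ) ^ 60) ^ 2 := by
          rw [Nat.cast_pow]
          exact mul_le_mul_of_nonneg_left (pow_le_pow_left₀ (norm_nonneg _) hx 2) (by positivity)
      _ = 10 * N ^ 0 / (N : ℝ) ^ 96 := by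
          field_simp
      _ ≤ 1 := by
          rw [div_le_one (by positivity)]
          exact hN.mul_pow_le (by norm_num) (by norm_num)
  have hbump : 1 / 2 ≤ scaleBump N x := half_le_cosBump_pow hflat
  have hoff := h.greenTransform_scaleBump_sub_le (hx.trans_lt hN.one_div_next_lt)
  have hdiag : exp (-κ₀) * (1 / 2) ≤ G 0 x * scaleBump N x :=
    mul_le_mul (h.exp_neg_le x) hbump (by norm_num) (h.pos 0 x).le
  linarith [hN.offDiagonal_le, mul_le_mul_of_nonneg_left hdiag hN.gap_pos.le]

lemma pow_le_nextKernel (h : IsScaleKernel ω κ₀ γ l N W G) {x : ℝ}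
    (hx : distInt x ≤ 1 / (N : ℝ) ^ 60) :
    ((N : ℝ) ^ 60) ^ (52 * l + 2) ≤ nextKernel ω l N G 0 x := by
  have hN := h.isLargeScale
  have hreturn : 1 / (2 * gap l N) ≤ returnFactor G (subcriticalPerturbation ω l N G) x :=
    h.le_returnFactor_criticalPerturbation (isBump_scaleBump l N) hN.gap_pos hN.gap_le_one
      (h.greenTransform_scaleBump_le hx)
  have hpos : 0 < 1 / (2 * gap l N) := one_div_pos.2 (mul_pos two_pos hN.gap_pos)
  calc ((N : ℝ) ^ 60) ^ (52 * l + 2) ≤ 1 / (2 * gap l N) * exp (-κ₀) := hN.next_le_one_div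
    _ ≤ returnFactor G (subcriticalPerturbation ω l N G) x * G 0 x :=
        mul_le_mul hreturn (h.exp_neg_le x) (exp_pos _).le (hpos.trans_le hreturn).le
    _ ≤ nextKernel ω l N G 0 x := h.isSmallPerturbation.returnFactor_mul_le_perturbedKernel 0 x

lemma abs_iteratedDeriv_scalePerturbation_le (h : IsScaleKernel ω κ₀ γ l N W G) {i : ℕ}
    (hi : i ≤ l) (x : ℝ) :
    |iteratedDeriv i (scalePerturbation ω N G) x| ≤
      (N : ℝ) ^ (52 * l) * scalePerturbation ω N G x := by
  refine (h.derivDominated_scalePerturbation.abs_iteratedDeriv_le i hi x).trans ?_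
  refine mul_le_mul_of_nonneg_right ?_ (h.scalePerturbation_pos x).le
  rw [← pow_mul]
  exact h.isLargeScale.pow_le_pow (by omega)

lemma periodic_criticalPotential (h : IsScaleKernel ω κ₀ γ l N W G) :
    Function.Periodic (criticalPotential ω N W G) 1 :=
  h.periodic_potential.sub h.periodic_scalePerturbation

lemma contDiff_criticalPotential (h : IsScaleKernel ω κ₀ γ l N W G) :
    ContDiff ℝ l (criticalPotential ω N W G) :=
  h.contDiff_potential.sub h.derivDominated_scalePerturbation.contDiff

lemma tendsto_LEn_criticalPotential (h : IsScaleKernel ω κ₀ γ l N W G) :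
    Tendsto (LEn ω (SchrodingerCocycle (criticalPotential ω N W G))) atTop (nhds 0) :=
  h.tendsto_LEn_sub_criticalPerturbation (isBump_scaleBump l N)

lemma abs_iteratedDeriv_criticalPotential_sub_le (h : IsScaleKernel ω κ₀ γ l N W G) {i : ℕ}
    (hi : i ≤ l) (x : ℝ) :
    |iteratedDeriv i (fun y => criticalPotential ω N W G y - nextPotential ω l N W G y) x| ≤
      1 / N := by
  have hN := h.isLargeScale
  have hn := hN.pos
  have hdiff : (fun y => criticalPotential ω N W G y - nextPotential ω l N W G y) =
      fun y => -gap l N * scalePerturbation ω N G y := by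
    funext y
    rw [criticalPotential, nextPotential, subcriticalPerturbation]
    ring
  rw [hdiff, iteratedDeriv_const_mul_field, abs_mul, abs_neg, abs_of_pos hN.gap_pos]
  calc gap l N * |iteratedDeriv i (scalePerturbation ω N G) x|
      ≤ 1 / (N : ℝ) ^ (52 * l + 2) * (N ^ (52 * l) * N) := by
        have hle := (h.scalePerturbation_le_exp x).trans hN.exp_exponent_le
        refine mul_le_mul (hN.gap_le_one_div_pow (by unfold gapExponent; omega)) ?_
          (abs_nonneg _) (by positivity)
        exact (h.abs_iteratedDeriv_scalePerturbation_le hi x).trans (by gcongr)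
    _ = 1 / N := by
        rw [pow_add]
        field_simp

lemma scalePerturbation_le_one_div_pow (h : IsScaleKernel ω κ₀ γ l N W G)
    (hG : ∀ x, distInt x ≤ 1 / N → (N : ℝ) ^ (52 * l + 2) ≤ G 0 x) (x : ℝ) :
    scalePerturbation ω N G x ≤ 1 / (N : ℝ) ^ (52 * l + 2) := by
  have hN := h.isLargeScale
  have hn := hN.pos
  rcases le_or_gt (distInt x) (1 / N) with hx | hx
  · rw [le_div_iff₀ (by positivity)]
    exact (mul_le_mul_of_nonneg_left (hG x hx) (h.scalePerturbation_pos x).le).trans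
      (h.criticalPerturbation_mul_le_one (isBump_scaleBump l N) x)
  · have hfar : 1 / (2 * (N : ℝ) ^ 4) ≤ distInt x := by
      refine le_trans (one_div_le_one_div_of_le hn ?_) hx.le
      linarith [hN.thousand_mul_le (by norm_num : 1 < 4)]
    calc scalePerturbation ω N G x ≤ exp (-(N : ℝ) ^ 3) := h.scalePerturbation_le_exp_neg hfar
      _ ≤ exp (-(N : ℝ)) := exp_le_exp.2 (by
          linarith [hN.thousand_mul_le (by norm_num : 1 < 3)])
      _ ≤ gap l N := hN.exp_neg_le_gap
      _ ≤ 1 / (N : ℝ) ^ (52 * l + 2) := hN.gap_le_one_div_pow (by unfold gapExponent; omega)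

lemma abs_iteratedDeriv_nextPotential_sub_le (h : IsScaleKernel ω κ₀ γ l N W G)
    (hG : ∀ x, distInt x ≤ 1 / N → (N : ℝ) ^ (52 * l + 2) ≤ G 0 x) {i : ℕ} (hi : i ≤ l) (x : ℝ) :
    |iteratedDeriv i (fun y => nextPotential ω l N W G y - W y) x| ≤ 1 / N := by
  have hN := h.isLargeScale
  have hn := hN.pos
  have hdiff : (fun y => nextPotential ω l N W G y - W y) =
      fun y => -(1 - gap l N) * scalePerturbation ω N G y := by
    funext y
    rw [nextPotential, subcriticalPerturbation]
    ring
  rw [hdiff, iteratedDeriv_const_mul_field, abs_mul, abs_neg,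
    abs_of_nonneg (sub_nonneg.2 hN.gap_le_one)]
  calc (1 - gap l N) * |iteratedDeriv i (scalePerturbation ω N G) x|
      ≤ 1 * ((N : ℝ) ^ (52 * l) * (1 / (N : ℝ) ^ (52 * l + 2))) := by
        have hle := h.scalePerturbation_le_one_div_pow hG x
        refine mul_le_mul (by linarith [hN.gap_pos]) ?_ (abs_nonneg _) zero_le_one
        exact (h.abs_iteratedDeriv_scalePerturbation_le hi x).trans (by gcongr)
    _ = 1 / (N : ℝ) ^ 2 := by
        rw [pow_add]
        field_simp
    _ ≤ 1 / N := one_div_le_one_div_of_le hn (le_self_pow₀ hN.one_le two_ne_zero)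

lemma integral_log_one_add_subcriticalPerturbation_le (h : IsScaleKernel ω κ₀ γ l N W G) :
    ∫ x in (0 : ℝ)..1, log (1 + subcriticalPerturbation ω l N G x *
      greenTransform ω (nextKernel ω l N G) (fun _ => 1) x) ≤ 1 / N := by
  have hN := h.isLargeScale
  have hn := hN.pos
  have hK := h.isGreenKernel_nextKernel
  have hpos := hK.greenTransform_pos .one
  have hbound : ∀ x, greenTransform ω (nextKernel ω l N G) (fun _ => 1) x ≤
      exp ((N : ℝ) ^ 2) * (8 * N) := fun x =>
    (hK.greenTransform_le .one x).trans_eq (by field_simp; norm_num)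
  refine (integral_log_one_add_le ?_ (fun x => mul_nonneg (h.subcriticalPerturbation_nonneg x)
    (hpos x).le) (r := 1 / (2 * (N : ℝ) ^ 4)) (by positivity) ?_
    (U := exp κ₀ * (exp ((N : ℝ) ^ 2) * (8 * N))) (fun x => ?_) fun x hx => ?_).trans
    hN.lyapunovLoss_le
  · exact h.isSmallPerturbation.perturbation_derivDominated.contDiff.continuous.mul
      (hK.continuous_greenTransform .one)
  · exact one_div_le_one_div_of_le two_pos (by linarith [one_le_pow₀ hN.one_le (n := 4)])
  · exact mul_le_mul ((h.subcriticalPerturbation_le x).trans (h.scalePerturbation_le_exp x))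
      (hbound x) (hpos x).le (exp_pos _).le
  · exact mul_le_mul ((h.subcriticalPerturbation_le x).trans (h.scalePerturbation_le_exp_neg hx))
      (hbound x) (hpos x).le (exp_pos _).le

lemma integral_log_dirichletDet_sub_le_nextPotential (h : IsScaleKernel ω κ₀ γ l N W G) (m : ℕ) :
    (∫ x in (0 : ℝ)..1, log (dirichletDet ω W m x)) - m * (1 / N) ≤
      ∫ x in (0 : ℝ)..1, log (dirichletDet ω (nextPotential ω l N W G) m x) := by
  have hK := h.isGreenKernel_nextKernel
  have hloss := integral_log_dirichletDet_sub_le h.contDiff_potential.continuous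
    hK.contDiff_potential.continuous (hK.continuous_greenTransform .one) h.periodic_potential
    hK.periodic_potential (hK.periodic_greenTransform .one)
    (fun x => sub_le_self _ (h.subcriticalPerturbation_nonneg x))
    (hK.greenTransform_pos .one) (hK.equation_greenTransform .one) m
  simp only [nextPotential, sub_sub_cancel] at hloss
  refine le_trans (sub_le_sub_left ?_ _) hloss
  exact mul_le_mul_of_nonneg_left h.integral_log_one_add_subcriticalPerturbation_le m.cast_nonneg

end IsScaleKernel

/-! ## The constant potential -/

/-- The constant potential whose Schrödinger matrix has eigenvalues `exp κ₀` and `exp (-κ₀)`. -/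
noncomputable def constPotential (κ₀ : ℝ) (_x : ℝ) : ℝ := exp κ₀ + exp (-κ₀)

/-- The Green kernel of `constPotential κ₀`. -/
noncomputable def constKernel (κ₀ : ℝ) (k : ℤ) (_x : ℝ) : ℝ :=
  exp (-(κ₀ * |(k : ℝ)|)) / (exp κ₀ - exp (-κ₀))

lemma constKernel_equation {ω κ₀ : ℝ} (hκ : 0 < κ₀) (k : ℤ) (x : ℝ) :
    constPotential κ₀ x * constKernel κ₀ k x - constKernel κ₀ (k - 1) (x + ω) -
      constKernel κ₀ (k + 1) (x - ω) = if k = 0 then 1 else 0 := by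
  have hdenom : exp κ₀ - exp (-κ₀) ≠ 0 := (sub_pos.2 (exp_lt_exp.2 (by linarith))).ne'
  have hshift : ∀ s t : ℝ, exp (-(κ₀ * (s + t))) = exp (-(κ₀ * s)) * exp (-(κ₀ * t)) :=
    fun s t => by rw [← exp_add, mul_add, neg_add]
  simp only [constPotential, constKernel]
  push_cast
  rcases lt_trichotomy k 0 with hk | rfl | hk
  · have hk' : (k : ℝ) ≤ -1 := by exact_mod_cast Int.le_sub_one_of_lt hk
    rw [if_neg hk.ne, abs_of_nonpos (by linarith), abs_of_nonpos (by linarith),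
      abs_of_nonpos (by linarith), neg_sub', neg_add, sub_eq_add_neg (-(k : ℝ)),
      hshift, hshift]
    field_simp
    simp
  · simp only [Int.cast_zero, zero_sub, zero_add, abs_zero, abs_neg, abs_one, mul_zero, neg_zero,
      exp_zero, mul_one, if_true]
    field_simp
    ring
  · have hk' : 1 ≤ (k : ℝ) := by exact_mod_cast hk
    rw [if_neg hk.ne', abs_of_nonneg (by linarith), abs_of_nonneg (by linarith),
      abs_of_nonneg (by linarith), sub_eq_add_neg (k : ℝ), hshift, hshift]
    field_simp
    simp

lemma isGreenKernel_constKernel {ω κ₀ n : ℝ} {l : ℕ} (hκ : 1 ≤ κ₀) (hn : 1 ≤ n) :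
    IsGreenKernel ω κ₀ l (constPotential κ₀) (constKernel κ₀) (exp n) (1 / n) n := by
  have hexp_neg : exp (-κ₀) ≤ 1 := exp_le_one_iff.2 (by linarith)
  have hdenom : 1 ≤ exp κ₀ - exp (-κ₀) := by linarith [add_one_le_exp κ₀]
  have hdecay : 1 / n ≤ 1 := (div_le_one (by linarith)).2 hn
  exact {
    contDiff_potential := contDiff_const
    periodic_potential := fun _ => rfl
    periodic := fun _ _ => rfl
    equation := constKernel_equation (by linarith)
    decay_pos := by positivity
    decay_le_one := hdecay
    le_mul_exp := fun k x =>
      calc constKernel κ₀ k x ≤ exp (-(κ₀ * |(k : ℝ)|)) := div_le_self (exp_pos _).le hdenom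
        _ ≤ exp (-(1 / n * |(k : ℝ)|)) :=
            exp_le_exp.2 (neg_le_neg (mul_le_mul_of_nonneg_right (hdecay.trans hκ) (abs_nonneg _)))
        _ ≤ exp n * exp (-(1 / n * |(k : ℝ)|)) :=
            le_mul_of_one_le_left (exp_pos _).le (one_le_exp (by linarith))
    exp_le := fun k x => by
      have hle : exp (-κ₀) * (exp κ₀ - exp (-κ₀)) ≤ 1 := by
        rw [mul_sub, ← exp_add, neg_add_cancel, exp_zero]
        exact sub_le_self _ (by positivity)
      rw [constKernel, le_div_iff₀ (by linarith), mul_add, neg_add, exp_add, mul_one, mul_assoc]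
      exact mul_le_of_le_one_right (exp_pos _).le hle
    derivDominated := fun k =>
      .const (div_nonneg (exp_pos _).le (by linarith)) (by positivity) }

lemma mul_le_integral_log_dirichletDet_constPotential (ω κ₀ : ℝ) (m : ℕ) :
    m * κ₀ ≤ ∫ x in (0 : ℝ)..1, log (dirichletDet ω (constPotential κ₀) m x) := by
  have hle : ∀ x, exp (κ₀ * m) ≤ dirichletDet ω (constPotential κ₀) m x :=
    exp_mul_le_dirichletDet_const m
  have hpos : ∀ x, 0 < dirichletDet ω (constPotential κ₀) m x :=
    fun x => (exp_pos _).trans_le (hle x)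
  calc m * κ₀ = ∫ _ in (0 : ℝ)..1, κ₀ * m := by simp [mul_comm]
    _ ≤ ∫ x in (0 : ℝ)..1, log (dirichletDet ω (constPotential κ₀) m x) :=
        intervalIntegral.integral_mono_on zero_le_one intervalIntegrable_const
          (intervalIntegrable_log_dirichletDet continuous_const hpos)
          fun x _ => (le_log_iff_exp_le (hpos x)).2 (hle x)

/-! ## Limits of potentials -/

section Limit

variable {l : ℕ} {W : ℕ → ℝ → ℝ} {v : ℝ → ℝ} {a e : ℕ → ℝ}

lemma tendsto_add_tsum_sub (ha : Summable a) (hWa : ∀ n x, |W (n + 1) x - W n x| ≤ a n) (x : ℝ) :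
    Tendsto (fun n => W n x) atTop (nhds (W 0 x + ∑' k, (W (k + 1) x - W k x))) := by
  have hsummable : Summable fun k => W (k + 1) x - W k x := .of_norm_bounded ha (hWa · x)
  have hsum := hsummable.hasSum.tendsto_sum_nat
  simp only [Finset.sum_range_sub (W · x)] at hsum
  simpa using hsum.const_add (W 0 x)

lemma exists_contDiff_limit (hW : ∀ n, ContDiff ℝ l (W n)) (ha : Summable a)
    (hWa : ∀ n, ∀ i ≤ l, ∀ x, |iteratedDeriv i (fun y => W (n + 1) y - W n y) x| ≤ a n) :
    ∃ v : ℝ → ℝ, ContDiff ℝ l v ∧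
      ∀ n, ∀ i ≤ l, ∀ x, |iteratedDeriv i (fun y => v y - W n y) x| ≤ ∑' k, a (k + n) := by
  have hsmooth : ∀ k, ContDiff ℝ l (fun y => W (k + 1) y - W k y) :=
    fun k => (hW _).sub (hW _)
  have hWa₀ : ∀ n x, |W (n + 1) x - W n x| ≤ a n := fun n x => by
    simpa using hWa n 0 l.zero_le x
  have hshift : ∀ n, Summable fun k => a (k + n) := fun n => (summable_nat_add_iff n).2 ha
  refine ⟨fun x => W 0 x + ∑' k, (W (k + 1) x - W k x), (hW 0).add
    (contDiff_tsum_of_abs_iteratedDeriv_le hsmooth (fun _ _ => ha) fun i hi k => hWa k i hi),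
    fun n i hi x => ?_⟩
  have htail : (fun y => W 0 y + ∑' k, (W (k + 1) y - W k y) - W n y) =
      fun y => ∑' k, (W (k + n + 1) y - W (k + n) y) := by
    funext y
    have hlim := tendsto_add_tsum_sub (W := fun k => W (k + n)) (hshift n)
      (fun k => by simpa [add_right_comm] using hWa₀ (k + n)) y
    have hlim₀ := (tendsto_add_atTop_iff_nat n).2 (tendsto_add_tsum_sub ha hWa₀ y)
    have heq := tendsto_nhds_unique hlim₀ hlim
    simp only [zero_add, add_right_comm _ 1 n] at heq
    linarith
  rw [htail]
  exact abs_iteratedDeriv_tsum_le (fun k => hsmooth (k + n)) (fun _ _ => hshift n)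
    (fun j hj k => hWa (k + n) j hj) hi (hshift n) fun k => hWa (k + n) i hi x

lemma abs_iteratedDeriv_sub_le_tsum {V : ℕ → ℝ → ℝ} (hW : ∀ n, ContDiff ℝ l (W n))
    (hV : ∀ n, ContDiff ℝ l (V n)) (hv : ContDiff ℝ l v) (ha : Summable a)
    (hVW : ∀ n, ∀ i ≤ l, ∀ x, |iteratedDeriv i (fun y => V n y - W (n + 1) y) x| ≤ a n)
    (hvW : ∀ n, ∀ i ≤ l, ∀ x, |iteratedDeriv i (fun y => v y - W n y) x| ≤ ∑' k, a (k + n))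
    (n : ℕ) {i : ℕ} (hi : i ≤ l) (x : ℝ) :
    |iteratedDeriv i (fun y => V n y - v y) x| ≤ ∑' k, a (k + n) := by
  have hsplit : (fun y => V n y - v y) =
      fun y => (V n y - W (n + 1) y) - (v y - W (n + 1) y) := by
    funext y
    ring
  have hil : (i : WithTop ℕ∞) ≤ l := by exact_mod_cast hi
  rw [hsplit, iteratedDeriv_fun_sub (((hV n).sub (hW (n + 1))).of_le hil).contDiffAt
    ((hv.sub (hW (n + 1))).of_le hil).contDiffAt,
    ((summable_nat_add_iff n).2 ha).tsum_eq_zero_add]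
  simp only [zero_add, add_right_comm _ 1 n]
  exact (abs_sub _ _).trans (add_le_add (hVW n i hi x) (hvW (n + 1) i hi x))

lemma tendsto_of_abs_sub_le (he : Tendsto e atTop (nhds 0)) (hvW : ∀ n x, |v x - W n x| ≤ e n)
    (x : ℝ) : Tendsto (fun n => W n x) atTop (nhds (v x)) := by
  refine tendsto_iff_dist_tendsto_zero.2 (squeeze_zero (fun _ => dist_nonneg) (fun n => ?_) he)
  rw [dist_comm]
  exact hvW n x

lemma periodic_of_abs_sub_le (hW : ∀ n, Function.Periodic (W n) 1) (he : Tendsto e atTop (nhds 0))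
    (hvW : ∀ n x, |v x - W n x| ≤ e n) : Function.Periodic v 1 := fun x => by
  have hlim := tendsto_of_abs_sub_le he hvW
  refine tendsto_nhds_unique (hlim (x + 1)) ?_
  simpa only [hW _ x] using hlim x

lemma exists_tendsto_LEn_of_abs_sub_le {ω κ : ℝ} (hW : ∀ n, Continuous (W n)) (hv : Continuous v)
    (hper : Function.Periodic v 1) (he : Tendsto e atTop (nhds 0))
    (hvW : ∀ n x, |v x - W n x| ≤ e n)
    (hκ : ∀ n m, 1 ≤ m → κ ≤ LEn ω (SchrodingerCocycle (W n)) m) :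
    ∃ L, κ ≤ L ∧ Tendsto (LEn ω (SchrodingerCocycle v)) atTop (nhds L) := by
  obtain ⟨C, hC⟩ := (hper.isBounded_of_continuous one_ne_zero hv).exists_norm_le
  obtain ⟨D, hD⟩ := he.bddAbove_range
  have hB : ∀ n x, |W n x| ≤ C + D := fun n x => by
    have hvx : |v x| ≤ C := hC (v x) ⟨x, rfl⟩
    have htriangle := abs_sub_abs_le_abs_sub (W n x) (v x)
    rw [abs_sub_comm] at htriangle
    linarith [hvW n x, hD ⟨n, rfl⟩]
  obtain ⟨L, hL⟩ := exists_tendsto_LEn (ω := ω) (continuous_SchrodingerCocycle hv)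
    (periodic_SchrodingerCocycle hper) det_SchrodingerCocycle
  refine ⟨L, ge_of_tendsto hL ?_, hL⟩
  filter_upwards [eventually_ge_atTop 1] with m hm
  exact ge_of_tendsto' (tendsto_LEn_of_tendsto (fun n => continuous_SchrodingerCocycle (hW n))
    (fun _ => det_SchrodingerCocycle) det_SchrodingerCocycle
    (fun n x => opNorm_SchrodingerCocycle_le (hB n x))
    (fun x => tendsto_SchrodingerCocycle (tendsto_of_abs_sub_le he hvW x)) m) fun n => hκ n m hm

end Limit

/-! ## The sequence of potentials -/

/-- The scale of the `n`-th stage of the construction started at scale `N₀`. -/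
def stageScale (N₀ : ℕ) : ℕ → ℕ
  | 0 => N₀
  | n + 1 => stageScale N₀ n ^ 60

/-- The Green kernel of the `n`-th stage of the construction started at scale `N₀`. -/
noncomputable def stageKernel (ω κ₀ : ℝ) (l N₀ : ℕ) : ℕ → ℤ → ℝ → ℝ
  | 0 => constKernel κ₀
  | n + 1 => nextKernel ω l (stageScale N₀ n) (stageKernel ω κ₀ l N₀ n)

/-- The potential of the `n`-th stage of the construction started at scale `N₀`. -/
noncomputable def stagePotential (ω κ₀ : ℝ) (l N₀ : ℕ) : ℕ → ℝ → ℝ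
  | 0 => constPotential κ₀
  | n + 1 => nextPotential ω l (stageScale N₀ n) (stagePotential ω κ₀ l N₀ n)
      (stageKernel ω κ₀ l N₀ n)

/-- The potential with vanishing Lyapunov exponent branching off from the `n`-th stage. -/
noncomputable def criticalStagePotential (ω κ₀ : ℝ) (l N₀ n : ℕ) : ℝ → ℝ :=
  criticalPotential ω (stageScale N₀ n) (stagePotential ω κ₀ l N₀ n) (stageKernel ω κ₀ l N₀ n)

/-- The requirements for starting the construction at scale `N₀` from the constant potential with
Lyapunov exponent `κ₀`. -/
structure IsInitialScale (ω κ₀ γ : ℝ) (l N₀ : ℕ) : Prop where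
  one_le_exponent : 1 ≤ κ₀
  badlyApproximable : BadlyApproximable ω γ
  isLargeScale : ∀ N : ℕ, N₀ ≤ N → IsLargeScale l κ₀ γ N

lemma BadlyApproximable.exists_isInitialScale {ω κ₀ γ : ℝ} (hω : BadlyApproximable ω γ)
    (hκ : 1 ≤ κ₀) (l : ℕ) : ∃ N₀, IsInitialScale ω κ₀ γ l N₀ := by
  obtain ⟨N₀, hN₀⟩ := eventually_atTop.1
    (tendsto_natCast_atTop_atTop.eventually (eventually_isLargeScale l (zero_le_one.trans hκ) γ))
  exact ⟨N₀, hκ, hω, hN₀⟩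

lemma le_stageScale (N₀ n : ℕ) : N₀ ≤ stageScale N₀ n := by
  induction n with
  | zero => exact le_rfl
  | succ n ih => exact ih.trans (Nat.le_self_pow (by norm_num) _)

namespace IsInitialScale

variable {ω κ₀ γ : ℝ} {l N₀ : ℕ}

lemma isLargeScale_stageScale (h : IsInitialScale ω κ₀ γ l N₀) (n : ℕ) :
    IsLargeScale l κ₀ γ (stageScale N₀ n) :=
  h.isLargeScale _ (le_stageScale N₀ n)

lemma isScaleKernel_stageKernel (h : IsInitialScale ω κ₀ γ l N₀) (n : ℕ) :
    IsScaleKernel ω κ₀ γ l (stageScale N₀ n) (stagePotential ω κ₀ l N₀ n)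
      (stageKernel ω κ₀ l N₀ n) := by
  induction n with
  | zero =>
    have hN := h.isLargeScale_stageScale 0
    exact ⟨isGreenKernel_constKernel h.one_le_exponent hN.one_le, hN, h.badlyApproximable⟩
  | succ n ih => exact ih.isScaleKernel_nextKernel (h.isLargeScale_stageScale (n + 1))

lemma contDiff_stagePotential (h : IsInitialScale ω κ₀ γ l N₀) (n : ℕ) :
    ContDiff ℝ l (stagePotential ω κ₀ l N₀ n) :=
  (h.isScaleKernel_stageKernel n).contDiff_potential

lemma periodic_stagePotential (h : IsInitialScale ω κ₀ γ l N₀) (n : ℕ) :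
    Function.Periodic (stagePotential ω κ₀ l N₀ n) 1 :=
  (h.isScaleKernel_stageKernel n).periodic_potential

lemma contDiff_criticalStagePotential (h : IsInitialScale ω κ₀ γ l N₀) (n : ℕ) :
    ContDiff ℝ l (criticalStagePotential ω κ₀ l N₀ n) :=
  (h.isScaleKernel_stageKernel n).contDiff_criticalPotential

lemma periodic_criticalStagePotential (h : IsInitialScale ω κ₀ γ l N₀) (n : ℕ) :
    Function.Periodic (criticalStagePotential ω κ₀ l N₀ n) 1 :=
  (h.isScaleKernel_stageKernel n).periodic_criticalPotential

lemma tendsto_LEn_criticalStagePotential (h : IsInitialScale ω κ₀ γ l N₀) (n : ℕ) :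
    Tendsto (LEn ω (SchrodingerCocycle (criticalStagePotential ω κ₀ l N₀ n))) atTop (nhds 0) :=
  (h.isScaleKernel_stageKernel n).tendsto_LEn_criticalPotential

lemma pow_le_stageKernel_succ (h : IsInitialScale ω κ₀ γ l N₀) (n : ℕ) {x : ℝ}
    (hx : distInt x ≤ 1 / stageScale N₀ (n + 1)) :
    (stageScale N₀ (n + 1) : ℝ) ^ (52 * l + 2) ≤ stageKernel ω κ₀ l N₀ (n + 1) 0 x := by
  rw [stageScale, Nat.cast_pow] at hx ⊢
  exact (h.isScaleKernel_stageKernel n).pow_le_nextKernel hx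

lemma two_div_stageScale_succ_le (h : IsInitialScale ω κ₀ γ l N₀) (n : ℕ) :
    2 / (stageScale N₀ (n + 1) : ℝ) ≤ 1 / stageScale N₀ n := by
  have hN := h.isLargeScale_stageScale n
  have hn := hN.pos
  rw [stageScale, Nat.cast_pow, div_le_div_iff₀ (pow_pos hn _) hn, one_mul]
  linarith [hN.thousand_mul_le (by norm_num : 1 < 60)]

lemma one_div_stageScale_succ_le (h : IsInitialScale ω κ₀ γ l N₀) (n : ℕ) :
    1 / (stageScale N₀ (n + 1) : ℝ) ≤ (1 / 2) ^ n := by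
  have hhalf : ∀ k, 1 / (stageScale N₀ (k + 1) : ℝ) ≤ 1 / 2 * (1 / stageScale N₀ k) := fun k => by
    linarith [h.two_div_stageScale_succ_le k,
      (by ring : 2 / (stageScale N₀ (k + 1) : ℝ) = 2 * (1 / stageScale N₀ (k + 1)))]
  induction n with
  | zero => linarith [hhalf 0, (h.isLargeScale_stageScale 0).one_div_le_one]
  | succ n ih => linarith [hhalf (n + 1), pow_succ' (1 / 2 : ℝ) n]

lemma abs_iteratedDeriv_stagePotential_sub_le (h : IsInitialScale ω κ₀ γ l N₀) (n : ℕ) {i : ℕ}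
    (hi : i ≤ l) (x : ℝ) :
    |iteratedDeriv i (fun y => stagePotential ω κ₀ l N₀ (n + 2) y -
      stagePotential ω κ₀ l N₀ (n + 1) y) x| ≤ (1 / 2) ^ n :=
  ((h.isScaleKernel_stageKernel (n + 1)).abs_iteratedDeriv_nextPotential_sub_le
    (fun _ => h.pow_le_stageKernel_succ n) hi x).trans (h.one_div_stageScale_succ_le n)

lemma abs_iteratedDeriv_criticalStagePotential_sub_le (h : IsInitialScale ω κ₀ γ l N₀) (n : ℕ)
    {i : ℕ} (hi : i ≤ l) (x : ℝ) :
    |iteratedDeriv i (fun y => criticalStagePotential ω κ₀ l N₀ (n + 1) y -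
      stagePotential ω κ₀ l N₀ (n + 2) y) x| ≤ (1 / 2) ^ n :=
  ((h.isScaleKernel_stageKernel (n + 1)).abs_iteratedDeriv_criticalPotential_sub_le hi x).trans
    (h.one_div_stageScale_succ_le n)

lemma mul_le_integral_log_dirichletDet_stagePotential (h : IsInitialScale ω κ₀ γ l N₀) (n m : ℕ) :
    m * (κ₀ - 1 + 2 / stageScale N₀ n) ≤
      ∫ x in (0 : ℝ)..1, log (dirichletDet ω (stagePotential ω κ₀ l N₀ n) m x) := by
  have hm : (0 : ℝ) ≤ m := m.cast_nonneg
  induction n with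
  | zero =>
    refine le_trans ?_ (mul_le_integral_log_dirichletDet_constPotential ω κ₀ m)
    have hN := h.isLargeScale_stageScale 0
    have : 2 / (stageScale N₀ 0 : ℝ) ≤ 1 := by
      rw [div_le_one hN.pos]
      linarith [hN.thousand_le]
    exact mul_le_mul_of_nonneg_left (by linarith) hm
  | succ n ih =>
    refine le_trans ?_
      ((h.isScaleKernel_stageKernel n).integral_log_dirichletDet_sub_le_nextPotential m)
    have hloss := mul_le_mul_of_nonneg_left (h.two_div_stageScale_succ_le n) hm
    linarith [(by ring : (m : ℝ) * (2 / stageScale N₀ n) = 2 * (m * (1 / stageScale N₀ n)))]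

lemma le_LEn_stagePotential (h : IsInitialScale ω κ₀ γ l N₀) (n : ℕ) {m : ℕ} (hm : 1 ≤ m) :
    κ₀ - 1 ≤ LEn ω (SchrodingerCocycle (stagePotential ω κ₀ l N₀ n)) m := by
  refine le_LEn_of_mul_le_integral_log_dirichletDet (h.contDiff_stagePotential n).continuous hm
    ((h.isScaleKernel_stageKernel n).dirichletDet_pos m)
    (le_trans ?_ (h.mul_le_integral_log_dirichletDet_stagePotential n m))
  have : 0 ≤ 2 / (stageScale N₀ n : ℝ) := by positivity
  exact mul_le_mul_of_nonneg_left (by linarith) m.cast_nonneg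

end IsInitialScale

theorem schrodinger_positive_LE_not_Cl_open_approx
    (ω : ℝ) (hω : Irrational ω)
    (M : ℝ) (hM : 1 ≤ M) (hbt : ∀ k : ℕ, cfDen ω (k + 1) ≤ M * cfDen ω k)
    (l : ℕ) (κ : ℝ) (hκ : 0 < κ) :
    ∃ (v : ℝ → ℝ) (vseq : ℕ → ℝ → ℝ),
      Function.Periodic v 1 ∧ ContDiff ℝ l v ∧
      (∀ n, Function.Periodic (vseq n) 1 ∧ ContDiff ℝ l (vseq n)) ∧
      -- (i) L(S_v) ≥ κ
      (∃ L : ℝ, κ ≤ L ∧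
        Tendsto (fun m => LEn ω (SchrodingerCocycle v) m) atTop (nhds L)) ∧
      -- (ii) L(S_{v_n}) = 0 for every n
      (∀ n, Tendsto (fun m => LEn ω (SchrodingerCocycle (vseq n)) m) atTop (nhds 0)) ∧
      -- (iii) ‖v_n − v‖_{C^l} → 0
      (∀ ε : ℝ, 0 < ε → ∃ N : ℕ, ∀ n ≥ N, ∀ j ≤ l, ∀ x : ℝ,
        |iteratedDeriv j (fun y => vseq n y - v y) x| ≤ ε) := by
  obtain ⟨γ, hγ⟩ := exists_badlyApproximable hω hM hbt
  obtain ⟨N₀, h⟩ := hγ.exists_isInitialScale (κ₀ := κ + 1) (by linarith) l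
  have hWsmooth := fun n => h.contDiff_stagePotential (n + 1)
  have hVsmooth := fun n => h.contDiff_criticalStagePotential (n + 1)
  have htail := tendsto_sum_nat_add fun n => (1 / 2 : ℝ) ^ n
  obtain ⟨v, hv, hvW⟩ := exists_contDiff_limit hWsmooth summable_geometric_two
    fun n _ => h.abs_iteratedDeriv_stagePotential_sub_le n
  have hvW₀ : ∀ n x, |v x - stagePotential ω (κ + 1) l N₀ (n + 1) x| ≤ ∑' k, (1 / 2) ^ (k + n) :=
    fun n x => by simpa only [iteratedDeriv_zero] using hvW n 0 l.zero_le x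
  have hper := periodic_of_abs_sub_le (fun n => h.periodic_stagePotential (n + 1)) htail hvW₀
  refine ⟨v, fun n => criticalStagePotential ω (κ + 1) l N₀ (n + 1), hper, hv,
    fun n => ⟨h.periodic_criticalStagePotential (n + 1), hVsmooth n⟩,
    exists_tendsto_LEn_of_abs_sub_le (fun n => (hWsmooth n).continuous) hv.continuous hper htail
      hvW₀ fun n m hm => ?_,
    fun n => h.tendsto_LEn_criticalStagePotential (n + 1), fun ε hε => ?_⟩
  · simpa only [add_sub_cancel_right] using h.le_LEn_stagePotential (n + 1) hm
  · obtain ⟨N, hN⟩ := eventually_atTop.1 (htail.eventually (ge_mem_nhds hε))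
    exact ⟨N, fun n hn j hj x => (abs_iteratedDeriv_sub_le_tsum hWsmooth hVsmooth hv
      summable_geometric_two (fun k _ => h.abs_iteratedDeriv_criticalStagePotential_sub_le k) hvW n
      hj x).trans (hN n hn)⟩
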